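/- arXiv:2212.11793 — 12 statements merged into one kernel-verified Lean document; each statement's English description precedes it below -/
import Mathlib

section
/- Let φ : ℝ → ℝ be smooth and compactly supported. Define a(t) := φ(t)/√(t+4), v(t) := 4·cosh(t/2)·∫₀^∞ a(4·sinh²(t/2) + y²) dy, and u(ξ) := ∫_ℝ v(t)·e^{−iξt} dt. Then φ(0) = (1/(4π))·∫_ℝ ξ·u(ξ)·coth(πξ) dξ, where the integrand is extended continuously at ξ = 0 (with ξ·coth(πξ) taken to be 1/π at ξ = 0) and the integral converges absolutely. -/
open MeasureTheory Real

noncomputable def AA (f : ℝ → ℝ) (x : ℝ) : ℝ := ∫ y in Set.Ioi (0 : ℝ), f (x + y ^ 2)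

lemma exists_R {f : ℝ → ℝ} (hc : HasCompactSupport f) :
    ∃ R : ℝ, 0 < R ∧ ∀ x, R < |x| → f x = 0 := by
  obtain ⟨R, hR⟩ := hc.isCompact.isBounded.subset_closedBall 0
  refine ⟨max R 1, by positivity, fun x hx => ?_⟩
  by_contra h
  have := hR (subset_tsupport f h)
  rw [Metric.mem_closedBall, dist_zero_right, Real.norm_eq_abs] at this
  exact absurd (lt_of_le_of_lt (le_max_left R 1) hx) (not_lt.2 this)

lemma hcs_of {f : ℝ → ℝ} (R : ℝ) (h : ∀ x, R < |x| → f x = 0) : HasCompactSupport f := by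
  apply HasCompactSupport.intro (isCompact_closedBall (0 : ℝ) R)
  intro x hx
  apply h
  simpa [Metric.mem_closedBall] using hx

lemma AA_zero {f : ℝ → ℝ} {R : ℝ} (h : ∀ x, R < |x| → f x = 0) {x : ℝ} (hx : R < x) :
    AA f x = 0 := by
  unfold AA
  apply integral_eq_zero_of_ae
  filter_upwards with y
  apply h
  exact lt_of_lt_of_le (by nlinarith [sq_nonneg y]) (le_abs_self _)

lemma AA_int {f : ℝ → ℝ} (hf : Continuous f) (hc : HasCompactSupport f) (x : ℝ) :
    Integrable (fun y : ℝ => f (x + y ^ 2)) := by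
  obtain ⟨R, hR0, hR⟩ := exists_R hc
  apply Continuous.integrable_of_hasCompactSupport (by fun_prop)
  apply hcs_of (R + |x| + 2)
  intro y hy
  apply hR
  have := neg_abs_le x
  have h2 : |y| ^ 2 = y ^ 2 := sq_abs y
  have := abs_nonneg x
  exact lt_of_lt_of_le (by nlinarith) (le_abs_self _)

lemma AA_deriv {f : ℝ → ℝ} (hf : ContDiff ℝ 1 f) (hc : HasCompactSupport f) (x : ℝ) :
    HasDerivAt (AA f) (AA (deriv f) x) x := by
  have hd : Continuous (deriv f) := hf.continuous_deriv le_rfl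
  have hdc : HasCompactSupport (deriv f) := hc.deriv
  obtain ⟨R, hR0, hR⟩ := exists_R hdc
  obtain ⟨C, hC⟩ := hd.bounded_above_of_compact_support hdc
  refine (hasDerivAt_integral_of_dominated_loc_of_deriv_le (s := Metric.ball x 1)
    (μ := volume.restrict (Set.Ioi (0:ℝ))) (F := fun x y => f (x + y ^ 2))
    (F' := fun x y => deriv f (x + y ^ 2))
    (bound := (Set.Icc (0:ℝ) (R + |x| + 2)).indicator (fun _ => C))
    (Metric.ball_mem_nhds x one_pos) ?_ ?_ ?_ ?_ ?_ ?_).2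
  · filter_upwards with z
    have := hf.continuous
    exact Continuous.aestronglyMeasurable (by fun_prop)
  · exact (AA_int hf.continuous hc x).integrableOn
  · exact Continuous.aestronglyMeasurable (by fun_prop)
  · rw [ae_restrict_iff' measurableSet_Ioi]
    filter_upwards with y hy z hz
    by_cases hy2 : y ∈ Set.Icc (0:ℝ) (R + |x| + 2)
    · rw [Set.indicator_of_mem hy2]; exact hC _
    · rw [Set.indicator_of_notMem hy2, hR, norm_zero]
      have hy0 : 0 < y := hy
      have h3 : R + |x| + 2 < y := by
        by_contra h; exact hy2 ⟨hy0.le, not_lt.1 h⟩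
      rw [Metric.mem_ball, Real.dist_eq] at hz
      have := (abs_lt.1 hz).1
      have := neg_abs_le x
      have := abs_nonneg x
      exact lt_of_lt_of_le (by nlinarith) (le_abs_self _)
  · apply Integrable.integrableOn
    rw [integrable_indicator_iff measurableSet_Icc]
    exact integrableOn_const (by simp)
  · filter_upwards with y z hz
    have := ((hf.differentiable one_ne_zero) (z + y^2)).hasDerivAt
    exact HasDerivAt.comp_add_const z (y^2) this

lemma AA_contDiff_nat (n : ℕ) : ∀ {f : ℝ → ℝ}, ContDiff ℝ (⊤ : ℕ∞) f → HasCompactSupport f →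
    ContDiff ℝ n (AA f) := by
  induction n with
  | zero =>
    intro f hf hc
    have : Differentiable ℝ (AA f) := fun x =>
      (AA_deriv (hf.of_le (by exact_mod_cast le_top)) hc x).differentiableAt
    exact contDiff_zero.2 this.continuous
  | succ n ih =>
    intro f hf hc
    have h1 := fun x => AA_deriv (hf.of_le (by exact_mod_cast le_top)) hc x
    have h2 : deriv (AA f) = AA (deriv f) := funext fun x => (h1 x).deriv
    push_cast
    rw [contDiff_succ_iff_deriv]
    refine ⟨fun x => (h1 x).differentiableAt, by simp, ?_⟩
    rw [h2]
    exact ih (contDiff_infty_iff_deriv.1 hf).2 hc.deriv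

lemma AA_contDiff {f : ℝ → ℝ} (hf : ContDiff ℝ (⊤ : ℕ∞) f) (hc : HasCompactSupport f) :
    ContDiff ℝ (⊤ : ℕ∞) (AA f) :=
  contDiff_infty.2 fun n => AA_contDiff_nat n hf hc

lemma AA_polar {f : ℝ → ℝ} (hf : ContDiff ℝ (⊤ : ℕ∞) f) (hc : HasCompactSupport f) :
    ∫ s in Set.Ioi (0 : ℝ), AA (deriv f) (s ^ 2) = - (π / 4) * f 0 := by
  have hd : Continuous (deriv f) := hf.continuous_deriv (by exact_mod_cast le_top)
  have hdc : HasCompactSupport (deriv f) := hc.deriv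
  obtain ⟨R, hR0, hR⟩ := exists_R hc
  obtain ⟨R', hR0', hR'⟩ := exists_R hdc
  have e1 : ∫ p : ℝ × ℝ, deriv f (p.1 ^ 2 + p.2 ^ 2) =
      4 * ∫ s in Set.Ioi (0 : ℝ), AA (deriv f) (s ^ 2) := by
    have hint : Integrable (fun p : ℝ × ℝ => deriv f (p.1 ^ 2 + p.2 ^ 2)) := by
      apply Continuous.integrable_of_hasCompactSupport (by fun_prop)
      apply HasCompactSupport.intro (isCompact_closedBall (0 : ℝ × ℝ) (R' + 1))
      intro p hp
      apply hR'
      rw [Metric.mem_closedBall, dist_zero_right, Prod.norm_def, max_le_iff, not_and_or] at hp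
      refine lt_of_lt_of_le ?_ (le_abs_self _)
      simp only [Real.norm_eq_abs] at hp
      have h1 := sq_abs p.1
      have h2 := sq_abs p.2
      rcases hp with hp | hp <;> nlinarith [abs_nonneg p.1, abs_nonneg p.2]
    rw [Measure.volume_eq_prod] at hint ⊢
    rw [integral_prod _ hint]
    have h2 : ∀ x : ℝ, ∫ y, deriv f (x ^ 2 + y ^ 2) = 2 * AA (deriv f) (x ^ 2) := by
      intro x
      have := integral_comp_abs (f := fun y => deriv f (x ^ 2 + y ^ 2))
      simpa only [sq_abs, AA] using this
    simp only [h2]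
    rw [integral_const_mul]
    have := integral_comp_abs (f := fun y => AA (deriv f) (y ^ 2))
    simp only [sq_abs] at this
    rw [this]; ring
  have e2 : ∫ p : ℝ × ℝ, deriv f (p.1 ^ 2 + p.2 ^ 2) =
      2 * π * ∫ r in Set.Ioi (0 : ℝ), r * deriv f (r ^ 2) := by
    rw [← integral_comp_polarCoord_symm, polarCoord_target, Measure.volume_eq_prod]
    have : ∀ p : ℝ × ℝ, p.1 • deriv f ((polarCoord.symm p).1 ^ 2 + (polarCoord.symm p).2 ^ 2)
        = (p.1 * deriv f (p.1 ^ 2)) * (1 : ℝ) := by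
      intro p
      simp only [polarCoord_symm_apply, smul_eq_mul, mul_one]
      congr 2
      nlinarith [Real.sin_sq_add_cos_sq p.2]
    simp only [this]
    rw [setIntegral_prod_mul (fun r => r * deriv f (r ^ 2)) (fun _ => (1:ℝ))]
    simp only [integral_const, smul_eq_mul, mul_one, measureReal_restrict_apply_univ, Real.volume_real_Ioo]
    rw [max_eq_left (by linarith [Real.pi_pos])]
    ring
  have e3 : ∫ r in Set.Ioi (0 : ℝ), r * deriv f (r ^ 2) = - f 0 / 2 := by
    have h := integral_Ioi_of_hasDerivAt_of_tendsto' (f := fun r => f (r ^ 2) / 2)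
      (f' := fun r => r * deriv f (r ^ 2)) (a := 0) (m := 0) ?_ ?_ ?_
    · rw [h]; simp; ring
    · intro r _
      have h1 := ((hf.differentiable (by simp)) (r^2)).hasDerivAt
      have h2 := (HasDerivAt.comp (h := fun r : ℝ => r ^ 2) r h1 (hasDerivAt_pow 2 r)).div_const 2
      convert! h2 using 1
      simp; ring
    · apply Integrable.integrableOn
      apply Continuous.integrable_of_hasCompactSupport (by fun_prop)
      apply hcs_of (R' + 1)
      intro r hr
      rw [hR', mul_zero]
      have h1 := sq_abs r
      exact lt_of_lt_of_le (by nlinarith) (le_abs_self _)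
    · apply tendsto_const_nhds.congr'
      filter_upwards [Filter.eventually_gt_atTop (R + 1)] with r hr
      rw [hR, zero_div]
      exact lt_of_lt_of_le (by nlinarith) (le_abs_self _)
  rw [e2, e3] at e1
  linarith

noncomputable def vv (f : ℝ → ℝ) (t : ℝ) : ℝ :=
  4 * Real.cosh (t / 2) * AA f (4 * Real.sinh (t / 2) ^ 2)

noncomputable def WW (f : ℝ → ℝ) (t : ℝ) : ℝ :=
  2 * Real.cosh (t / 2) * AA f (4 * Real.sinh (t / 2) ^ 2) +
    16 * Real.cosh (t / 2) ^ 3 * AA (deriv f) (4 * Real.sinh (t / 2) ^ 2)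

lemma sinh_big {R t : ℝ} (hR : 0 < R) (ht : R + 1 < |t|) : R < 4 * Real.sinh (t / 2) ^ 2 := by
  have h1 : |t| / 2 ≤ Real.sinh (|t| / 2) := Real.self_le_sinh_iff.2 (by positivity)
  have h2 : Real.sinh (t / 2) ^ 2 = Real.sinh (|t| / 2) ^ 2 := by
    rcases abs_cases t with ⟨h, _⟩ | ⟨h, _⟩
    · rw [h]
    · rw [h, neg_div, Real.sinh_neg, neg_sq]
  rw [h2]
  nlinarith

lemma AAcomp_hcs {f : ℝ → ℝ} (hc : HasCompactSupport f) (g : ℝ → ℝ) :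
    HasCompactSupport (fun t => g t * AA f (4 * Real.sinh (t / 2) ^ 2)) := by
  obtain ⟨R, hR0, hR⟩ := exists_R hc
  apply hcs_of (R + 1)
  intro t ht
  rw [AA_zero hR (sinh_big hR0 ht), mul_zero]

lemma AA_comp_deriv {f : ℝ → ℝ} (hf : ContDiff ℝ (⊤ : ℕ∞) f) (hc : HasCompactSupport f) (t : ℝ) :
    HasDerivAt (fun t => AA f (4 * Real.sinh (t / 2) ^ 2))
      (AA (deriv f) (4 * Real.sinh (t / 2) ^ 2) * (4 * Real.sinh (t / 2) * Real.cosh (t / 2))) t := by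
  have h0 : HasDerivAt (fun t : ℝ => 4 * Real.sinh (t / 2) ^ 2)
      (4 * Real.sinh (t / 2) * Real.cosh (t / 2)) t := by
    have := ((((hasDerivAt_id t).div_const 2).sinh.pow 2).const_mul 4)
    convert! this using 1
    simp; ring
  exact HasDerivAt.comp (h := fun t : ℝ => 4 * Real.sinh (t / 2) ^ 2) t
    (AA_deriv (hf.of_le (by exact_mod_cast le_top)) hc _) h0

lemma vv_contDiff {f : ℝ → ℝ} (hf : ContDiff ℝ (⊤ : ℕ∞) f) (hc : HasCompactSupport f) :
    ContDiff ℝ (⊤ : ℕ∞) (vv f) := by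
  have := AA_contDiff hf hc
  unfold vv
  apply ContDiff.mul
  · exact contDiff_const.mul (Real.contDiff_cosh.comp (contDiff_id.div_const 2))
  · exact this.comp (contDiff_const.mul ((Real.contDiff_sinh.comp (contDiff_id.div_const 2)).pow 2))

lemma vv_hcs {f : ℝ → ℝ} (hc : HasCompactSupport f) : HasCompactSupport (vv f) :=
  AAcomp_hcs hc _

lemma vv_even (f : ℝ → ℝ) (t : ℝ) : vv f (-t) = vv f t := by
  simp [vv, neg_div]

lemma AA_cont {f : ℝ → ℝ} (hf : ContDiff ℝ (⊤ : ℕ∞) f) (hc : HasCompactSupport f) :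
    Continuous (AA f) := (AA_contDiff hf hc).continuous

lemma WW_cont {f : ℝ → ℝ} (hf : ContDiff ℝ (⊤ : ℕ∞) f) (hc : HasCompactSupport f) :
    Continuous (WW f) := by
  have h1 := AA_cont hf hc
  have h2 := AA_cont (contDiff_infty_iff_deriv.1 hf).2 hc.deriv
  unfold WW
  fun_prop

lemma WW_hcs {f : ℝ → ℝ} (hc : HasCompactSupport f) : HasCompactSupport (WW f) :=
  (AAcomp_hcs hc _).add (AAcomp_hcs hc.deriv _)

lemma vv_deriv {f : ℝ → ℝ} (hf : ContDiff ℝ (⊤ : ℕ∞) f) (hc : HasCompactSupport f) (t : ℝ) :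
    deriv (vv f) t = 2 * Real.sinh (t / 2) * AA f (4 * Real.sinh (t / 2) ^ 2) +
    16 * Real.sinh (t / 2) * Real.cosh (t / 2) ^ 2 * AA (deriv f) (4 * Real.sinh (t / 2) ^ 2) := by
  have h := ((((hasDerivAt_id t).div_const 2).cosh.const_mul 4)).mul (AA_comp_deriv hf hc t)
  have h2 : HasDerivAt (vv f) _ t := h
  rw [h2.deriv]
  simp; ring

lemma WW_eq {f : ℝ → ℝ} (hf : ContDiff ℝ (⊤ : ℕ∞) f) (hc : HasCompactSupport f) {t : ℝ}
    (ht : 0 < t) : WW f t = deriv (vv f) t * (1 + 2 / (Real.exp t - 1)) := by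
  have key : Real.cosh (t / 2) = Real.sinh (t / 2) * (1 + 2 / (Real.exp t - 1)) := by
    have h1 : Real.exp t = Real.exp (t / 2) * Real.exp (t / 2) := by
      rw [← Real.exp_add]; ring_nf
    have h2 : 1 < Real.exp (t / 2) := Real.one_lt_exp_iff.2 (by linarith)
    rw [Real.cosh_eq, Real.sinh_eq, Real.exp_neg, h1]
    generalize Real.exp (t / 2) = E at *
    have h3 : E ^ 2 - 1 ≠ 0 := by nlinarith
    rw [← pow_two]
    field_simp
    ring
  rw [vv_deriv hf hc, WW]
  linear_combination (2 * AA f (4 * Real.sinh (t / 2) ^ 2) +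
    16 * Real.cosh (t / 2) ^ 2 * AA (deriv f) (4 * Real.sinh (t / 2) ^ 2)) * key

lemma WW_integral {f : ℝ → ℝ} (hf : ContDiff ℝ (⊤ : ℕ∞) f) (hc : HasCompactSupport f) :
    ∫ t in Set.Ioi (0:ℝ), WW f t = - (4 * π * f 0) := by
  have hf' := (contDiff_infty_iff_deriv.1 hf).2
  have c1 := AA_cont hf hc
  have c2 := AA_cont hf' hc.deriv
  obtain ⟨R, hR0, hR⟩ := exists_R hc
  obtain ⟨R', hR0', hR'⟩ := exists_R hc.deriv
  let D : ℝ → ℝ := fun t => 2 * Real.cosh (t / 2) * AA f (4 * Real.sinh (t / 2) ^ 2) +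
    16 * Real.sinh (t / 2) ^ 2 * Real.cosh (t / 2) * AA (deriv f) (4 * Real.sinh (t / 2) ^ 2)
  let g : ℝ → ℝ := fun s => AA (deriv f) (s ^ 2)
  have hDint : Integrable D := by
    apply Continuous.integrable_of_hasCompactSupport (by fun_prop)
    exact (AAcomp_hcs hc _).add (AAcomp_hcs hc.deriv _)
  have hD : ∫ t in Set.Ioi (0:ℝ), D t = 0 := by
    have h := integral_Ioi_of_hasDerivAt_of_tendsto'
      (f := fun t => 4 * Real.sinh (t / 2) * AA f (4 * Real.sinh (t / 2) ^ 2))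
      (f' := D) (a := 0) (m := 0) ?_ hDint.integrableOn ?_
    · rw [h]; simp
    · intro t _
      have h := ((((hasDerivAt_id t).div_const 2).sinh.const_mul 4)).mul (AA_comp_deriv hf hc t)
      convert! h using 1
      simp [D]; ring
    · apply tendsto_const_nhds.congr'
      filter_upwards [Filter.eventually_gt_atTop (R + 1)] with r hr
      rw [AA_zero hR (sinh_big hR0 (lt_of_lt_of_le hr (le_abs_self _))), mul_zero]
  have hgint : Integrable g := by
    apply Continuous.integrable_of_hasCompactSupport (by fun_prop)
    apply hcs_of (R' + 1)
    intro r hr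
    apply AA_zero hR'
    have h1 := sq_abs r
    nlinarith
  have hEint : Integrable (fun t => (g ∘ fun t => 2 * Real.sinh (t / 2)) t * Real.cosh (t / 2)) := by
    apply Continuous.integrable_of_hasCompactSupport (by fun_prop)
    have := AAcomp_hcs hc.deriv (fun t => Real.cosh (t / 2))
    convert! this using 2 with t
    simp only [Function.comp, g]
    ring_nf
  have hE : ∫ t in Set.Ioi (0:ℝ), (g ∘ fun t => 2 * Real.sinh (t / 2)) t * Real.cosh (t / 2)
      = -(π / 4) * f 0 := by
    rw [integral_comp_mul_deriv_Ioi]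
    · simp only [zero_div, Real.sinh_zero, mul_zero]
      exact AA_polar hf hc
    · fun_prop
    · apply Filter.tendsto_atTop_mono' _ _ Filter.tendsto_id
      filter_upwards [Filter.eventually_ge_atTop 0] with t ht
      have : t / 2 ≤ Real.sinh (t / 2) := Real.self_le_sinh_iff.2 (by positivity)
      simp only [id]; linarith
    · intro t _
      have := ((hasDerivAt_id t).div_const 2).sinh.const_mul 2
      apply HasDerivAt.hasDerivWithinAt
      convert! this using 1
      simp; ring
    · exact Continuous.continuousOn (by fun_prop)
    · exact hgint.integrableOn
    · exact hEint.integrableOn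
  have : WW f = fun t => D t +
      16 * ((g ∘ fun t => 2 * Real.sinh (t / 2)) t * Real.cosh (t / 2)) := by
    ext t
    have h1 := Real.cosh_sq (t / 2)
    have h2 : (2 * Real.sinh (t / 2)) ^ 2 = 4 * Real.sinh (t / 2) ^ 2 := by ring
    simp only [WW, D, g, Function.comp, h2]
    linear_combination 16 * Real.cosh (t/2) * AA (deriv f) (4 * Real.sinh (t / 2) ^ 2) * h1
  rw [this, integral_add hDint.integrableOn (hEint.const_mul 16).integrableOn, hD,
    integral_const_mul, hE]
  ring

open scoped FourierTransform in
lemma U1 {v : ℝ → ℝ} (hv : ContDiff ℝ (⊤ : ℕ∞) v) (hc : HasCompactSupport v) {u : ℝ → ℂ}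
    (hu : ∀ ξ : ℝ, u ξ = ∫ t : ℝ, (v t : ℂ) * Complex.exp (-(Complex.I * ξ * t))) :
    Continuous u ∧ (∀ k : ℕ, Integrable (fun ξ => |ξ| ^ k * ‖u ξ‖)) ∧
    ∀ t : ℝ, ∫ ξ, u ξ * Complex.exp (Complex.I * ξ * t) = 2 * π * v t := by
  let V : ℝ → ℂ := fun t => (v t : ℂ)
  have hV : ContDiff ℝ (⊤ : ℕ∞) V := Complex.ofRealCLM.contDiff.comp hv
  have hVc : HasCompactSupport V := hc.comp_left (g := fun x : ℝ => (x : ℂ)) (by simp)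
  let S : SchwartzMap ℝ ℂ := hVc.toSchwartzMap hV
  have hS : ∀ ξ, u ξ = (𝓕 S) (ξ / (2 * π)) := by
    intro ξ
    rw [SchwartzMap.fourier_coe, Real.fourier_eq', hu]
    congr 1; ext t
    rw [smul_eq_mul, mul_comm]
    congr 2
    simp
    have : (π : ℂ) ≠ 0 := by exact_mod_cast Real.pi_ne_zero
    field_simp
  have hpi : (2 * π) ≠ 0 := by positivity
  refine ⟨?_, ?_, ?_⟩
  · rw [funext hS]
    exact (𝓕 S).continuous.comp (by fun_prop)
  · intro k
    have h := (((𝓕 S).integrable_pow_mul volume k).comp_div hpi).const_mul ((2 * π) ^ k)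
    refine h.congr ?_
    filter_upwards with ξ
    rw [hS, Real.norm_eq_abs, abs_div, abs_of_pos (by positivity : 0 < 2 * π), div_pow]
    field_simp
  · intro t
    have h1 : 𝓕⁻ (𝓕 V) = V := by
      apply Continuous.fourierInv_fourier_eq hV.continuous
        (hV.continuous.integrable_of_hasCompactSupport hVc)
      exact (𝓕 S).integrable
    have h2 := congrFun h1 t
    rw [Real.fourierInv_eq'] at h2
    have h3 := Measure.integral_comp_div
      (fun w => Complex.exp (((2 * π * inner ℝ w t : ℝ) : ℂ) * Complex.I) • 𝓕 V w) (2 * π)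
    rw [h2, abs_of_pos (by positivity)] at h3
    simp only [V] at h3
    rw [Complex.real_smul] at h3
    push_cast at h3
    rw [← h3]
    congr 1; ext ξ
    rw [hS ξ, smul_eq_mul, mul_comm]
    congr 2
    simp
    have : (π : ℂ) ≠ 0 := by exact_mod_cast Real.pi_ne_zero
    field_simp

lemma U3 {v : ℝ → ℝ} (he : ∀ t, v (-t) = v t) {u : ℝ → ℂ}
    (hu : ∀ ξ : ℝ, u ξ = ∫ t : ℝ, (v t : ℂ) * Complex.exp (-(Complex.I * ξ * t))) (ξ : ℝ) :
    u (-ξ) = u ξ := by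
  rw [hu, hu, ← integral_neg_eq_self]
  congr 1; ext t
  rw [he]; congr 2; push_cast; ring

lemma U4 {K : ℝ → ℝ} (hK : ∀ ξ : ℝ, K ξ = if ξ = 0 then 1 / Real.pi
      else ξ * Real.cosh (Real.pi * ξ) / Real.sinh (Real.pi * ξ)) (ξ : ℝ) :
    HasSum (fun n : ℕ => ξ ^ 2 / (ξ ^ 2 + ((n : ℝ) + 1) ^ 2)) ((π * K ξ - 1) / 2) := by
  rw [hK]
  split_ifs with h
  · subst h
    have : (π * (1 / π) - 1) / 2 = 0 := by field_simp; simp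
    rw [this]; simp
  have hsum : Summable (fun n : ℕ => ξ ^ 2 / (ξ ^ 2 + ((n : ℝ) + 1) ^ 2)) := by
    have h1 : Summable (fun n : ℕ => ξ ^ 2 * (1 / ((n : ℝ) + 1) ^ 2)) := by
      apply Summable.mul_left
      have := (summable_nat_add_iff 1).2 (Real.summable_one_div_nat_pow.2 one_lt_two)
      exact_mod_cast this
    refine Summable.of_nonneg_of_le (fun n => by positivity) (fun n => ?_) h1
    rw [mul_one_div]
    gcongr
    nlinarith [sq_nonneg ξ]
  have hx : Complex.I * ξ ∈ Complex.integerComplement := by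
    rintro ⟨n, hn⟩
    have := congrArg Complex.im hn
    simp at this
    exact h this.symm
  have hs := cot_series_rep' hx
  have hcot : (π * (Complex.I * ξ)).cot =
      - Complex.I * (Real.cosh (π * ξ) / Real.sinh (π * ξ) : ℝ) := by
    rw [show (π * (Complex.I * ξ)) = ((π * ξ : ℝ) : ℂ) * Complex.I by push_cast; ring,
      Complex.cot, Complex.cos_mul_I, Complex.sin_mul_I]
    push_cast
    have h5 : Complex.sinh (π * ξ) ≠ 0 := by
      rw [← Complex.ofReal_mul, ← Complex.ofReal_sinh, Complex.ofReal_ne_zero, Ne, Real.sinh_eq_zero]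
      exact mul_ne_zero Real.pi_ne_zero h
    field_simp
    rw [Complex.I_sq]; ring
  have hxi : (ξ : ℂ) ≠ 0 := by exact_mod_cast h
  have hterm : ∀ n : ℕ, 1 / (Complex.I * ξ - (n + 1)) + 1 / (Complex.I * ξ + (n + 1)) =
      (-2 * Complex.I / ξ) * ((ξ ^ 2 / (ξ ^ 2 + ((n : ℝ) + 1) ^ 2) : ℝ) : ℂ) := by
    intro n
    have h1 : Complex.I * ξ - (n + 1) ≠ 0 := by
      intro h2
      have := congrArg Complex.im h2
      simp at this; exact h this
    have h1' : Complex.I * ξ + (n + 1) ≠ 0 := by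
      intro h2
      have := congrArg Complex.im h2
      simp at this; exact h this
    have h2 : ((ξ : ℂ) ^ 2 + ((n : ℂ) + 1) ^ 2) ≠ 0 := by
      have : (0 : ℝ) < ξ ^ 2 + ((n : ℝ) + 1) ^ 2 := by positivity
      exact_mod_cast this.ne'
    push_cast
    have h3 : (Complex.I * ξ - (n + 1)) * (Complex.I * ξ + (n + 1)) =
        - ((ξ : ℂ) ^ 2 + ((n : ℂ) + 1) ^ 2) := by
      linear_combination (ξ : ℂ) ^ 2 * Complex.I_sq
    rw [div_add_div _ _ h1 h1', h3]
    field_simp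
    ring
  simp only [hterm] at hs
  rw [tsum_mul_left, ← Complex.ofReal_tsum, hcot] at hs
  have hval : ((∑' n : ℕ, ξ ^ 2 / (ξ ^ 2 + ((n : ℝ) + 1) ^ 2) : ℝ) : ℂ) =
      (((π * (ξ * Real.cosh (Real.pi * ξ) / Real.sinh (Real.pi * ξ)) - 1) / 2 : ℝ) : ℂ) := by
    generalize hq : Real.cosh (π * ξ) / Real.sinh (π * ξ) = q at hs
    rw [mul_div_assoc, hq]
    push_cast at hs ⊢
    generalize (∑' n : ℕ, (ξ:ℂ) ^ 2 / (ξ ^ 2 + ((n : ℂ) + 1) ^ 2)) = T at *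
    have hI := Complex.I_sq
    field_simp at hs ⊢
    rw [hI] at hs
    linear_combination -hs
  rw [← Complex.ofReal_injective hval]
  exact hsum.hasSum

lemma U5 {v : ℝ → ℝ} (hv : ContDiff ℝ (⊤ : ℕ∞) v) (hc : HasCompactSupport v)
    (he : ∀ t, v (-t) = v t) {u : ℝ → ℂ}
    (hu : ∀ ξ : ℝ, u ξ = ∫ t : ℝ, (v t : ℂ) * Complex.exp (-(Complex.I * ξ * t)))
    {c : ℝ} (hc0 : 0 < c) :
    ∫ ξ, u ξ * ((ξ ^ 2 / (ξ ^ 2 + c ^ 2) : ℝ) : ℂ) =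
      - (2 * π) * ((∫ t in Set.Ioi (0:ℝ), deriv v t * Real.exp (-(c * t)) : ℝ) : ℂ) := by
  obtain ⟨ucont, uint, uinv⟩ := U1 hv hc hu
  have ui : Integrable u := by
    have := uint 0
    simp only [pow_zero, one_mul] at this
    exact (integrable_norm_iff ucont.aestronglyMeasurable).1 this
  have dv : Continuous (deriv v) := hv.continuous_deriv (by exact_mod_cast le_top)
  have vc := hv.continuous
  obtain ⟨R, hR0, hR⟩ := exists_R hc
  -- integration by parts
  have ibp : ∫ t in Set.Ioi (0:ℝ), deriv v t * Real.exp (-(c * t)) =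
      - v 0 + c * ∫ t in Set.Ioi (0:ℝ), v t * Real.exp (-(c * t)) := by
    have i1 : Integrable (fun t => deriv v t * Real.exp (-(c * t))) :=
      Continuous.integrable_of_hasCompactSupport (by fun_prop) hc.deriv.mul_right
    have i2 : Integrable (fun t => v t * Real.exp (-(c * t))) :=
      Continuous.integrable_of_hasCompactSupport (by fun_prop) hc.mul_right
    have h := integral_Ioi_of_hasDerivAt_of_tendsto' (f := fun t => v t * Real.exp (-(c * t)))
      (f' := fun t => deriv v t * Real.exp (-(c * t)) - c * (v t * Real.exp (-(c * t))))
      (a := 0) (m := 0) ?_ ?_ ?_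
    · rw [integral_sub i1.integrableOn (i2.const_mul c).integrableOn, integral_const_mul] at h
      simp at h
      linarith
    · intro t _
      have h1 := ((hv.differentiable (by simp)) t).hasDerivAt
      have h2 := h1.mul (((hasDerivAt_id t).const_mul c).neg.exp)
      convert! h2 using 1
      simp; ring
    · exact (i1.sub (i2.const_mul c)).integrableOn
    · apply tendsto_const_nhds.congr'
      filter_upwards [Filter.eventually_gt_atTop R] with r hr
      rw [hR _ (lt_of_lt_of_le hr (le_abs_self _)), zero_mul]
  -- Fubini
  have fub : ∫ ξ, u ξ * (1 / (c - Complex.I * ξ)) =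
      2 * π * ((∫ t in Set.Ioi (0:ℝ), v t * Real.exp (-(c * t)) : ℝ) : ℂ) := by
    have h1 : ∀ ξ : ℝ, ∫ t in Set.Ioi (0:ℝ), u ξ * Complex.exp ((Complex.I * ξ - c) * t) =
        u ξ * (1 / (c - Complex.I * ξ)) := by
      intro ξ
      rw [integral_const_mul, integral_exp_mul_complex_Ioi (by simpa using hc0)]
      simp only [Complex.ofReal_zero, mul_zero, Complex.exp_zero]
      rw [← neg_sub (c : ℂ), neg_div_neg_eq]
    simp only [← h1]
    rw [integral_integral_swap]
    · rw [← integral_complex_ofReal, ← integral_const_mul]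
      congr 1; ext t
      push_cast
      have := uinv t
      rw [← mul_assoc, ← this, ← integral_mul_const]
      congr 1; ext ξ
      rw [mul_assoc, ← Complex.exp_add]
      congr 2; ring
    · have hb : Integrable (fun p : ℝ × ℝ => ‖u p.1‖ * Real.exp (-c * p.2))
          (volume.prod (volume.restrict (Set.Ioi (0:ℝ)))) :=
        ui.norm.mul_prod (exp_neg_integrableOn_Ioi 0 hc0)
      refine hb.mono' ?_ ?_
      · apply Continuous.aestronglyMeasurable
        unfold Function.uncurry
        fun_prop
      · filter_upwards with p
        simp only [Function.uncurry, norm_mul, Complex.norm_exp]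
        simp
  have hne : ∀ ξ : ℝ, (c : ℂ) - Complex.I * ξ ≠ 0 := by
    intro ξ h2
    have := congrArg Complex.re h2
    simp at this; exact hc0.ne' this
  have hne' : ∀ ξ : ℝ, (c : ℂ) + Complex.I * ξ ≠ 0 := by
    intro ξ h2
    have := congrArg Complex.re h2
    simp at this; exact hc0.ne' this
  have hbound : ∀ ξ : ℝ, c ≤ ‖(c : ℂ) - Complex.I * ξ‖ := by
    intro ξ
    have := Complex.re_le_norm ((c : ℂ) - Complex.I * ξ)
    simpa using this
  have i3 : Integrable (fun ξ : ℝ => u ξ * (1 / (c - Complex.I * ξ))) := by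
    refine ui.mul_bdd (c := 1 / c) ?_ ?_
    · apply Continuous.aestronglyMeasurable
      exact continuous_const.div (by fun_prop) hne
    · filter_upwards with ξ
      rw [norm_div, norm_one]
      exact one_div_le_one_div_of_le hc0 (hbound ξ)
  have fub2 : ∫ ξ, u ξ * (1 / (c + Complex.I * ξ)) = ∫ ξ, u ξ * (1 / (c - Complex.I * ξ)) := by
    rw [← integral_neg_eq_self]
    congr 1; ext ξ
    rw [U3 he hu]; congr 2; push_cast; ring
  have i4 : Integrable (fun ξ : ℝ => u ξ * (1 / (c + Complex.I * ξ))) := by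
    have := i3.comp_neg
    refine this.congr ?_
    filter_upwards with ξ
    rw [U3 he hu]; congr 2; push_cast; ring
  have hsplit : ∀ ξ : ℝ, u ξ * ((ξ ^ 2 / (ξ ^ 2 + c ^ 2) : ℝ) : ℂ) =
      u ξ - (c / 2) * (u ξ * (1 / (c - Complex.I * ξ)) + u ξ * (1 / (c + Complex.I * ξ))) := by
    intro ξ
    have h2 : ((ξ : ℂ) ^ 2 + (c : ℂ) ^ 2) ≠ 0 := by
      have : (0 : ℝ) < ξ ^ 2 + c ^ 2 := by positivity
      exact_mod_cast this.ne'
    have h3 : ((c : ℂ) - Complex.I * ξ) * (c + Complex.I * ξ) = ((ξ : ℂ) ^ 2 + (c : ℂ) ^ 2) := by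
      linear_combination - (ξ : ℂ) ^ 2 * Complex.I_sq
    rw [← mul_add, div_add_div _ _ (hne ξ) (hne' ξ), h3]
    push_cast
    field_simp
    ring
  simp only [hsplit]
  have i5 : Integrable (fun ξ : ℝ => u ξ * (1 / (c - Complex.I * ξ)) +
    u ξ * (1 / (c + Complex.I * ξ))) := i3.add i4
  rw [integral_sub ui (i5.const_mul _), integral_const_mul, integral_add i3 i4, fub2, fub,
    ibp]
  have h0 := uinv 0
  simp only [Complex.ofReal_zero, mul_zero, Complex.exp_zero, mul_one] at h0
  rw [h0]
  push_cast
  ring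

lemma K_bound {K : ℝ → ℝ} (hK : ∀ ξ : ℝ, K ξ = if ξ = 0 then 1 / Real.pi
      else ξ * Real.cosh (Real.pi * ξ) / Real.sinh (Real.pi * ξ)) (ξ : ℝ) :
    |K ξ| ≤ 1 + |ξ| := by
  have pos : ∀ x : ℝ, 0 < x →
      |x * Real.cosh (Real.pi * x) / Real.sinh (Real.pi * x)| ≤ 1 + x := by
    intro x hx
    have hp : 0 < π * x := by positivity
    have h1 : π * x ≤ Real.sinh (π * x) := Real.self_le_sinh_iff.2 hp.le
    have h2 : Real.cosh (π * x) = Real.sinh (π * x) + Real.exp (-(π * x)) := by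
      rw [Real.cosh_eq, Real.sinh_eq]; ring
    have h3 : Real.exp (-(π * x)) ≤ 1 := Real.exp_le_one_iff.2 (by linarith)
    have h4 : 0 < Real.sinh (π * x) := by linarith
    have h5 := Real.cosh_pos (π * x)
    have h6 : x ≤ π * x := by nlinarith [Real.pi_gt_three]
    rw [abs_of_nonneg (by positivity), div_le_iff₀ h4, h2]
    nlinarith
  rw [hK]
  split_ifs with h
  · subst h
    rw [abs_of_pos (by positivity), div_le_iff₀ Real.pi_pos]
    simp; linarith [Real.pi_gt_three]
  · rcases lt_or_gt_of_ne h with h | h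
    · have := pos (-ξ) (by linarith)
      rw [abs_of_neg h]
      simpa using this
    · have := pos ξ h
      rwa [abs_of_pos h]

lemma K_meas {K : ℝ → ℝ} (hK : ∀ ξ : ℝ, K ξ = if ξ = 0 then 1 / Real.pi
      else ξ * Real.cosh (Real.pi * ξ) / Real.sinh (Real.pi * ξ)) : Measurable K := by
  rw [funext hK]
  refine Measurable.ite (measurableSet_singleton (0:ℝ)) measurable_const ?_
  apply Measurable.div
  · exact Continuous.measurable (by fun_prop)
  · exact Continuous.measurable (by fun_prop)

lemma main_u {v : ℝ → ℝ} (hv : ContDiff ℝ (⊤ : ℕ∞) v) (hc : HasCompactSupport v)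
    (he : ∀ t, v (-t) = v t) {u : ℝ → ℂ} {K : ℝ → ℝ}
    (hu : ∀ ξ : ℝ, u ξ = ∫ t : ℝ, (v t : ℂ) * Complex.exp (-(Complex.I * ξ * t)))
    (hK : ∀ ξ : ℝ, K ξ = if ξ = 0 then 1 / Real.pi
      else ξ * Real.cosh (Real.pi * ξ) / Real.sinh (Real.pi * ξ))
    {W : ℝ → ℝ} (hWc : Continuous W) (hWs : HasCompactSupport W)
    (hW : ∀ t, 0 < t → W t = deriv v t * (1 + 2 / (Real.exp t - 1))) :
    Integrable (fun ξ : ℝ => (K ξ : ℂ) * u ξ) ∧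
    ∫ ξ : ℝ, (K ξ : ℂ) * u ξ = - 2 * ((∫ t in Set.Ioi (0:ℝ), W t : ℝ) : ℂ) := by
  obtain ⟨ucont, uint, uinv⟩ := U1 hv hc hu
  have ui : Integrable u := by
    have := uint 0
    simp only [pow_zero, one_mul] at this
    exact (integrable_norm_iff ucont.aestronglyMeasurable).1 this
  have dv : Continuous (deriv v) := hv.continuous_deriv (by exact_mod_cast le_top)
  have dvi : Integrable (deriv v) := dv.integrable_of_hasCompactSupport hc.deriv
  have Wi : Integrable W := hWc.integrable_of_hasCompactSupport hWs
  have Kui : Integrable (fun ξ : ℝ => (K ξ : ℂ) * u ξ) := by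
    refine ((uint 0).add (uint 1)).mono' ?_ ?_
    · exact (Complex.measurable_ofReal.comp (K_meas hK)).aestronglyMeasurable.mul
        ucont.aestronglyMeasurable
    · filter_upwards with ξ
      rw [norm_mul, Complex.norm_real, Real.norm_eq_abs]
      have := mul_le_mul_of_nonneg_right (K_bound hK ξ) (norm_nonneg (u ξ))
      simp only [Pi.add_apply, pow_zero, pow_one]
      linarith
  refine ⟨Kui, ?_⟩
  -- frequency side
  have s1 : HasSum (fun n : ℕ => ∫ ξ, u ξ * ((ξ ^ 2 / (ξ ^ 2 + ((n : ℝ) + 1) ^ 2) : ℝ) : ℂ))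
      (∫ ξ, u ξ * (((π * K ξ - 1) / 2 : ℝ) : ℂ)) := by
    refine hasSum_integral_of_dominated_convergence
      (fun n ξ => ‖u ξ‖ * (ξ ^ 2 / (ξ ^ 2 + ((n : ℝ) + 1) ^ 2))) ?_ ?_ ?_ ?_ ?_
    · intro n
      apply Continuous.aestronglyMeasurable
      refine ucont.mul (Complex.continuous_ofReal.comp ?_)
      exact Continuous.div (by fun_prop) (by fun_prop) (fun ξ => by positivity)
    · intro n
      filter_upwards with ξ
      rw [norm_mul, Complex.norm_real, Real.norm_of_nonneg (by positivity)]
    · filter_upwards with ξ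
      exact (U4 hK ξ).summable.mul_left _
    · have : ∀ ξ, ∑' n : ℕ, ‖u ξ‖ * (ξ ^ 2 / (ξ ^ 2 + ((n : ℝ) + 1) ^ 2)) =
          ‖u ξ‖ * ((π * K ξ - 1) / 2) := fun ξ => ((U4 hK ξ).mul_left _).tsum_eq
      simp only [this]
      have h1 : Integrable (fun ξ => K ξ * ‖u ξ‖) := by
        refine Kui.norm.mono' ((K_meas hK).aestronglyMeasurable.mul
          ucont.norm.aestronglyMeasurable) ?_
        filter_upwards with ξ
        simp
      refine ((h1.const_mul (π / 2)).sub (ui.norm.const_mul (1 / 2))).congr ?_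
      filter_upwards with ξ
      simp only [Pi.sub_apply]; ring
    · filter_upwards with ξ
      exact (Complex.hasSum_ofReal.2 (U4 hK ξ)).mul_left _
  -- time side
  have geo : ∀ t : ℝ, 0 < t → HasSum (fun n : ℕ => Real.exp (-(((n : ℝ) + 1) * t)))
      (1 / (Real.exp t - 1)) := by
    intro t ht
    have h1 : Real.exp (-t) < 1 := Real.exp_lt_one_iff.2 (by linarith)
    have h := (hasSum_geometric_of_lt_one (Real.exp_pos (-t)).le h1).mul_left (Real.exp (-t))
    convert! h using 1
    · ext n
      rw [← Real.exp_nat_mul, ← Real.exp_add]; congr 1; ring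
    · have h2 : 1 < Real.exp t := Real.one_lt_exp_iff.2 ht
      rw [Real.exp_neg]
      have h3 : Real.exp t - 1 ≠ 0 := by linarith
      field_simp
  have s2 : HasSum (fun n : ℕ => ∫ t in Set.Ioi (0:ℝ),
        deriv v t * Real.exp (-(((n : ℝ) + 1) * t)))
      (∫ t in Set.Ioi (0:ℝ), (W t - deriv v t) / 2) := by
    have hval : ∀ t, 0 < t → deriv v t * (1 / (Real.exp t - 1)) = (W t - deriv v t) / 2 := by
      intro t ht
      rw [hW t ht]; ring
    have hval2 : ∀ t, 0 < t → |deriv v t| * (1 / (Real.exp t - 1)) = |(W t - deriv v t) / 2| := by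
      intro t ht
      have h2 : 1 < Real.exp t := Real.one_lt_exp_iff.2 ht
      rw [← hval t ht, abs_mul, abs_of_pos (a := 1 / (Real.exp t - 1))]
      have : 0 < Real.exp t - 1 := by linarith
      positivity
    refine hasSum_integral_of_dominated_convergence
      (fun n t => |deriv v t| * Real.exp (-(((n : ℝ) + 1) * t))) ?_ ?_ ?_ ?_ ?_
    · intro n
      exact Continuous.aestronglyMeasurable (by fun_prop)
    · intro n
      filter_upwards with t
      rw [norm_mul, Real.norm_eq_abs, Real.norm_eq_abs, Real.abs_exp]
    · rw [ae_restrict_iff' measurableSet_Ioi]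
      filter_upwards with t ht
      exact (geo t ht).summable.mul_left _
    · have hi : IntegrableOn (fun t => |(W t - deriv v t) / 2|) (Set.Ioi (0:ℝ)) :=
        ((Wi.sub dvi).div_const 2).abs.integrableOn
      refine hi.congr ?_
      rw [Filter.EventuallyEq, ae_restrict_iff' measurableSet_Ioi]
      filter_upwards with t ht
      rw [← hval2 t ht]
      exact ((geo t ht).mul_left _).tsum_eq.symm
    · rw [ae_restrict_iff' measurableSet_Ioi]
      filter_upwards with t ht
      rw [← hval t ht]
      exact (geo t ht).mul_left _
  have s3 := (Complex.hasSum_ofReal.2 s2).mul_left (-(2 * π) : ℂ)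
  have e : ∀ n : ℕ, ∫ ξ, u ξ * ((ξ ^ 2 / (ξ ^ 2 + ((n : ℝ) + 1) ^ 2) : ℝ) : ℂ) = _ :=
    fun n => U5 hv hc he hu (c := (n : ℝ) + 1) (by positivity)
  simp only [e] at s1
  have eq := s1.unique s3
  have hv0 : ∫ t in Set.Ioi (0:ℝ), deriv v t = - v 0 :=
    hc.integral_Ioi_deriv_eq (hv.of_le (by exact_mod_cast le_top)) 0
  rw [integral_div, integral_sub Wi.integrableOn dvi.integrableOn, hv0] at eq
  have h0 := uinv 0
  simp only [Complex.ofReal_zero, mul_zero, Complex.exp_zero, mul_one] at h0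
  have eL : ∫ ξ, u ξ * (((π * K ξ - 1) / 2 : ℝ) : ℂ) =
      π / 2 * (∫ ξ : ℝ, (K ξ : ℂ) * u ξ) - 1 / 2 * ∫ ξ, u ξ := by
    rw [← integral_const_mul, ← integral_const_mul,
      ← integral_sub (Kui.const_mul _) (ui.const_mul _)]
    congr 1; ext ξ
    push_cast; ring
  rw [eL, h0] at eq
  push_cast at eq
  have hpi : (π : ℂ) ≠ 0 := by exact_mod_cast Real.pi_ne_zero
  have : (π : ℂ) * ∫ ξ : ℝ, (K ξ : ℂ) * u ξ =
      π * (- 2 * ((∫ t in Set.Ioi (0:ℝ), W t : ℝ) : ℂ)) := by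
    linear_combination 2 * eq
  exact mul_left_cancel₀ hpi this

theorem stmt_0 (φ : ℝ → ℝ) (hφ : ContDiff ℝ (⊤ : ℕ∞) φ) (hsupp : HasCompactSupport φ)
    (a v : ℝ → ℝ) (u : ℝ → ℂ) (K : ℝ → ℝ)
    (ha : ∀ t, a t = φ t / Real.sqrt (t + 4))
    (hv : ∀ t, v t = 4 * Real.cosh (t / 2) *
      ∫ y in Set.Ioi (0 : ℝ), a (4 * Real.sinh (t / 2) ^ 2 + y ^ 2))
    (hu : ∀ ξ : ℝ, u ξ = ∫ t : ℝ, (v t : ℂ) * Complex.exp (-(Complex.I * ξ * t)))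
    (hK : ∀ ξ : ℝ, K ξ = if ξ = 0 then 1 / Real.pi
      else ξ * Real.cosh (Real.pi * ξ) / Real.sinh (Real.pi * ξ)) :
    Integrable (fun ξ : ℝ => (K ξ : ℂ) * u ξ) ∧
    (φ 0 : ℂ) = (1 / (4 * Real.pi)) * ∫ ξ : ℝ, (K ξ : ℂ) * u ξ := by
  let f : ℝ → ℝ := fun x => φ x * (Real.smoothTransition (x + 1) / Real.sqrt (x + 4))
  have hf : ContDiff ℝ (⊤ : ℕ∞) f := by
    apply hφ.mul
    rw [contDiff_iff_contDiffAt]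
    intro x
    by_cases hx : -2 < x
    · have h1 : x + 4 ≠ 0 := by linarith
      have h2 : Real.sqrt (x + 4) ≠ 0 := (Real.sqrt_pos.2 (by linarith)).ne'
      refine ContDiffAt.div ?_ ?_ h2
      · exact (Real.smoothTransition.contDiff.comp (contDiff_id.add contDiff_const)).contDiffAt
      · exact (contDiffAt_id.add contDiffAt_const).sqrt h1
    · apply contDiffAt_const (c := (0:ℝ)) |>.congr_of_eventuallyEq
      filter_upwards [Iio_mem_nhds (show x < -1 by linarith)] with y hy
      have hy : y < -1 := hy
      rw [Real.smoothTransition.zero_of_nonpos (by linarith), zero_div]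
  have hfc : HasCompactSupport f := hsupp.mul_right
  have hfa : ∀ x, 0 ≤ x → a x = f x := by
    intro x hx
    simp only [f]
    rw [ha, Real.smoothTransition.one_of_one_le (by linarith), mul_one_div]
  have hvv : v = vv f := by
    ext t
    rw [hv, vv, AA]
    congr 2; ext y
    exact hfa _ (by positivity)
  subst hvv
  obtain ⟨h1, h2⟩ := main_u (vv_contDiff hf hfc) (vv_hcs hfc) (vv_even f) hu hK
    (WW_cont hf hfc) (WW_hcs hfc) (fun t ht => WW_eq hf hfc ht)
  refine ⟨h1, ?_⟩
  have h0 : f 0 = φ 0 / 2 := by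
    have h4 : Real.sqrt 4 = 2 := by
      rw [show (4:ℝ) = 2 ^ 2 by norm_num]; exact Real.sqrt_sq (by norm_num)
    simp only [f, zero_add]
    rw [Real.smoothTransition.one_of_one_le le_rfl, h4]; ring
  rw [h2, WW_integral hf hfc, h0]
  have hpi : (π : ℂ) ≠ 0 := by exact_mod_cast Real.pi_ne_zero
  push_cast
  field_simp
end

section
/- Let u : ℝ → ℝ be an even Schwartz function and define v(t) := (1/(2π))·∫_ℝ u(ξ)·e^{iξt} dξ. Then ∫₀^∞ v′(t)/sinh(t) dt = −(1/4)·∫_ℝ ξ·u(ξ)·tanh(πξ/2) dξ, both integrals converging absolutely. -/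
open MeasureTheory

lemma aux_coth (x : ℝ) (hx : x ≠ 0) :
    HasSum (fun n : ℕ => 2 * x / (((n:ℝ)+1)^2 + x^2))
      (Real.pi * (Real.cosh (Real.pi * x) / Real.sinh (Real.pi * x)) - 1 / x) := by
  have hz : (Complex.I * x) ∈ Complex.integerComplement := by
    rw [Complex.mem_integerComplement_iff]
    rintro ⟨n, hn⟩
    have := congrArg Complex.im hn
    simp at this
    exact hx this.symm
  have h1 := ((Summable.hasSum_iff_tendsto_nat (summable_cotTerm hz)).mpr
    (tendsto_logDeriv_euler_cot_sub hz)).mul_left Complex.I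
  have hxc : (x:ℂ) ≠ 0 := by exact_mod_cast hx
  have hs : Complex.sinh (Real.pi * x) ≠ 0 := by
    rw [← Complex.ofReal_mul, ← Complex.ofReal_sinh]
    have : Real.sinh (Real.pi * x) ≠ 0 := by
      rw [Ne, Real.sinh_eq_zero]; positivity
    exact_mod_cast this
  rw [← Complex.hasSum_ofReal]
  convert! h1 using 1
  · funext n
    rw [cotTerm_identity hz]
    push_cast
    have h2 : ((n:ℂ)+1)^2 + x^2 ≠ 0 := by
      have : ((n:ℝ)+1)^2 + x^2 ≠ 0 := by positivity
      exact_mod_cast this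
    have h3 : (Complex.I * x + (n+1)) * (Complex.I * x - (n+1)) = -(((n:ℂ)+1)^2 + x^2) := by
      ring_nf; simp; ring
    rw [h3]
    field_simp
    simp
  · push_cast
    rw [Complex.cot_eq_cos_div_sin, show (Real.pi:ℂ) * (Complex.I * x) = (Real.pi * x) * Complex.I by ring,
      Complex.cos_mul_I, Complex.sin_mul_I]
    field_simp

lemma aux_odd (x : ℝ) (hx : x ≠ 0) :
    HasSum (fun n : ℕ => 2 * x / ((2*(n:ℝ)+1)^2 + x^2))
      (Real.pi / 2 * Real.tanh (Real.pi * x / 2)) := by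
  have h1 := aux_coth x hx
  have h2 := (aux_coth (x/2) (by positivity)).mul_left (1/2)
  have h3 : Summable (fun n : ℕ => 2 * x / ((2*(n:ℝ)+1)^2 + x^2)) := by
    have := h1.summable.comp_injective (i := fun n : ℕ => 2 * n) (fun a b h => by simpa using h)
    convert! this using 1
    funext n
    simp
  have h4 := HasSum.even_add_odd (f := fun n : ℕ => 2 * x / (((n:ℝ)+1)^2 + x^2))
    (by simpa using h3.hasSum)
    (by
      convert! h2 using 1
      funext n
      push_cast
      field_simp
      ring)
  have h5 := h4.unique h1
  have h6 : Real.sinh (Real.pi * x / 2) ≠ 0 := by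
      rw [Ne, Real.sinh_eq_zero]; positivity
  have h7 := (Real.cosh_pos (Real.pi * x / 2)).ne'
  have h8 := Real.cosh_sq (Real.pi * x / 2)
  convert h3.hasSum using 1
  rw [eq_comm, ← sub_eq_iff_eq_add.mpr h5.symm, show Real.pi * x = 2 * (Real.pi * x / 2) by ring, Real.sinh_two_mul, Real.cosh_two_mul,
    show Real.pi * (x / 2) = (Real.pi * x / 2) by ring,
    show 2 * (Real.pi * x / 2) / 2 = (Real.pi * x / 2) by ring,
    Real.tanh_eq_sinh_div_cosh]
  generalize Real.pi * x / 2 = y at *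
  field_simp
  ring

lemma aux_L1 (a x : ℝ) (ha : 0 < a) :
    ∫ t in Set.Ioi (0:ℝ), Real.sin (x * t) * Real.exp (-a * t) = x / (a^2 + x^2) := by
  have hre : (⟨-a, x⟩ : ℂ).re < 0 := by simpa using ha
  have h1 := integral_exp_mul_complex_Ioi hre 0
  have h2 := integrableOn_exp_mul_complex_Ioi hre 0
  have h3 := congrArg Complex.im h1
  rw [← RCLike.im_eq_complex_im, ← integral_im h2] at h3
  convert h3 using 1
  · congr 1
    funext t
    simp [Complex.exp_im]
    ring
  · simp [Complex.div_im, Complex.normSq_apply]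
    ring

lemma aux_bd (t : ℝ) (ht : 0 < t) : t / Real.sinh t ≤ 2 * Real.exp (-(1/2) * t) := by
  have h0 : 0 < Real.sinh t := Real.sinh_pos_iff.mpr ht
  rw [div_le_iff₀ h0]
  have h1 : t/2 ≤ Real.sinh (t/2) := Real.self_le_sinh_iff.mpr (by positivity)
  have h2 : Real.sinh t = 2 * Real.sinh (t/2) * Real.cosh (t/2) := by
    rw [← Real.sinh_two_mul]; congr 1; ring
  have h3 : Real.exp (t/2) / 2 ≤ Real.cosh (t/2) := by
    rw [Real.cosh_eq]; have := Real.exp_pos (-(t/2)); linarith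
  have h4 : Real.exp (-(1/2) * t) * Real.exp (t/2) = 1 := by
    rw [← Real.exp_add]; simp; ring
  have h5 : t/2 * (Real.exp (t/2) / 2) ≤ Real.sinh (t/2) * Real.cosh (t/2) := by
    gcongr
  have h6 := Real.exp_pos (-(1/2) * t)
  rw [h2]
  calc t = 2 * Real.exp (-(1/2) * t) * (2 * (t/2 * (Real.exp (t/2) / 2))) := by
        linear_combination (-t) * h4
    _ ≤ 2 * Real.exp (-(1/2) * t) * (2 * (Real.sinh (t/2) * Real.cosh (t/2))) := by gcongr
    _ = _ := by ring

lemma aux_te (a : ℝ) (ha : 0 < a) :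
    IntegrableOn (fun t : ℝ => t * Real.exp (-a * t)) (Set.Ioi 0) ∧
    ∫ t in Set.Ioi (0:ℝ), t * Real.exp (-a * t) = 1 / a^2 := by
  constructor
  · have := integrableOn_rpow_mul_exp_neg_mul_rpow (p := 1) (s := 1) (b := a) (by norm_num) (by norm_num) ha
    simpa using this
  · have := Real.integral_rpow_mul_exp_neg_mul_Ioi (a := 2) (r := a) (by norm_num) ha
    norm_num at this
    simpa using this

lemma aux_S (x : ℝ) : ∫ t in Set.Ioi (0:ℝ), Real.sin (x * t) / Real.sinh t
    = Real.pi / 2 * Real.tanh (Real.pi * x / 2) := by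
  rcases eq_or_ne x 0 with rfl | hx
  · simp
  have hn (n : ℕ) : (0:ℝ) < 2 * n + 1 := by positivity
  have hmaj (n : ℕ) (t : ℝ) (ht : 0 < t) :
      ‖2 * (Real.sin (x * t) * Real.exp (-(2*n+1) * t))‖ ≤ 2 * |x| * (t * Real.exp (-(2*n+1) * t)) := by
    have := Real.abs_sin_le_abs (x := x * t)
    rw [abs_mul, abs_of_pos ht] at this
    simp only [norm_mul, Real.norm_eq_abs, Real.abs_exp, abs_two]
    have h6 := Real.exp_pos (-(2*n+1) * t)
    nlinarith
  have hint (n : ℕ) : IntegrableOn (fun t => 2 * (Real.sin (x * t) * Real.exp (-(2*n+1) * t))) (Set.Ioi 0) := by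
    refine Integrable.mono' ((aux_te _ (hn n)).1.const_mul (2 * |x|)) (by fun_prop) ?_
    filter_upwards [ae_restrict_mem measurableSet_Ioi] with t ht
    exact hmaj n t ht
  have hsum := hasSum_integral_of_summable_integral_norm (μ := volume.restrict (Set.Ioi 0)) hint (by
    refine Summable.of_nonneg_of_le (fun n => integral_nonneg (fun t => norm_nonneg _))
      (f := fun n : ℕ => 2 * |x| * (1 / (2*(n:ℝ)+1)^2)) (fun n => ?_) ?_
    · rw [← (aux_te _ (hn n)).2, ← integral_const_mul]
      exact setIntegral_mono_on (hint n).norm ((aux_te _ (hn n)).1.const_mul (2 * |x|)) measurableSet_Ioi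
        (fun t ht => hmaj n t ht)
    · apply Summable.mul_left
      have : Summable (fun n : ℕ => 1 / (n:ℝ)^2) := by simp
      have := this.comp_injective (i := fun n : ℕ => 2 * n + 1) (fun a b h => by simpa using h)
      convert! this using 1
      funext n
      simp)
  have h2 := aux_odd x hx
  have h3 : (fun n : ℕ => 2 * x / ((2*(n:ℝ)+1)^2 + x^2)) = fun n : ℕ =>
      ∫ t in Set.Ioi (0:ℝ), 2 * (Real.sin (x * t) * Real.exp (-(2*n+1) * t)) := by
    funext n
    rw [integral_const_mul, aux_L1 _ _ (hn n)]
    ring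
  rw [h3] at h2
  rw [h2.unique hsum]
  refine setIntegral_congr_fun measurableSet_Ioi (fun t ht => ?_)
  have ht : 0 < t := ht
  change Real.sin (x * t) / Real.sinh t = ∑' n : ℕ, 2 * (Real.sin (x * t) * Real.exp (-(2*n+1) * t))
  symm
  apply HasSum.tsum_eq
  have hr : Real.exp (-2 * t) < 1 := by rw [Real.exp_lt_one_iff]; linarith
  have hg := (hasSum_geometric_of_lt_one (Real.exp_pos (-2*t)).le hr).mul_left (2 * Real.sin (x * t) * Real.exp (-t))
  convert! hg using 1
  · funext n
    rw [← Real.exp_nat_mul, mul_assoc, mul_assoc, ← Real.exp_add]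
    congr 3
    ring_nf
  · rw [Real.sinh_eq, show -2 * t = -t + -t by ring, Real.exp_add]
    rw [show -2 * t = -t + -t by ring, Real.exp_add] at hr
    have h1 : Real.exp t * Real.exp (-t) = 1 := by rw [← Real.exp_add]; simp
    have h0 := Real.exp_pos (-t)
    have h4 : Real.exp t - Real.exp (-t) ≠ 0 := by
      have : Real.exp (-t) < Real.exp t := by rw [Real.exp_lt_exp]; linarith
      linarith
    have h5 : 1 - Real.exp (-t) * Real.exp (-t) ≠ 0 := by linarith
    rw [← div_eq_mul_inv, div_eq_div_iff (div_ne_zero h4 two_ne_zero) h5]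
    linear_combination (-Real.sin (x * t)) * h1

theorem stmt_3 (u : SchwartzMap ℝ ℝ) (hu_even : ∀ ξ : ℝ, u (-ξ) = u ξ)
    (v : ℝ → ℂ)
    (hv : ∀ t : ℝ, v t = (1 / (2 * Real.pi)) *
      ∫ ξ : ℝ, (u ξ : ℂ) * Complex.exp (Complex.I * ξ * t)) :
    IntegrableOn (fun t : ℝ => deriv v t / (Real.sinh t : ℂ)) (Set.Ioi 0) ∧
    Integrable (fun ξ : ℝ => ξ * u ξ * Real.tanh (Real.pi * ξ / 2)) ∧
    ∫ t in Set.Ioi (0 : ℝ), deriv v t / (Real.sinh t : ℂ) =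
      -(1 / 4) * ((∫ ξ : ℝ, ξ * u ξ * Real.tanh (Real.pi * ξ / 2) : ℝ) : ℂ) := by
  have hu0 : Integrable u := u.integrable
  have hu1 : Integrable (fun ξ : ℝ => |ξ| * |u ξ|) := by
    simpa using u.integrable_pow_mul volume 1
  have hu2 : Integrable (fun ξ : ℝ => ξ^2 * |u ξ|) := by
    simpa using u.integrable_pow_mul volume 2
  have huc : Continuous u := u.continuous
  -- v as a real cosine integral
  have hv2 (t : ℝ) : v t = ((1 / (2 * Real.pi) * ∫ ξ : ℝ, u ξ * Real.cos (t * ξ) : ℝ) : ℂ) := by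
    have hc : Integrable (fun ξ : ℝ => u ξ * Real.cos (t * ξ)) := by
      refine hu0.norm.mono' (by fun_prop) (Filter.Eventually.of_forall fun ξ => ?_)
      rw [norm_mul]
      exact mul_le_of_le_one_right (norm_nonneg _) (Real.abs_cos_le_one _)
    have hs : Integrable (fun ξ : ℝ => u ξ * Real.sin (t * ξ)) := by
      refine hu0.norm.mono' (by fun_prop) (Filter.Eventually.of_forall fun ξ => ?_)
      rw [norm_mul]
      exact mul_le_of_le_one_right (norm_nonneg _) (Real.abs_sin_le_one _)
    have hs0 : ∫ ξ : ℝ, u ξ * Real.sin (t * ξ) = 0 := by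
      have := integral_neg_eq_self (fun ξ : ℝ => u ξ * Real.sin (t * ξ)) volume
      simp only [hu_even, mul_neg, Real.sin_neg, integral_neg] at this
      linarith
    have he : (fun ξ : ℝ => (u ξ : ℂ) * Complex.exp (Complex.I * ξ * t)) = fun ξ : ℝ =>
        ((u ξ * Real.cos (t * ξ) : ℝ) : ℂ) + ((u ξ * Real.sin (t * ξ) : ℝ) : ℂ) * Complex.I := by
      funext ξ
      rw [show Complex.I * ξ * t = ((t * ξ : ℝ) : ℂ) * Complex.I by push_cast; ring, Complex.exp_mul_I]
      push_cast
      ring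
    rw [hv, he, integral_add hc.ofReal (hs.ofReal.mul_const _), integral_mul_const, integral_complex_ofReal,
      integral_complex_ofReal, hs0]
    push_cast
    simp
  have hder (t : ℝ) : deriv v t =
      ((-(1 / (2 * Real.pi)) * ∫ ξ : ℝ, ξ * u ξ * Real.sin (ξ * t) : ℝ) : ℂ) := by
    have h1 := (hasDerivAt_integral_of_dominated_loc_of_deriv_le (μ := volume) (𝕜 := ℝ) (x₀ := t)
      (s := Set.univ) (F := fun t ξ => u ξ * Real.cos (t * ξ))
      (F' := fun t ξ => - (ξ * u ξ * Real.sin (ξ * t))) (bound := fun ξ => |ξ| * |u ξ|)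
      Filter.univ_mem (Filter.Eventually.of_forall fun s => by fun_prop)
      (by
        refine hu0.norm.mono' (by fun_prop) (Filter.Eventually.of_forall fun ξ => ?_)
        rw [norm_mul]
        exact mul_le_of_le_one_right (norm_nonneg _) (Real.abs_cos_le_one _))
      (by fun_prop)
      (Filter.Eventually.of_forall fun ξ s _ => by
        rw [norm_neg, norm_mul, norm_mul]
        exact mul_le_of_le_one_right (by positivity) (Real.abs_sin_le_one _))
      hu1
      (Filter.Eventually.of_forall fun ξ s _ => by
        have := (((hasDerivAt_id s).mul_const ξ).cos).const_mul (u ξ)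
        convert! this using 1
        simp
        ring_nf)).2
    have h2 := (h1.const_mul (1 / (2 * Real.pi))).ofReal_comp
    have h3 : v = fun t => ((1 / (2 * Real.pi) * ∫ ξ : ℝ, u ξ * Real.cos (t * ξ) : ℝ) : ℂ) :=
      funext hv2
    rw [h3]
    rw [h2.deriv, integral_neg]
    push_cast
    ring
  -- Fubini
  have hexp : IntegrableOn (fun t : ℝ => 2 * Real.exp (-(1/2) * t)) (Set.Ioi 0) :=
    (exp_neg_integrableOn_Ioi 0 (by norm_num : (0:ℝ) < 1/2)).const_mul 2
  have hF : Integrable (Function.uncurry fun (t ξ : ℝ) => ξ * u ξ * Real.sin (ξ * t) / Real.sinh t)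
      ((volume.restrict (Set.Ioi 0)).prod volume) := by
    refine (Integrable.mul_prod hexp hu2).mono' ?_ ?_
    · apply Measurable.aestronglyMeasurable
      unfold Function.uncurry
      have := huc.measurable
      have := Real.continuous_sinh.measurable
      fun_prop
    · have : ∀ᵐ z : ℝ × ℝ ∂((volume.restrict (Set.Ioi 0)).prod volume), z.1 ∈ Set.Ioi (0:ℝ) :=
        Measure.quasiMeasurePreserving_fst.ae (ae_restrict_mem measurableSet_Ioi)
      filter_upwards [this] with ⟨t, ξ⟩ ht
      have ht : 0 < t := ht
      have h0 : 0 < Real.sinh t := Real.sinh_pos_iff.mpr ht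
      have h1 := Real.abs_sin_le_abs (x := ξ * t)
      rw [abs_mul, abs_of_pos ht] at h1
      simp only [Function.uncurry, Real.norm_eq_abs, abs_div, abs_mul, abs_of_pos h0]
      calc |ξ| * |u ξ| * |Real.sin (ξ * t)| / Real.sinh t
          ≤ |ξ| * |u ξ| * (|ξ| * t) / Real.sinh t := by gcongr
        _ = (t / Real.sinh t) * (|ξ|^2 * |u ξ|) := by ring
        _ ≤ 2 * Real.exp (-(1/2) * t) * (|ξ|^2 * |u ξ|) := by gcongr; exact aux_bd t ht
        _ = _ := by rw [sq_abs]
  have hfun : (fun t : ℝ => deriv v t / (Real.sinh t : ℂ)) = fun t : ℝ =>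
      ((-(1 / (2 * Real.pi)) * ∫ ξ : ℝ, ξ * u ξ * Real.sin (ξ * t) / Real.sinh t : ℝ) : ℂ) := by
    funext t
    rw [hder, integral_div]
    push_cast
    ring
  refine ⟨?_, ?_, ?_⟩
  · rw [hfun]
    exact (hF.integral_prod_left.const_mul _).ofReal
  · have hth : Continuous Real.tanh := by
      rw [show Real.tanh = fun x => Real.sinh x / Real.cosh x from funext Real.tanh_eq_sinh_div_cosh]
      exact Real.continuous_sinh.div Real.continuous_cosh (fun x => (Real.cosh_pos x).ne')
    refine hu1.mono' (by fun_prop) (Filter.Eventually.of_forall fun ξ => ?_)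
    rw [norm_mul, norm_mul]
    refine mul_le_of_le_one_right (by positivity) ?_
    rw [Real.norm_eq_abs, abs_le]
    exact ⟨(Real.neg_one_lt_tanh _).le, (Real.tanh_lt_one _).le⟩
  · rw [hfun, integral_complex_ofReal, integral_const_mul, integral_integral_swap hF]
    have : ∀ ξ : ℝ, ∫ t in Set.Ioi (0:ℝ), ξ * u ξ * Real.sin (ξ * t) / Real.sinh t =
        Real.pi / 2 * (ξ * u ξ * Real.tanh (Real.pi * ξ / 2)) := by
      intro ξ
      simp_rw [mul_div_assoc]
      rw [integral_const_mul, aux_S]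
      ring_nf
    simp_rw [this]
    rw [integral_const_mul]
    generalize (∫ ξ : ℝ, ξ * u ξ * Real.tanh (Real.pi * ξ / 2)) = J
    have hp : (Real.pi : ℂ) ≠ 0 := by exact_mod_cast Real.pi_ne_zero
    push_cast
    field_simp
    ring
end

section
/- For every real ξ ≠ 0, ∫_ℝ e^{iξt}/cosh²(t/2) dt = 4πξ/sinh(πξ). -/
theorem stmt_4_aux_cosh (t : ℝ) :
    4 * (Real.sigmoid t * (1 - Real.sigmoid t)) = 1 / Real.cosh (t / 2) ^ 2 := by
  have h : Real.sigmoid t = Real.exp (t / 2) / (2 * Real.cosh (t / 2)) := by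
    rw [Real.sigmoid_def, Real.cosh_eq]
    have e : Real.exp (-t) = Real.exp (-(t / 2)) * Real.exp (-(t / 2)) := by
      rw [← Real.exp_add]; ring_nf
    have e2 : Real.exp (t / 2) * Real.exp (-(t / 2)) = 1 := by
      rw [← Real.exp_add]; simp
    have p := Real.exp_pos (t / 2)
    have q := Real.exp_pos (-(t / 2))
    rw [e, inv_eq_one_div, div_eq_div_iff (by positivity) (by positivity)]
    linear_combination (-Real.exp (-(t / 2))) * e2
  have h2 : 1 - Real.sigmoid t = Real.exp (-(t / 2)) / (2 * Real.cosh (t / 2)) := by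
    rw [h]
    have hc := Real.cosh_pos (t / 2)
    rw [eq_div_iff (by positivity), sub_mul, div_mul_cancel₀ _ (by positivity), Real.cosh_eq]
    ring
  have e2 : Real.exp (t / 2) * Real.exp (-(t / 2)) = 1 := by
    rw [← Real.exp_add]; simp
  have hc := Real.cosh_pos (t / 2)
  rw [h2, h, div_mul_div_comm, e2]
  field_simp
  norm_num

theorem stmt_4_aux_pow (ξ t : ℝ) :
    ((Real.sigmoid t : ℝ) : ℂ) ^ ((1 + Complex.I * ξ) - 1) *
      (1 - ((Real.sigmoid t : ℝ) : ℂ)) ^ ((1 - Complex.I * ξ) - 1)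
      = Complex.exp (Complex.I * ξ * t) := by
  have p := Real.sigmoid_pos t
  have q : 0 < 1 - Real.sigmoid t := sub_pos.2 (Real.sigmoid_lt_one t)
  have hl : Real.log (1 - Real.sigmoid t) = Real.log (Real.sigmoid t) - t := by
    rw [← Real.sigmoid_neg, ← Real.sigmoid_mul_rexp_neg, Real.log_mul p.ne' (Real.exp_pos _).ne',
      Real.log_exp]
    ring
  have hc : (1 - ((Real.sigmoid t : ℝ) : ℂ)) = ((1 - Real.sigmoid t : ℝ) : ℂ) := by push_cast; rfl
  rw [hc, Complex.cpow_def_of_ne_zero (by exact_mod_cast p.ne'),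
    Complex.cpow_def_of_ne_zero (by exact_mod_cast q.ne'), ← Complex.ofReal_log p.le,
    ← Complex.ofReal_log q.le, hl, ← Complex.exp_add]
  congr 1
  push_cast
  ring

/-- For every real `ξ ≠ 0`, `∫_ℝ e^{iξt}/cosh²(t/2) dt = 4πξ/sinh(πξ)`. -/
theorem stmt_4 (ξ : ℝ) (hξ : ξ ≠ 0) :
    ∫ t : ℝ, Complex.exp (Complex.I * ξ * t) / (Real.cosh (t / 2) : ℂ) ^ 2 =
      ((4 * Real.pi * ξ / Real.sinh (Real.pi * ξ) : ℝ) : ℂ) := by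
  have hcv := MeasureTheory.integral_image_eq_integral_abs_deriv_smul (s := Set.univ)
    (f := Real.sigmoid) MeasurableSet.univ
    (fun x _ => (Real.hasDerivAt_sigmoid x).hasDerivWithinAt) Real.sigmoid_injective.injOn
    (fun x : ℝ => (x : ℂ) ^ ((1 + Complex.I * ξ) - 1) * (1 - (x : ℂ)) ^ ((1 - Complex.I * ξ) - 1))
  rw [Set.image_univ, Real.range_sigmoid, ← MeasureTheory.integral_Ioc_eq_integral_Ioo,
    ← intervalIntegral.integral_of_le zero_le_one, MeasureTheory.setIntegral_univ] at hcv
  change Complex.betaIntegral (1 + Complex.I * ξ) (1 - Complex.I * ξ) = _ at hcv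
  have hpt : ∀ t : ℝ, Complex.exp (Complex.I * ξ * t) / (Real.cosh (t / 2) : ℂ) ^ 2 =
      4 * (|Real.sigmoid t * (1 - Real.sigmoid t)| •
        (((Real.sigmoid t : ℝ) : ℂ) ^ ((1 + Complex.I * ξ) - 1) *
      (1 - ((Real.sigmoid t : ℝ) : ℂ)) ^ ((1 - Complex.I * ξ) - 1))) := by
    intro t
    have q : 0 < 1 - Real.sigmoid t := sub_pos.2 (Real.sigmoid_lt_one t)
    rw [stmt_4_aux_pow, abs_of_pos (mul_pos (Real.sigmoid_pos t) q), Complex.real_smul,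
      ← mul_assoc]
    have h : (4 : ℂ) * ((Real.sigmoid t * (1 - Real.sigmoid t) : ℝ) : ℂ)
        = 1 / (Real.cosh (t / 2) : ℂ) ^ 2 := by
      exact_mod_cast congrArg (fun x : ℝ => (x : ℂ)) (stmt_4_aux_cosh t)
    rw [h]
    ring
  simp_rw [hpt]
  rw [MeasureTheory.integral_const_mul, ← hcv]
  have hG := Complex.Gamma_mul_Gamma_eq_betaIntegral (s := 1 + Complex.I * ξ)
    (t := 1 - Complex.I * ξ) (by simp) (by simp)
  have h2 : (1 + Complex.I * ξ) + (1 - Complex.I * ξ) = (2 : ℂ) := by ring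
  have hI : Complex.I * ξ ≠ 0 := mul_ne_zero Complex.I_ne_zero (by exact_mod_cast hξ)
  have hG2 : Complex.Gamma 2 = 1 := by
    simpa using Complex.Gamma_ofNat_eq_factorial 1
  rw [h2, add_comm 1 (Complex.I * (ξ : ℂ)), Complex.Gamma_add_one _ hI, mul_assoc,
    Complex.Gamma_mul_Gamma_one_sub, add_comm (Complex.I * (ξ : ℂ)) 1] at hG
  have hs : Complex.sin (Real.pi * (Complex.I * ξ)) = Complex.sinh (Real.pi * ξ) * Complex.I := by
    rw [← Complex.sin_mul_I]; ring_nf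
  have hne : Complex.sinh (Real.pi * ξ) ≠ 0 := by
    have : Real.sinh (Real.pi * ξ) ≠ 0 := by
      rw [Ne, Real.sinh_eq_zero]; exact mul_ne_zero Real.pi_ne_zero hξ
    exact_mod_cast this
  rw [hs, hG2, one_mul] at hG
  rw [← hG]
  push_cast
  field_simp
end

section
/- Let φ : ℝ → ℝ be smooth and compactly supported. Define a(t) := φ(t)/√(t+4), v(t) := 4·cosh(t/2)·∫₀^∞ a(4·sinh²(t/2) + y²) dy, and u(ξ) := ∫_ℝ v(t)·e^{−iξt} dt. Then for every ξ ∈ ℝ, ∫₀^∞ ∫_ℝ φ( (x² + (y−1)²)/y ) · y^{−3/2 − iξ} · (1+y)/√(x² + (y+1)²) dx dy = u(ξ), where y^{−3/2−iξ} denotes the complex power of the positive real y. -/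
open MeasureTheory

/-- The orbital integral computing the eigenvalue of the convolution operator on the
Dirac eigenspinor `y^{1/2−iξ}σ⁺` of the hyperbolic plane, evaluated at `i`:
`∫₀^∞ ∫_ℝ φ((x²+(y−1)²)/y) · y^{−3/2−iξ} · (1+y)/√(x²+(y+1)²) dx dy = u(ξ)`. -/
theorem stmt_5 (φ : ℝ → ℝ) (hφ : ContDiff ℝ (⊤ : ℕ∞) φ) (hsupp : HasCompactSupport φ)
    (a v : ℝ → ℝ) (u : ℝ → ℂ)
    (ha : ∀ t, a t = φ t / Real.sqrt (t + 4))
    (hv : ∀ t, v t = 4 * Real.cosh (t / 2) *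
      ∫ y in Set.Ioi (0 : ℝ), a (4 * Real.sinh (t / 2) ^ 2 + y ^ 2))
    (hu : ∀ ξ : ℝ, u ξ = ∫ t : ℝ, (v t : ℂ) * Complex.exp (-(Complex.I * ξ * t)))
    (ξ : ℝ) :
    ∫ y in Set.Ioi (0 : ℝ), ∫ x : ℝ,
        (φ ((x ^ 2 + (y - 1) ^ 2) / y) : ℂ) *
          (y : ℂ) ^ (-(3 / 2 : ℂ) - Complex.I * ξ) *
          (((1 + y) / Real.sqrt (x ^ 2 + (y + 1) ^ 2) : ℝ) : ℂ) = u ξ := by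
  rw [hu]
  have himg : Set.Ioi (0 : ℝ) = Real.exp '' Set.univ := by
    rw [Set.image_univ, Real.range_exp]
  rw [himg, integral_image_eq_integral_abs_deriv_smul MeasurableSet.univ
    (fun x _ => (Real.hasDerivAt_exp x).hasDerivWithinAt) Real.exp_injective.injOn,
    setIntegral_univ]
  congr 1
  funext t
  obtain ⟨E, hE⟩ : ∃ E, E = Real.exp (t / 2) := ⟨_, rfl⟩
  have hE0 : 0 < E := hE ▸ Real.exp_pos _
  have hEE : Real.exp t = E * E := by rw [hE, ← Real.exp_add]; ring_nf
  have hch : 2 * Real.cosh (t / 2) = E + E⁻¹ := by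
    rw [Real.cosh_eq, hE, Real.exp_neg]; ring
  have hsh : 2 * Real.sinh (t / 2) = E - E⁻¹ := by
    rw [Real.sinh_eq, hE, Real.exp_neg]; ring
  have hpow : ((Real.exp t : ℝ) : ℂ) ^ (-(3 / 2 : ℂ) - Complex.I * ξ)
      = ((E : ℂ))⁻¹ * (((E : ℂ))⁻¹ * ((E : ℂ))⁻¹) * Complex.exp (-(Complex.I * ξ * t)) := by
    rw [Complex.cpow_def_of_ne_zero (by exact_mod_cast (Real.exp_pos t).ne'),
      ← Complex.ofReal_log (Real.exp_pos t).le, Real.log_exp, hE, Complex.ofReal_exp,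
      ← Complex.exp_neg, ← Complex.exp_add, ← Complex.exp_add, ← Complex.exp_add]
    congr 1
    push_cast
    ring
  have key : ∀ w : ℝ, (φ (((E * w) ^ 2 + (Real.exp t - 1) ^ 2) / Real.exp t) : ℂ) *
          ((Real.exp t : ℝ) : ℂ) ^ (-(3 / 2 : ℂ) - Complex.I * ξ) *
          (((1 + Real.exp t) / Real.sqrt ((E * w) ^ 2 + (Real.exp t + 1) ^ 2) : ℝ) : ℂ)
      = (((E : ℂ))⁻¹ * (((E : ℂ))⁻¹ * ((E : ℂ))⁻¹) * Complex.exp (-(Complex.I * ξ * t)) *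
          ((2 * Real.cosh (t / 2) : ℝ) : ℂ)) *
        ((a (4 * Real.sinh (t / 2) ^ 2 + |w| ^ 2) : ℝ) : ℂ) := by
    intro w
    have h4 : 4 * Real.sinh (t / 2) ^ 2 = (E - E⁻¹) ^ 2 := by rw [← hsh]; ring
    have h1 : ((E * w) ^ 2 + (Real.exp t - 1) ^ 2) / Real.exp t = (E - E⁻¹) ^ 2 + w ^ 2 := by
      rw [hEE]; field_simp; ring
    have h2 : (E * w) ^ 2 + (Real.exp t + 1) ^ 2 = E ^ 2 * ((E - E⁻¹) ^ 2 + w ^ 2 + 4) := by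
      rw [hEE]; field_simp; ring
    have h3 : (1 + Real.exp t) / Real.sqrt ((E * w) ^ 2 + (Real.exp t + 1) ^ 2)
        = (E + E⁻¹) / Real.sqrt ((E - E⁻¹) ^ 2 + w ^ 2 + 4) := by
      rw [h2, Real.sqrt_mul (sq_nonneg E), Real.sqrt_sq hE0.le, hEE,
        show 1 + E * E = E * (E + E⁻¹) by field_simp; ring, mul_div_mul_left _ _ hE0.ne']
    rw [hpow, h1, h3, ha, sq_abs, h4, hch]
    push_cast
    ring
  have hsub := Measure.integral_comp_mul_left (fun x : ℝ =>
    (φ ((x ^ 2 + (Real.exp t - 1) ^ 2) / Real.exp t) : ℂ) *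
          ((Real.exp t : ℝ) : ℂ) ^ (-(3 / 2 : ℂ) - Complex.I * ξ) *
          (((1 + Real.exp t) / Real.sqrt (x ^ 2 + (Real.exp t + 1) ^ 2) : ℝ) : ℂ)) E
  simp only [key] at hsub
  rw [integral_const_mul, integral_complex_ofReal,
    integral_comp_abs (f := fun w => a (4 * Real.sinh (t / 2) ^ 2 + w ^ 2)),
    abs_of_pos (inv_pos.2 hE0), Complex.real_smul] at hsub
  have hEc : (E : ℂ) ≠ 0 := by exact_mod_cast hE0.ne'
  rw [abs_of_pos (Real.exp_pos t), Complex.real_smul, hv]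
  rw [Complex.ofReal_inv, eq_inv_mul_iff_mul_eq₀ hEc] at hsub
  rw [← hsub, hEE]
  generalize (∫ y in Set.Ioi (0 : ℝ), a (4 * Real.sinh (t / 2) ^ 2 + y ^ 2)) = J
  push_cast
  field_simp
  ring
end

section
/- Let f : [0,∞) → ℝ be continuous on [0,∞), differentiable on (0,∞), and suppose there is C > 0 with |f(x)| ≤ C for all x ≥ 0 and |x·f′(x)| ≤ C for all x > 0. Then for every ℓ > 0 the series Σ_{n=1}^∞ ((−1)^n/n)·f(nℓ) converges, and lim_{ℓ→0⁺} Σ_{n=1}^∞ ((−1)^n/n)·f(nℓ) = −log(2)·f(0). -/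
open Filter

lemma aux_log2_partial (N : ℕ) :
    ∑ k ∈ Finset.range N, (-1 / (2 * (k : ℝ) + 1) + 1 / (2 * (k : ℝ) + 2))
      = (harmonic N : ℝ) - (harmonic (2 * N) : ℝ) := by
  induction N with
  | zero => simp
  | succ n ih =>
    rw [Finset.sum_range_succ, ih, show 2 * (n + 1) = 2 * n + 1 + 1 by ring, harmonic_succ,
      harmonic_succ, harmonic_succ]
    push_cast
    have h1 : (n : ℝ) + 1 ≠ 0 := by positivity
    have h2 : 2 * (n : ℝ) + 1 ≠ 0 := by positivity
    have h3 : 2 * (n : ℝ) + 1 + 1 ≠ 0 := by positivity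
    have h4 : 2 * (n : ℝ) + 2 ≠ 0 := by positivity
    field_simp
    ring

lemma aux_log2 : Tendsto (fun N : ℕ =>
    ∑ k ∈ Finset.range N, (-1 / (2 * (k : ℝ) + 1) + 1 / (2 * (k : ℝ) + 2)))
    atTop (nhds (-Real.log 2)) := by
  have h := Real.tendsto_harmonic_sub_log
  have h2 : Tendsto (fun n : ℕ => 2 * n) atTop atTop :=
    tendsto_id.const_mul_atTop' (by norm_num)
  have h3 := (h.sub (h.comp h2)).sub_const (Real.log 2)
  rw [sub_self, zero_sub] at h3
  refine h3.congr' ?_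
  filter_upwards [eventually_gt_atTop 0] with N hN
  rw [aux_log2_partial]
  have : (N : ℝ) ≠ 0 := by positivity
  simp only [Function.comp]
  push_cast
  rw [Real.log_mul (by norm_num) this]
  ring

lemma aux_bound (f : ℝ → ℝ) (C : ℝ) (hC : 0 < C)
    (hdiff : ∀ x ∈ Set.Ioi (0 : ℝ), DifferentiableAt ℝ f x)
    (hbound : ∀ x : ℝ, 0 ≤ x → |f x| ≤ C)
    (hbound' : ∀ x : ℝ, 0 < x → |x * deriv f x| ≤ C) (l : ℝ) (hl : 0 < l) (k : ℕ) :
    ‖-1 / (2 * (k : ℝ) + 1) * f ((2 * k + 1) * l) + 1 / (2 * (k : ℝ) + 2) * f ((2 * k + 2) * l)‖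
      ≤ 2 * C * (1 / ((k : ℝ) + 1) ^ 2) := by
  have hk : (0 : ℝ) ≤ k := by positivity
  set m : ℝ := 2 * (k : ℝ) + 1 with hm
  have hm0 : 0 < m := by positivity
  have e : 2 * (k : ℝ) + 2 = m + 1 := by rw [hm]; ring
  rw [e]
  have hml : 0 < m * l := by positivity
  have hd : ‖f ((m + 1) * l) - f (m * l)‖ ≤ C / (m * l) * ‖(m + 1) * l - m * l‖ := by
    refine (convex_Ici (m * l)).norm_image_sub_le_of_norm_deriv_le (f := f) ?_ ?_ ?_ ?_
    · intro x hx
      exact hdiff x (lt_of_lt_of_le hml hx)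
    · intro x hx
      have hx' : m * l ≤ x := hx
      have hx0 : 0 < x := lt_of_lt_of_le hml hx
      have := hbound' x hx0
      rw [abs_mul, abs_of_pos hx0] at this
      rw [Real.norm_eq_abs, le_div_iff₀ hml]
      nlinarith [abs_nonneg (deriv f x)]
    · exact Set.mem_Ici.2 le_rfl
    · exact Set.mem_Ici.2 (by nlinarith)
  have e2 : (m + 1) * l - m * l = l := by ring
  rw [e2, Real.norm_eq_abs, Real.norm_eq_abs, abs_of_pos hl] at hd
  have e3 : C / (m * l) * l = C / m := by field_simp
  rw [e3] at hd
  have hb := hbound (m * l) hml.le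
  have e4 : -1 / m * f (m * l) + 1 / (m + 1) * f ((m + 1) * l)
      = 1 / (m + 1) * (f ((m + 1) * l) - f (m * l)) + (-(1 / (m * (m + 1)))) * f (m * l) := by
    field_simp
    ring
  rw [e4, Real.norm_eq_abs]
  refine (abs_add_le _ _).trans ?_
  rw [abs_mul, abs_mul, abs_neg, abs_of_pos (show 0 < 1 / (m + 1) by positivity),
    abs_of_pos (show 0 < 1 / (m * (m + 1)) by positivity)]
  calc _ ≤ 1 / (m + 1) * (C / m) + 1 / (m * (m + 1)) * C := by gcongr
    _ = 2 * C * (1 / (m * (m + 1))) := by field_simp; ring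
    _ ≤ _ := by
      gcongr
      nlinarith

/-- The analytic core of the pinching limit of the geometric side of the trace formula:
if `f` is continuous on `[0,∞)`, differentiable on `(0,∞)`, with `|f|` and `|x·f′(x)|`
bounded, then for every `ℓ > 0` the series `Σ_{n≥1} ((−1)^n/n)·f(nℓ)` converges, and
its sum tends to `−log(2)·f(0)` as `ℓ → 0⁺`. -/
theorem stmt_8 (f : ℝ → ℝ) (C : ℝ) (hC : 0 < C)
    (hcont : ContinuousOn f (Set.Ici 0))
    (hdiff : ∀ x ∈ Set.Ioi (0 : ℝ), DifferentiableAt ℝ f x)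
    (hbound : ∀ x : ℝ, 0 ≤ x → |f x| ≤ C)
    (hbound' : ∀ x : ℝ, 0 < x → |x * deriv f x| ≤ C) :
    ∃ S : ℝ → ℝ,
      (∀ ℓ : ℝ, 0 < ℓ →
        Tendsto (fun N : ℕ => ∑ n ∈ Finset.range N, ((-1 : ℝ) ^ (n + 1) / (n + 1)) *
            f ((n + 1) * ℓ))
          atTop (nhds (S ℓ))) ∧
      Tendsto S (nhdsWithin 0 (Set.Ioi 0)) (nhds (-(Real.log 2) * f 0)) := by
  have hsum : Summable (fun k : ℕ => 2 * C * (1 / ((k : ℝ) + 1) ^ 2)) := by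
    have h := (summable_nat_add_iff 1).2 (Real.summable_one_div_nat_pow (p := 2).2 (by norm_num))
    push_cast at h
    exact h.mul_left _
  have hB := aux_bound f C hC hdiff hbound hbound'
  refine ⟨fun l => ∑' k : ℕ, (-1 / (2 * (k : ℝ) + 1) * f ((2 * k + 1) * l)
    + 1 / (2 * (k : ℝ) + 2) * f ((2 * k + 2) * l)), ?_, ?_⟩
  · intro l hl
    have hs := (Summable.of_norm_bounded hsum (hB l hl)).hasSum.tendsto_sum_nat
    have hhalf : Tendsto (fun N : ℕ => N / 2) atTop atTop :=
      Nat.tendsto_div_const_atTop (by norm_num)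
    have hs2 := hs.comp hhalf
    have heven : ∀ N : ℕ, ∑ n ∈ Finset.range (2 * N), ((-1 : ℝ) ^ (n + 1) / (n + 1)) *
            f ((n + 1) * l) = ∑ k ∈ Finset.range N, (-1 / (2 * (k : ℝ) + 1) * f ((2 * k + 1) * l)
    + 1 / (2 * (k : ℝ) + 2) * f ((2 * k + 2) * l)) := by
      intro N
      induction N with
      | zero => simp
      | succ n ih =>
        rw [show 2 * (n + 1) = 2 * n + 1 + 1 by ring, Finset.sum_range_succ,
          Finset.sum_range_succ, ih, Finset.sum_range_succ]
        have p1 : (-1 : ℝ) ^ (2 * n + 1) = -1 := by rw [pow_succ, pow_mul]; simp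
        have p2 : (-1 : ℝ) ^ (2 * n + 1 + 1) = 1 := by rw [pow_succ, p1]; simp
        rw [p1, p2]
        push_cast
        rw [show 2 * (n : ℝ) + 1 + 1 = 2 * n + 2 by ring]
        ring
    have hdist : Tendsto (fun N : ℕ => (∑ n ∈ Finset.range N, ((-1 : ℝ) ^ (n + 1) / (n + 1)) *
            f ((n + 1) * l)) - ∑ n ∈ Finset.range (2 * (N / 2)), ((-1 : ℝ) ^ (n + 1) / (n + 1)) *
            f ((n + 1) * l)) atTop (nhds 0) := by
      have hz : Tendsto (fun N : ℕ => C / (N : ℝ)) atTop (nhds 0) :=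
        tendsto_const_div_atTop_nhds_zero_nat C
      refine squeeze_zero_norm (fun N => ?_) hz
      rcases Nat.even_or_odd' N with ⟨k, rfl | rfl⟩
      · rw [show 2 * k / 2 = k by omega, sub_self, norm_zero]
        positivity
      · rw [show (2 * k + 1) / 2 = k by omega, Finset.sum_range_succ, add_sub_cancel_left,
          norm_mul, norm_div, norm_pow, norm_neg, norm_one, one_pow]
        push_cast
        have hp : (0 : ℝ) < 2 * k + 1 := by positivity
        rw [Real.norm_eq_abs, Real.norm_eq_abs, abs_of_pos hp, div_mul_eq_mul_div, one_mul]
        gcongr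
        exact hbound _ (by positivity)
    have := hdist.add hs2
    rw [zero_add] at this
    refine this.congr fun N => ?_
    simp only [Function.comp]
    rw [← heven]
    ring
  · have key := tendsto_tsum_of_dominated_convergence (𝓕 := nhdsWithin (0 : ℝ) (Set.Ioi 0))
      (f := fun l (k : ℕ) => (-1 / (2 * (k : ℝ) + 1) * f ((2 * k + 1) * l)
        + 1 / (2 * (k : ℝ) + 2) * f ((2 * k + 2) * l)))
      (g := fun k : ℕ => (-1 / (2 * (k : ℝ) + 1) * f 0 + 1 / (2 * (k : ℝ) + 2) * f 0)) hsum
      (by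
        intro k
        have hc : ∀ c : ℝ, 0 < c → Tendsto (fun l => f (c * l)) (nhdsWithin (0 : ℝ) (Set.Ioi 0))
            (nhds (f 0)) := by
          intro c hc
          have h0 : Tendsto f (nhdsWithin 0 (Set.Ici 0)) (nhds (f 0)) :=
            hcont 0 (Set.mem_Ici.2 le_rfl)
          refine h0.comp (tendsto_nhdsWithin_iff.2 ⟨?_, ?_⟩)
          · have : Tendsto (fun l : ℝ => c * l) (nhds 0) (nhds (c * 0)) :=
              (continuous_const.mul continuous_id).tendsto 0
            rw [mul_zero] at this
            exact this.mono_left nhdsWithin_le_nhds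
          · filter_upwards [self_mem_nhdsWithin] with l hl
            exact (mul_pos hc hl).le
        exact ((hc _ (by positivity)).const_mul _).add ((hc _ (by positivity)).const_mul _))
      (by
        filter_upwards [self_mem_nhdsWithin] with l hl k
        exact hB l hl k)
    have hval : ∑' k : ℕ, (-1 / (2 * (k : ℝ) + 1) * f 0 + 1 / (2 * (k : ℝ) + 2) * f 0)
        = -(Real.log 2) * f 0 := by
      have hsg : Summable (fun k : ℕ => (-1 / (2 * (k : ℝ) + 1) * f 0
          + 1 / (2 * (k : ℝ) + 2) * f 0)) := by
        refine Summable.of_norm_bounded hsum fun k => ?_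
        exact aux_bound (fun _ => f 0) C hC (fun x _ => by fun_prop)
          (fun _ _ => hbound 0 le_rfl) (fun x _ => by simpa using hC.le) 1 one_pos k
      refine tendsto_nhds_unique hsg.hasSum.tendsto_sum_nat ?_
      refine (aux_log2.mul_const (f 0)).congr fun N => ?_
      rw [Finset.sum_mul]
      exact Finset.sum_congr rfl fun k _ => by ring
    rw [hval] at key
    exact key
end

section
/- Let I(T) := ∫_ℝ e^{−Tξ²}·ξ·coth(πξ) dξ (with ξ·coth(πξ) extended continuously at 0 by 1/π). Then there exist C > 0 and T₀ > 0 such that for all T > T₀, | I(T) − 1/√(πT) − (1/6)·√(π³/T³) | ≤ C·T^{−5/2}. -/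
open MeasureTheory

lemma aux_mono (f f' : ℝ → ℝ) (h : ∀ x, HasDerivAt f (f' x) x) (h0 : f 0 = 0)
    (hn : ∀ x, 0 < x → 0 ≤ f' x) (x : ℝ) (hx : 0 ≤ x) : 0 ≤ f x := by
  have := monotoneOn_of_deriv_nonneg (convex_Ici (0:ℝ)) (f := f)
    (fun x _ => (h x).continuousAt.continuousWithinAt)
    (fun x _ => (h x).differentiableAt.differentiableWithinAt)
    (fun x hx => by
      rw [(h x).deriv]; apply hn; simpa using hx)
  have h2 := this (Set.mem_Ici.2 le_rfl) (Set.mem_Ici.2 hx) hx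
  rwa [h0] at h2

lemma aux1 (x : ℝ) (hx : 0 ≤ x) : 0 ≤ x * Real.cosh x - Real.sinh x := by
  refine aux_mono (fun x => x * Real.cosh x - Real.sinh x) (fun x => x * Real.sinh x) ?_ (by simp) ?_ x hx
  · intro x
    refine HasDerivAt.congr_deriv (((hasDerivAt_id x).mul (Real.hasDerivAt_cosh x)).sub (Real.hasDerivAt_sinh x)) ?_
    simp
    try ring
  · intro x hx
    have := Real.sinh_pos_iff.2 hx
    positivity

lemma aux2 (x : ℝ) (hx : 0 ≤ x) : 0 ≤ x^2 * Real.sinh x - (x * Real.cosh x - Real.sinh x) := by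
  refine aux_mono (fun x => x^2 * Real.sinh x - (x * Real.cosh x - Real.sinh x))
    (fun x => x * Real.sinh x + x^2 * Real.cosh x) ?_ (by simp) ?_ x hx
  · intro x
    refine HasDerivAt.congr_deriv (((hasDerivAt_pow 2 x).mul (Real.hasDerivAt_sinh x)).sub (((hasDerivAt_id x).mul (Real.hasDerivAt_cosh x)).sub (Real.hasDerivAt_sinh x))) ?_
    simp
    try ring
  · intro x hx
    have := Real.sinh_pos_iff.2 hx
    have := Real.cosh_pos x
    positivity

lemma aux3d (x : ℝ) : HasDerivAt (fun x => (1+x^2/3) * Real.sinh x - x * Real.cosh x)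
    (x/3 * (x * Real.cosh x - Real.sinh x)) x := by
  refine HasDerivAt.congr_deriv (((((hasDerivAt_pow 2 x).div_const 3).const_add 1).mul (Real.hasDerivAt_sinh x)).sub ((hasDerivAt_id x).mul (Real.hasDerivAt_cosh x))) ?_
  simp
  try ring

lemma aux3 (x : ℝ) (hx : 0 ≤ x) : 0 ≤ (1+x^2/3) * Real.sinh x - x * Real.cosh x := by
  refine aux_mono _ _ aux3d (by simp) ?_ x hx
  intro x hx
  have := aux1 x hx.le
  positivity

lemma aux4 (x : ℝ) (hx : 0 ≤ x) :
    0 ≤ x^4 * Real.sinh x - ((1+x^2/3) * Real.sinh x - x * Real.cosh x) := by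
  refine aux_mono (fun x => x^4 * Real.sinh x - ((1+x^2/3) * Real.sinh x - x * Real.cosh x))
    (fun x => (4 * x^3 * Real.sinh x + x^4 * Real.cosh x) - (x/3 * (x * Real.cosh x - Real.sinh x)))
    ?_ (by simp) ?_ x hx
  · intro x
    refine HasDerivAt.congr_deriv (((hasDerivAt_pow 4 x).mul (Real.hasDerivAt_sinh x)).sub (aux3d x)) ?_
    simp
    try ring
  · intro x hx
    have h1 := aux2 x hx.le
    have h2 := Real.sinh_pos_iff.2 hx
    have h3 := Real.cosh_pos x
    have h4 : 0 ≤ x/3 * (x^2 * Real.sinh x - (x * Real.cosh x - Real.sinh x)) := by positivity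
    have h5 : 0 ≤ x^3 * Real.sinh x := by positivity
    have h6 : 0 ≤ x^4 * Real.cosh x := by positivity
    nlinarith

lemma aux5 (x : ℝ) (hx : 0 < x) :
    |x * Real.cosh x / Real.sinh x - (1 + x^2/3)| ≤ x^4 := by
  have h2 := Real.sinh_pos_iff.2 hx
  have h3 := aux3 x hx.le
  have h4 := aux4 x hx.le
  rw [abs_le]
  constructor
  · rw [le_sub_iff_add_le, le_div_iff₀ h2]; nlinarith
  · rw [sub_le_iff_le_add, div_le_iff₀ h2]
    have : 0 ≤ x^4 * Real.sinh x := by positivity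
    nlinarith

lemma aux6 (x : ℝ) (hx : x ≠ 0) :
    |x * Real.cosh x / Real.sinh x - (1 + x^2/3)| ≤ x^4 := by
  rcases lt_or_gt_of_ne hx with h | h
  · have := aux5 (-x) (by linarith)
    simpa [Even.neg_pow (show Even 4 by decide)] using this
  · exact aux5 x h

lemma auxK (K : ℝ → ℝ)
    (hK : ∀ ξ : ℝ, K ξ = if ξ = 0 then 1 / Real.pi
      else ξ * Real.cosh (Real.pi * ξ) / Real.sinh (Real.pi * ξ)) (ξ : ℝ) :
    |K ξ - (1 / Real.pi + Real.pi / 3 * ξ^2)| ≤ Real.pi^3 * ξ^4 := by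
  have hpi := Real.pi_pos
  rw [hK]
  split_ifs with h
  · simp [h]
  · have := aux6 (Real.pi * ξ) (by positivity)
    have e : ξ * Real.cosh (Real.pi * ξ) / Real.sinh (Real.pi * ξ) - (1 / Real.pi + Real.pi / 3 * ξ^2)
      = 1 / Real.pi * (Real.pi * ξ * Real.cosh (Real.pi * ξ) / Real.sinh (Real.pi * ξ) - (1 + (Real.pi * ξ)^2/3)) := by
      field_simp
    rw [e, abs_mul, abs_of_pos (by positivity)]
    calc _ ≤ 1 / Real.pi * (Real.pi * ξ)^4 := by gcongr
      _ = _ := by field_simp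

lemma auxInt (n : ℕ) (T : ℝ) (hT : 0 < T) :
    Integrable (fun ξ : ℝ => Real.exp (-T * ξ^2) * ξ^n) := by
  have := integrable_rpow_mul_exp_neg_mul_sq hT (s := n) (by have := n.cast_nonneg (α := ℝ); linarith)
  simpa [mul_comm] using this

lemma auxMom (n : ℕ) (hn : Even n) (T : ℝ) (hT : 0 < T) :
    ∫ ξ : ℝ, Real.exp (-T * ξ^2) * ξ^n = T ^ (-((n:ℝ)+1)/2) * Real.Gamma (((n:ℝ)+1)/2) := by
  have h1 := integral_comp_abs (f := fun ξ : ℝ => Real.exp (-T * ξ^2) * ξ^n)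
  simp only [sq_abs, hn.pow_abs] at h1
  rw [h1]
  have h2 := integral_rpow_mul_exp_neg_mul_rpow (p := 2) (q := n) (b := T) (by norm_num) (by have := n.cast_nonneg (α := ℝ); linarith) hT
  have h3 : ∫ ξ in Set.Ioi (0:ℝ), Real.exp (-T * ξ^2) * ξ^n = ∫ x in Set.Ioi (0:ℝ), x ^ (n:ℝ) * Real.exp (-T * x ^ (2:ℝ)) := by
    congr 1; ext x; norm_cast; ring
  rw [h3, h2]
  ring_nf

/-- Large-time asymptotics of `I(T) = ∫_ℝ e^{−Tξ²}·ξ·coth(πξ) dξ`: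
`I(T) = 1/√(πT) + (1/6)√(π³/T³) + O(T^{−5/2})` as `T → ∞`. -/
theorem stmt_11 (K : ℝ → ℝ)
    (hK : ∀ ξ : ℝ, K ξ = if ξ = 0 then 1 / Real.pi
      else ξ * Real.cosh (Real.pi * ξ) / Real.sinh (Real.pi * ξ)) :
    ∃ C > (0 : ℝ), ∃ T₀ > (0 : ℝ), ∀ T : ℝ, T₀ < T →
      |(∫ ξ : ℝ, Real.exp (-T * ξ ^ 2) * K ξ) - 1 / Real.sqrt (Real.pi * T) -
          (1 / 6) * Real.sqrt (Real.pi ^ 3 / T ^ 3)| ≤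
        C * T ^ (-(5 : ℝ) / 2) := by
  have hpi := Real.pi_pos
  have hKm : Measurable K := by
    rw [show K = _ from funext hK]
    refine Measurable.ite (measurableSet_singleton 0) measurable_const ?_
    fun_prop
  refine ⟨Real.pi^3 * Real.Gamma (5/2), mul_pos (by positivity) (Real.Gamma_pos_of_pos (by norm_num)), 1, one_pos, ?_⟩
  intro T hT1
  have hT : 0 < T := by linarith
  have i0 := auxInt 0 T hT
  have i2 := auxInt 2 T hT
  have i4 := auxInt 4 T hT
  have m0 := auxMom 0 (by decide) T hT
  have m2 := auxMom 2 (by decide) T hT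
  have m4 := auxMom 4 (by decide) T hT
  have iP : Integrable (fun ξ : ℝ => Real.exp (-T * ξ^2) * (1 / Real.pi + Real.pi / 3 * ξ^2)) := by
    refine Integrable.congr ((i0.const_mul (1/Real.pi)).add (i2.const_mul (Real.pi/3))) (Filter.Eventually.of_forall fun ξ => ?_)
    simp; ring
  have hb : ∀ ξ : ℝ, ‖Real.exp (-T * ξ^2) * (K ξ - (1 / Real.pi + Real.pi / 3 * ξ^2))‖ ≤
      Real.pi^3 * (Real.exp (-T * ξ^2) * ξ^4) := by
    intro ξ
    rw [norm_mul, Real.norm_eq_abs, Real.norm_eq_abs, abs_of_pos (Real.exp_pos _)]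
    have := mul_le_mul_of_nonneg_left (auxK K hK ξ) (Real.exp_pos (-T * ξ^2)).le
    linarith
  have iR : Integrable (fun ξ : ℝ => Real.exp (-T * ξ^2) * (K ξ - (1 / Real.pi + Real.pi / 3 * ξ^2))) :=
    (i4.const_mul (Real.pi^3)).mono' (by fun_prop) (Filter.Eventually.of_forall hb)
  have eP : ∫ ξ : ℝ, Real.exp (-T * ξ^2) * (1 / Real.pi + Real.pi / 3 * ξ^2) =
      1 / Real.sqrt (Real.pi * T) + (1 / 6) * Real.sqrt (Real.pi ^ 3 / T ^ 3) := by
    have : ∀ ξ : ℝ, Real.exp (-T * ξ^2) * (1 / Real.pi + Real.pi / 3 * ξ^2) =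
      1 / Real.pi * (Real.exp (-T * ξ^2) * ξ^0) + Real.pi / 3 * (Real.exp (-T * ξ^2) * ξ^2) := by
      intro ξ; ring
    simp_rw [this]
    rw [integral_add (i0.const_mul _) (i2.const_mul _), integral_const_mul, integral_const_mul, m0, m2]
    have g2 : Real.Gamma ((((2:ℕ):ℝ)+1)/2) = √Real.pi / 2 := by
      rw [show (((2:ℕ):ℝ)+1)/2 = 1/2 + 1 by norm_num, Real.Gamma_add_one (by norm_num), Real.Gamma_one_half_eq]
      ring
    have t0 : T ^ (-(((0:ℕ):ℝ)+1)/2) = 1 / √T := by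
      rw [show (-(((0:ℕ):ℝ)+1)/2) = -(1/2) by norm_num, Real.rpow_neg hT.le, Real.sqrt_eq_rpow, inv_eq_one_div]
    have t2 : T ^ (-(((2:ℕ):ℝ)+1)/2) = 1 / (T * √T) := by
      rw [show (-(((2:ℕ):ℝ)+1)/2) = -(1 + 1/2) by norm_num, Real.rpow_neg hT.le, Real.rpow_add hT, Real.rpow_one, Real.sqrt_eq_rpow, inv_eq_one_div]
    have s3 : ∀ x : ℝ, 0 < x → √(x^3) = x * √x := by
      intro x hx
      rw [show x^3 = x^2 * x by ring, Real.sqrt_mul (by positivity), Real.sqrt_sq hx.le]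
    rw [g2, t0, t2, Real.sqrt_div (by positivity), s3 _ hT, s3 _ hpi, Real.sqrt_mul hpi.le,
      show (((0:ℕ):ℝ)+1)/2 = 1/2 by norm_num, Real.Gamma_one_half_eq]
    have hs : √Real.pi * √Real.pi = Real.pi := Real.mul_self_sqrt hpi.le
    have e1 : 1 / Real.pi * (1 / √T * √Real.pi) = 1 / (√Real.pi * √T) := by
      have h1 : 0 < √Real.pi := by positivity
      have h2 : 0 < √T := by positivity
      field_simp
      nlinarith
    rw [e1]
    ring
  have eD : (∫ ξ : ℝ, Real.exp (-T * ξ ^ 2) * K ξ) = 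
      (∫ ξ : ℝ, Real.exp (-T * ξ^2) * (K ξ - (1 / Real.pi + Real.pi / 3 * ξ^2))) +
      ∫ ξ : ℝ, Real.exp (-T * ξ^2) * (1 / Real.pi + Real.pi / 3 * ξ^2) := by
    rw [← integral_add iR iP]
    congr 1; ext ξ; ring
  rw [eD, eP]
  have := norm_integral_le_of_norm_le (i4.const_mul (Real.pi^3)) (Filter.Eventually.of_forall hb)
  rw [integral_const_mul, m4, Real.norm_eq_abs] at this
  convert this using 1
  · congr 1; ring
  · norm_num; ring
end

section
/- Let α > 0 and suppose for every t ∈ [0,1] we are given a sequence (λ_j(t))_{j∈ℕ} of nonnegative reals such that for every λ ≥ 0 the set {j : λ_j(t) ≤ λ} is finite and Σ_{j=0}^∞ e^{−T·λ_j(t)} < ∞ for every T > 0. Set N_t(λ) := #{j : λ_j(t) ≤ λ}. If T·Σ_{j=0}^∞ e^{−T·λ_j(t)} → α as T → 0⁺ uniformly in t ∈ [0,1], then N_t(λ)/λ → α as λ → ∞ uniformly in t ∈ [0,1]. -/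
open Filter MeasureTheory

/-- The rescaled functional. -/
noncomputable def karL (lam : ℝ → ℕ → ℝ) (g : ℝ → ℝ) (q : ℝ × ℝ) : ℝ :=
  q.1 * ∑' j : ℕ, Real.exp (-q.1 * lam q.2 j) * g (Real.exp (-q.1 * lam q.2 j))

/-- The filter `T → 0⁺`, uniformly in `t`. -/
noncomputable def karF : Filter (ℝ × ℝ) :=
  nhdsWithin 0 (Set.Ioi 0) ×ˢ 𝓟 (Set.Icc (0:ℝ) 1)

/-- The step weight. -/
noncomputable def karH (x : ℝ) : ℝ := if Real.exp (-1) ≤ x then x⁻¹ else 0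

lemma karF_mem : ∀ᶠ q in karF, 0 < q.1 ∧ q.2 ∈ Set.Icc (0:ℝ) 1 := by
  unfold karF
  exact (eventually_mem_nhdsWithin (a := (0:ℝ)) (s := Set.Ioi 0)).prod_mk
    (eventually_principal.2 fun x hx => hx)

lemma kar_unif (F : ℝ → ℝ → ℝ) (α : ℝ) (p : Filter ℝ) (s : Set ℝ) :
    TendstoUniformlyOn F (fun _ => α) p s ↔
      Tendsto (fun q : ℝ × ℝ => F q.1 q.2) (p ×ˢ 𝓟 s) (nhds α) := by
  rw [tendstoUniformlyOn_iff_tendsto, Uniform.tendsto_nhds_right]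

lemma kar_mem {T l : ℝ} (hT : 0 < T) (hl : 0 ≤ l) :
    Real.exp (-T * l) ∈ Set.Icc (0:ℝ) 1 := by
  refine ⟨(Real.exp_pos _).le, ?_⟩
  rw [Real.exp_le_one_iff]
  nlinarith [mul_nonneg hT.le hl]

lemma kar_summable {f : ℕ → ℝ} (hf : ∀ j, f j ∈ Set.Icc (0:ℝ) 1) (hs : Summable f)
    {g : ℝ → ℝ} {C : ℝ} (hg : ∀ x ∈ Set.Icc (0:ℝ) 1, |g x| ≤ C) :
    Summable (fun j => f j * g (f j)) := by
  refine Summable.of_norm_bounded (hs.mul_right C) fun j => ?_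
  rw [Real.norm_eq_abs, abs_mul, abs_of_nonneg (hf j).1]
  exact mul_le_mul_of_nonneg_left (hg _ (hf j)) (hf j).1

lemma kar_bdd {g : ℝ → ℝ} (hg : Continuous g) : ∃ C, ∀ x ∈ Set.Icc (0:ℝ) 1, |g x| ≤ C :=
  isCompact_Icc.exists_bound_of_continuousOn (f := g) hg.continuousOn

lemma karH_bdd : ∀ x ∈ Set.Icc (0:ℝ) 1, |karH x| ≤ Real.exp 1 := by
  intro x hx
  unfold karH
  split_ifs with h
  · rw [abs_of_nonneg (inv_nonneg.2 hx.1)]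
    rw [inv_le_comm₀ (lt_of_lt_of_le (Real.exp_pos _) h) (Real.exp_pos _), ← Real.exp_neg]
    exact h
  · simp [(Real.exp_pos 1).le]

lemma kar_poly (α : ℝ) (lam : ℝ → ℕ → ℝ)
    (hnonneg : ∀ t ∈ Set.Icc (0 : ℝ) 1, ∀ j : ℕ, 0 ≤ lam t j)
    (hsum : ∀ t ∈ Set.Icc (0 : ℝ) 1, ∀ T : ℝ, 0 < T →
      Summable (fun j : ℕ => Real.exp (-T * lam t j)))
    (h : Tendsto (fun q : ℝ × ℝ => q.1 * ∑' j : ℕ, Real.exp (-q.1 * lam q.2 j)) karF (nhds α))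
    (P : Polynomial ℝ) :
    Tendsto (karL lam (fun x => P.eval x)) karF (nhds (α * ∫ x in (0:ℝ)..1, P.eval x)) := by
  induction P using Polynomial.induction_on' with
  | add p q hp hq =>
    have e : α * ∫ x in (0:ℝ)..1, (p + q).eval x
        = (α * ∫ x in (0:ℝ)..1, p.eval x) + α * ∫ x in (0:ℝ)..1, q.eval x := by
      simp only [Polynomial.eval_add]
      rw [intervalIntegral.integral_add (p.continuous.intervalIntegrable _ _)
        (q.continuous.intervalIntegrable _ _)]
      ring
    rw [e]
    refine (hp.add hq).congr' ?_
    filter_upwards [karF_mem] with z hz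
    obtain ⟨C, hC⟩ := kar_bdd p.continuous
    obtain ⟨D, hD⟩ := kar_bdd q.continuous
    have hm := fun j => kar_mem hz.1 (hnonneg z.2 hz.2 j)
    have hs := hsum z.2 hz.2 z.1 hz.1
    unfold karL
    rw [← mul_add, ← (kar_summable hm hs hC).tsum_add (kar_summable hm hs hD)]
    simp only [Polynomial.eval_add, mul_add]
  | monomial n a =>
    have e : α * ∫ x in (0:ℝ)..1, (Polynomial.monomial n a).eval x = (a / (n+1)) * α := by
      simp only [Polynomial.eval_monomial]
      rw [intervalIntegral.integral_const_mul, integral_pow]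
      simp
      ring
    rw [e]
    have hn : (0:ℝ) < n + 1 := by positivity
    have hc : Tendsto (fun q : ℝ × ℝ => (((n:ℝ)+1) * q.1, q.2)) karF karF := by
      unfold karF
      refine Tendsto.prodMap (f := fun T : ℝ => ((n:ℝ)+1) * T) (g := id) ?_ tendsto_id
      refine tendsto_nhdsWithin_iff.2 ⟨?_, ?_⟩
      · have : Tendsto (fun T : ℝ => ((n:ℝ)+1) * T) (nhds 0) (nhds (((n:ℝ)+1) * 0)) :=
          (continuous_const.mul continuous_id).tendsto _
        rw [mul_zero] at this
        exact this.mono_left nhdsWithin_le_nhds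
      · filter_upwards [eventually_mem_nhdsWithin] with T hT
        exact mul_pos hn hT
    refine ((h.comp hc).const_mul (a / (n+1))).congr' ?_
    filter_upwards [karF_mem] with z hz
    simp only [Function.comp, karL, Polynomial.eval_monomial]
    have : ∀ j, Real.exp (-z.1 * lam z.2 j) * (a * Real.exp (-z.1 * lam z.2 j) ^ n)
        = a * Real.exp (-(((n:ℝ)+1) * z.1) * lam z.2 j) := by
      intro j
      rw [← Real.exp_nat_mul, mul_left_comm, ← Real.exp_add]
      congr 2
      ring
    simp only [this]
    rw [tsum_mul_left]
    field_simp

lemma kar_cont (α : ℝ) (hα : 0 < α) (lam : ℝ → ℕ → ℝ)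
    (hnonneg : ∀ t ∈ Set.Icc (0 : ℝ) 1, ∀ j : ℕ, 0 ≤ lam t j)
    (hsum : ∀ t ∈ Set.Icc (0 : ℝ) 1, ∀ T : ℝ, 0 < T →
      Summable (fun j : ℕ => Real.exp (-T * lam t j)))
    (h : Tendsto (fun q : ℝ × ℝ => q.1 * ∑' j : ℕ, Real.exp (-q.1 * lam q.2 j)) karF (nhds α))
    (g : ℝ → ℝ) (hg : Continuous g) :
    Tendsto (karL lam g) karF (nhds (α * ∫ x in (0:ℝ)..1, g x)) := by
  rw [Metric.tendsto_nhds]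
  intro ε hε
  set δ := ε / (4 * α) with hδ
  have hδ0 : 0 < δ := by positivity
  have hδα : δ * α = ε / 4 := by rw [hδ]; field_simp
  obtain ⟨P, hP⟩ := exists_polynomial_near_of_continuousOn 0 1 g hg.continuousOn δ hδ0
  have hp := kar_poly α lam hnonneg hsum h P
  rw [Metric.tendsto_nhds] at hp
  have hI : |(∫ x in (0:ℝ)..1, P.eval x) - ∫ x in (0:ℝ)..1, g x| ≤ δ := by
    rw [← intervalIntegral.integral_sub (P.continuous.intervalIntegrable _ _)
      (hg.intervalIntegrable _ _)]
    have := intervalIntegral.norm_integral_le_of_norm_le_const (a := (0:ℝ)) (b := 1) (C := δ)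
      (f := fun x => P.eval x - g x) (fun x hx => by
        rw [Set.uIoc_of_le zero_le_one] at hx
        exact (hP x ⟨hx.1.le, hx.2⟩).le)
    simpa using this
  filter_upwards [karF_mem, hp (ε/4) (by positivity),
    h.eventually (gt_mem_nhds (show α < 2 * α by linarith))] with z hz h1 h2
  have hm := fun j => kar_mem hz.1 (hnonneg z.2 hz.2 j)
  have hs := hsum z.2 hz.2 z.1 hz.1
  obtain ⟨C, hC⟩ := kar_bdd P.continuous
  obtain ⟨D, hD⟩ := kar_bdd hg
  have h3 : |karL lam g z - karL lam (fun x => P.eval x) z| ≤ δ * (2 * α) := by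
    unfold karL
    rw [← mul_sub, ← (kar_summable hm hs hD).tsum_sub (kar_summable hm hs hC), abs_mul,
      abs_of_pos hz.1]
    have : |∑' j : ℕ, (Real.exp (-z.1 * lam z.2 j) * g (Real.exp (-z.1 * lam z.2 j)) -
        Real.exp (-z.1 * lam z.2 j) * P.eval (Real.exp (-z.1 * lam z.2 j)))| ≤
        ∑' j : ℕ, Real.exp (-z.1 * lam z.2 j) * δ := by
      rw [← Real.norm_eq_abs]
      refine tsum_of_norm_bounded (hs.mul_right δ).hasSum fun j => ?_
      rw [← mul_sub, Real.norm_eq_abs, abs_mul, abs_of_nonneg (hm j).1]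
      refine mul_le_mul_of_nonneg_left ?_ (hm j).1
      rw [abs_sub_comm]
      exact (hP _ (hm j)).le
    rw [tsum_mul_right] at this
    have h4 := mul_le_mul_of_nonneg_left this hz.1.le
    nlinarith
  have h5 : |α * (∫ x in (0:ℝ)..1, P.eval x) - α * ∫ x in (0:ℝ)..1, g x| ≤ α * δ := by
    rw [← mul_sub, abs_mul, abs_of_pos hα]
    exact mul_le_mul_of_nonneg_left hI hα.le
  rw [Real.dist_eq] at h1 ⊢
  rw [abs_lt] at *
  rw [abs_le] at *
  constructor <;> linarith [h1.1, h1.2, h3.1, h3.2, h5.1, h5.2]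

lemma kar_mono (lam : ℝ → ℕ → ℝ)
    (hnonneg : ∀ t ∈ Set.Icc (0 : ℝ) 1, ∀ j : ℕ, 0 ≤ lam t j)
    (hsum : ∀ t ∈ Set.Icc (0 : ℝ) 1, ∀ T : ℝ, 0 < T →
      Summable (fun j : ℕ => Real.exp (-T * lam t j)))
    {f g : ℝ → ℝ} {C D : ℝ} (hf : ∀ x ∈ Set.Icc (0:ℝ) 1, |f x| ≤ C)
    (hg : ∀ x ∈ Set.Icc (0:ℝ) 1, |g x| ≤ D) (hfg : ∀ x ∈ Set.Icc (0:ℝ) 1, f x ≤ g x)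
    (z : ℝ × ℝ) (hz : 0 < z.1 ∧ z.2 ∈ Set.Icc (0:ℝ) 1) : karL lam f z ≤ karL lam g z := by
  have hm := fun j => kar_mem hz.1 (hnonneg z.2 hz.2 j)
  have hs := hsum z.2 hz.2 z.1 hz.1
  unfold karL
  refine mul_le_mul_of_nonneg_left ?_ hz.1.le
  exact (kar_summable hm hs hf).tsum_le_tsum
    (fun j => mul_le_mul_of_nonneg_left (hfg _ (hm j)) (hm j).1) (kar_summable hm hs hg)

/-- continuous approximants -/
noncomputable def karG (a d x : ℝ) : ℝ :=
  (max x (Real.exp (-1)))⁻¹ * max 0 (min 1 ((x - a) / d))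

lemma karG_cont (a d : ℝ) : Continuous (karG a d) := by
  unfold karG
  refine Continuous.mul (Continuous.inv₀ (by fun_prop) fun x => ?_) (by fun_prop)
  exact (lt_of_lt_of_le (Real.exp_pos _) (le_max_right _ _)).ne'

lemma karG_nonneg (a d x : ℝ) : 0 ≤ karG a d x := by
  unfold karG
  have := (lt_of_lt_of_le (Real.exp_pos (-1)) (le_max_right x _))
  positivity

lemma karG_le (a d x : ℝ) : karG a d x ≤ (max x (Real.exp (-1)))⁻¹ := by
  unfold karG
  have := (lt_of_lt_of_le (Real.exp_pos (-1)) (le_max_right x _))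
  exact mul_le_of_le_one_right (by positivity) (max_le zero_le_one (min_le_left _ _))

lemma karG_zero {a d x : ℝ} (hd : 0 < d) (hx : x ≤ a) : karG a d x = 0 := by
  unfold karG
  have : (x - a) / d ≤ 0 := div_nonpos_of_nonpos_of_nonneg (by linarith) hd.le
  rw [max_eq_left ((min_le_right _ _).trans this), mul_zero]

lemma karG_one {a d x : ℝ} (hd : 0 < d) (hx : a + d ≤ x) (hc : Real.exp (-1) ≤ x) :
    karG a d x = x⁻¹ := by
  unfold karG
  have : 1 ≤ (x - a) / d := by rw [le_div_iff₀ hd]; linarith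
  rw [min_eq_left this, max_eq_right zero_le_one, mul_one, max_eq_left hc]

lemma kar_lower (r : ℝ) (hr : r < 1) : ∃ g : ℝ → ℝ, Continuous g ∧
    (∀ x ∈ Set.Icc (0:ℝ) 1, g x ≤ karH x) ∧ r < ∫ x in (0:ℝ)..1, g x := by
  have hc := Real.exp_pos (-1)
  have hc1 : Real.exp (-1) < 1 := by rw [Real.exp_lt_one_iff]; norm_num
  -- choose b slightly above exp (-1)
  obtain ⟨b, hb1, hb2, hb3⟩ : ∃ b, Real.exp (-1) < b ∧ b < 1 ∧ r < - Real.log b := by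
    refine ⟨Real.exp (-(max ((r+1)/2) (1/2))), ?_, ?_, ?_⟩
    · rw [Real.exp_lt_exp, neg_lt_neg_iff, max_lt_iff]; constructor <;> linarith
    · rw [Real.exp_lt_one_iff, neg_lt_zero]; exact lt_of_lt_of_le (by norm_num) (le_max_right _ _)
    · rw [Real.log_exp, neg_neg]; exact lt_of_lt_of_le (by linarith) (le_max_left _ _)
  have hd : 0 < b - Real.exp (-1) := by linarith
  refine ⟨karG (Real.exp (-1)) (b - Real.exp (-1)), karG_cont _ _, ?_, ?_⟩
  · intro x hx
    unfold karH
    split_ifs with h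
    · exact (karG_le _ _ _).trans_eq (by rw [max_eq_left h])
    · exact (karG_zero hd (not_le.1 h).le).le
  · refine hb3.trans_le ?_
    have hi := fun u v => (karG_cont (Real.exp (-1)) (b - Real.exp (-1))).intervalIntegrable
      (μ := volume) u v
    rw [← intervalIntegral.integral_add_adjacent_intervals (hi 0 b) (hi b 1)]
    have h0 : 0 ≤ ∫ x in (0:ℝ)..b, karG (Real.exp (-1)) (b - Real.exp (-1)) x :=
      intervalIntegral.integral_nonneg (by linarith) fun x _ => karG_nonneg _ _ _
    have h1 : ∫ x in b..1, karG (Real.exp (-1)) (b - Real.exp (-1)) x = - Real.log b := by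
      rw [intervalIntegral.integral_congr (g := fun x => x⁻¹)]
      · rw [integral_inv_of_pos (by linarith) one_pos, one_div, Real.log_inv]
      · intro x hx
        rw [Set.uIcc_of_le hb2.le] at hx
        exact karG_one hd (by linarith [hx.1]) (by linarith [hx.1])
    linarith

lemma kar_upper (r : ℝ) (hr : 1 < r) : ∃ g : ℝ → ℝ, Continuous g ∧
    (∀ x ∈ Set.Icc (0:ℝ) 1, karH x ≤ g x) ∧ ∫ x in (0:ℝ)..1, g x < r := by
  have hc := Real.exp_pos (-1)
  have hc1 : Real.exp (-1) < 1 := by rw [Real.exp_lt_one_iff]; norm_num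
  obtain ⟨d, hd, hd1, hd2⟩ : ∃ d, 0 < d ∧ d ≤ Real.exp (-1) ∧ d * Real.exp 1 < r - 1 := by
    refine ⟨min (Real.exp (-1)) ((r-1)/2 * Real.exp (-1)), ?_, min_le_left _ _, ?_⟩
    · exact lt_min hc (mul_pos (by linarith) hc)
    · have := mul_le_mul_of_nonneg_right
        (min_le_right (Real.exp (-1)) ((r-1)/2 * Real.exp (-1))) (Real.exp_pos 1).le
      rw [mul_assoc, ← Real.exp_add] at this
      norm_num at this
      linarith
  set c := Real.exp (-1) with hcdef
  refine ⟨karG (c - d) d, karG_cont _ _, ?_, ?_⟩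
  · intro x hx
    unfold karH
    split_ifs with h
    · exact (karG_one hd (by linarith) h).ge
    · exact karG_nonneg _ _ _
  · have hi := fun u v => (karG_cont (c - d) d).intervalIntegrable (μ := volume) u v
    rw [← intervalIntegral.integral_add_adjacent_intervals (hi 0 c) (hi c 1),
      ← intervalIntegral.integral_add_adjacent_intervals (hi 0 (c-d)) (hi (c-d) c)]
    have h0 : ∫ x in (0:ℝ)..(c-d), karG (c - d) d x = 0 := by
      rw [intervalIntegral.integral_congr (g := fun x => 0)]
      · simp
      · intro x hx
        rw [Set.uIcc_of_le (by linarith)] at hx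
        exact karG_zero hd hx.2
    have h1 : ∫ x in c..1, karG (c - d) d x = 1 := by
      rw [intervalIntegral.integral_congr (g := fun x => x⁻¹)]
      · rw [integral_inv_of_pos (by linarith) one_pos, one_div, Real.log_inv, hcdef, Real.log_exp]
        norm_num
      · intro x hx
        rw [Set.uIcc_of_le hc1.le] at hx
        exact karG_one hd (by linarith [hx.1]) hx.1
    have h2 : ∫ x in (c-d)..c, karG (c - d) d x ≤ d * Real.exp 1 := by
      have := intervalIntegral.integral_mono_on (a := c - d) (b := c) (by linarith)
        (hi (c-d) c) (intervalIntegrable_const (c := Real.exp 1)) (fun x hx => by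
          refine (karG_le _ _ _).trans ?_
          rw [max_eq_right hx.2, ← Real.exp_neg, neg_neg])
      simpa using this
    linarith

lemma kar_count (lam : ℝ → ℕ → ℝ)
    (hfin : ∀ t ∈ Set.Icc (0 : ℝ) 1, ∀ Λ : ℝ, 0 ≤ Λ → {j : ℕ | lam t j ≤ Λ}.Finite)
    (L t : ℝ) (hL : 0 < L) (ht : t ∈ Set.Icc (0:ℝ) 1) :
    karL lam karH (L⁻¹, t) = (Nat.card {j : ℕ | lam t j ≤ L} : ℝ) / L := by
  have hf := hfin t ht L hL.le
  unfold karL karH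
  have : ∀ j, Real.exp (-L⁻¹ * lam t j) * (if Real.exp (-1) ≤ Real.exp (-L⁻¹ * lam t j)
      then (Real.exp (-L⁻¹ * lam t j))⁻¹ else 0) = if j ∈ hf.toFinset then 1 else 0 := by
    intro j
    have e : Real.exp (-1) ≤ Real.exp (-L⁻¹ * lam t j) ↔ j ∈ hf.toFinset := by
      rw [Real.exp_le_exp, Set.Finite.mem_toFinset, Set.mem_ofPred_eq, neg_mul, neg_le_neg_iff,
        inv_mul_le_iff₀ hL, mul_one]
    simp only [e]
    split_ifs
    · exact mul_inv_cancel₀ (Real.exp_pos _).ne'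
    · simp
  simp only [this]
  rw [tsum_eq_sum (s := hf.toFinset) (fun j hj => by simp [hj])]
  rw [Finset.sum_ite_mem, Finset.inter_self, Finset.sum_const, nsmul_eq_mul, mul_one,
    Nat.card_coe_set_eq, Set.ncard_eq_toFinset_card _ hf, div_eq_inv_mul]

/-- Uniform Karamata-type Tauberian theorem: if for a family of nonnegative eigenvalue
sequences `λ_j(t)`, `t ∈ [0,1]`, the rescaled heat traces `T·Σ_j e^{−Tλ_j(t)}` converge
to `α` as `T → 0⁺` uniformly in `t`, then the counting functions satisfy
`N_t(λ)/λ → α` as `λ → ∞` uniformly in `t`. -/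
theorem stmt_12 (α : ℝ) (hα : 0 < α) (lam : ℝ → ℕ → ℝ)
    (hnonneg : ∀ t ∈ Set.Icc (0 : ℝ) 1, ∀ j : ℕ, 0 ≤ lam t j)
    (hfin : ∀ t ∈ Set.Icc (0 : ℝ) 1, ∀ Λ : ℝ, 0 ≤ Λ → {j : ℕ | lam t j ≤ Λ}.Finite)
    (hsum : ∀ t ∈ Set.Icc (0 : ℝ) 1, ∀ T : ℝ, 0 < T →
      Summable (fun j : ℕ => Real.exp (-T * lam t j)))
    (hunif : TendstoUniformlyOn
      (fun T : ℝ => fun t : ℝ => T * ∑' j : ℕ, Real.exp (-T * lam t j))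
      (fun _ => α) (nhdsWithin 0 (Set.Ioi 0)) (Set.Icc 0 1)) :
    TendstoUniformlyOn
      (fun Λ : ℝ => fun t : ℝ => (Nat.card {j : ℕ | lam t j ≤ Λ} : ℝ) / Λ)
      (fun _ => α) atTop (Set.Icc 0 1) := by
  rw [kar_unif] at hunif ⊢
  have key : Tendsto (karL lam karH) karF (nhds α) := by
    rw [tendsto_order]
    constructor
    · intro a ha
      obtain ⟨g, hg, hgh, hgi⟩ := kar_lower (a / α) (by rwa [div_lt_one hα])
      rw [div_lt_iff₀' hα] at hgi
      obtain ⟨C, hC⟩ := kar_bdd hg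
      filter_upwards [karF_mem, (kar_cont α hα lam hnonneg hsum hunif g hg).eventually
        (lt_mem_nhds hgi)] with z hz h1
      exact h1.trans_le (kar_mono lam hnonneg hsum hC karH_bdd hgh z hz)
    · intro a ha
      obtain ⟨g, hg, hgh, hgi⟩ := kar_upper (a / α) (by rwa [one_lt_div hα])
      rw [lt_div_iff₀' hα] at hgi
      obtain ⟨C, hC⟩ := kar_bdd hg
      filter_upwards [karF_mem, (kar_cont α hα lam hnonneg hsum hunif g hg).eventually
        (gt_mem_nhds hgi)] with z hz h1
      exact (kar_mono lam hnonneg hsum karH_bdd hC hgh z hz).trans_lt h1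
  have hc : Tendsto (fun q : ℝ × ℝ => (q.1⁻¹, q.2)) (atTop ×ˢ 𝓟 (Set.Icc (0:ℝ) 1)) karF :=
    Tendsto.prodMap (f := fun T : ℝ => T⁻¹) (g := id) tendsto_inv_atTop_nhdsGT_zero tendsto_id
  refine (key.comp hc).congr' ?_
  have hev : ∀ᶠ q in (atTop : Filter ℝ) ×ˢ 𝓟 (Set.Icc (0:ℝ) 1),
      0 < q.1 ∧ q.2 ∈ Set.Icc (0:ℝ) 1 :=
    (eventually_gt_atTop (0:ℝ)).prod_mk (eventually_principal.2 fun x hx => hx)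
  filter_upwards [hev] with q hq
  exact kar_count lam hfin q.1 q.2 hq.1 hq.2
end

section
/- For every s ∈ ℂ with Re(s) > 1, the infinite product ∏_{k=0}^∞ (1 + e^{−(s+k)ℓ})² converges absolutely for every ℓ > 0, and lim_{ℓ→0⁺} e^{−π²/(6ℓ)} · ∏_{k=0}^∞ (1 + e^{−(s+k)ℓ})² = 2^{1−2s}, where 2^{1−2s} := exp((1−2s)·log 2). -/
open Filter

noncomputable def phiT (n : ℕ) (z : ℂ) : ℂ := (-1) ^ (n + 1) * Complex.exp (-z) ^ n / (n : ℂ) ^ 2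

noncomputable def PhiS (z : ℂ) : ℂ := ∑' n : ℕ, phiT n z

noncomputable def fS (z : ℂ) : ℂ := Complex.log (1 + Complex.exp (-z))

lemma u_summable : Summable (fun n : ℕ => 1 / (n : ℝ) ^ 2) := hasSum_zeta_two.summable

lemma norm_exp_neg_le {z : ℂ} (hz : 0 ≤ z.re) : ‖Complex.exp (-z)‖ ≤ 1 := by
  rw [Complex.norm_exp]; simpa using hz

lemma norm_exp_neg_lt {z : ℂ} (hz : 0 < z.re) : ‖Complex.exp (-z)‖ < 1 := by
  rw [Complex.norm_exp]; simpa using hz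

lemma phiT_norm (n : ℕ) (z : ℂ) : ‖phiT n z‖ = ‖Complex.exp (-z)‖ ^ n / (n : ℝ) ^ 2 := by
  simp [phiT]

lemma phiT_le (n : ℕ) {z : ℂ} (hz : 0 ≤ z.re) : ‖phiT n z‖ ≤ 1 / (n : ℝ) ^ 2 := by
  rw [phiT_norm]
  gcongr
  exact pow_le_one₀ (norm_nonneg _) (norm_exp_neg_le hz)

lemma phiT_le' (n : ℕ) {z : ℂ} (hz : 0 ≤ z.re) :
    ‖phiT n z‖ ≤ ‖Complex.exp (-z)‖ * (1 / (n : ℝ) ^ 2) := by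
  rw [phiT_norm]
  rcases Nat.eq_zero_or_pos n with rfl | hn
  · simp
  rw [mul_one_div]
  gcongr
  exact pow_le_of_le_one (norm_nonneg _) (norm_exp_neg_le hz) hn.ne'

lemma PhiS_le {z : ℂ} (hz : 0 ≤ z.re) :
    ‖PhiS z‖ ≤ ‖Complex.exp (-z)‖ * (Real.pi ^ 2 / 6) :=
  tsum_of_norm_bounded (hasSum_zeta_two.mul_left _) (fun n => phiT_le' n hz)

lemma phiT_deriv (n : ℕ) (z : ℂ) :
    HasDerivAt (phiT n) (-((-1) ^ (n + 1) * Complex.exp (-z) ^ n / (n : ℂ))) z := by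
  have h := ((((hasDerivAt_id z).neg.cexp).pow n).const_mul ((-1 : ℂ) ^ (n + 1))).div_const ((n : ℂ) ^ 2)
  refine (h.congr_deriv ?_)
  rcases Nat.eq_zero_or_pos n with rfl | hn
  · simp
  obtain ⟨m, rfl⟩ : ∃ m, n = m + 1 := ⟨n - 1, by omega⟩
  have : ((m + 1 : ℕ) : ℂ) ≠ 0 := by exact_mod_cast hn.ne'
  simp only [Nat.add_sub_cancel]
  field_simp
  simp [pow_succ]
  

lemma PhiS_cont : ContinuousOn PhiS {z | 0 ≤ z.re} :=
  continuousOn_tsum (u := fun n : ℕ => 1 / (n : ℝ) ^ 2)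
    (fun n z _ => (phiT_deriv n z).continuousAt.continuousWithinAt)
    u_summable (fun n _ hx => phiT_le n hx)

lemma PhiS_deriv {z : ℂ} (hz : 0 < z.re) : HasDerivAt PhiS (-fS z) z := by
  have ho : IsOpen {z : ℂ | 0 < z.re} := isOpen_lt continuous_const Complex.continuous_re
  have hd : ∀ n, DifferentiableOn ℂ (phiT n) {z : ℂ | 0 < z.re} :=
    fun n z _ => (phiT_deriv n z).differentiableAt.differentiableWithinAt
  have hb : ∀ n : ℕ, ∀ w ∈ {z : ℂ | 0 < z.re}, ‖phiT n w‖ ≤ 1 / (n : ℝ) ^ 2 :=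
    fun n w hw => phiT_le n (le_of_lt hw)
  have h1 := Complex.hasSum_deriv_of_summable_norm u_summable hd ho hb hz
  have h2 : DifferentiableAt ℂ PhiS z :=
    (Complex.differentiableOn_tsum_of_summable_norm u_summable hd ho hb).differentiableAt
      (ho.mem_nhds hz)
  have h3 := (Complex.hasSum_taylorSeries_log (norm_exp_neg_lt hz)).neg
  have h4 : (fun n => deriv (phiT n) z) =
      fun n : ℕ => -((-1) ^ (n + 1) * Complex.exp (-z) ^ n / (n : ℂ)) :=
    funext fun n => (phiT_deriv n z).deriv
  rw [h4] at h1
  have h5 : deriv PhiS z = -fS z := h1.unique h3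
  rw [← h5]
  exact h2.hasDerivAt

lemma PhiS_zero : PhiS 0 = (Real.pi ^ 2 / 12 : ℝ) := by
  have hz := hasSum_zeta_two
  have he : HasSum (fun k : ℕ => 1 / ((2 * k : ℕ) : ℝ) ^ 2) (Real.pi ^ 2 / 24) := by
    have := hz.mul_left (1 / 4)
    rw [show 1 / 4 * (Real.pi ^ 2 / 6) = Real.pi ^ 2 / 24 by ring] at this
    refine this.congr_fun fun k => ?_
    push_cast; rw [mul_pow]; rw [one_div, one_div, one_div, mul_inv]; norm_num
  have hsum : Summable (fun k : ℕ => 1 / ((2 * k + 1 : ℕ) : ℝ) ^ 2) :=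
    u_summable.comp_injective (i := fun k : ℕ => 2 * k + 1) (fun a b h => by simpa using h)
  obtain ⟨m, hm⟩ := hsum
  have h1 := (HasSum.even_add_odd (f := fun n : ℕ => 1 / (n : ℝ) ^ 2) he hm).unique hz
  have h2 : HasSum (fun n : ℕ => (-1 : ℝ) ^ (n + 1) / (n : ℝ) ^ 2) (-(Real.pi ^ 2 / 24) + m) := by
    apply HasSum.even_add_odd
    · refine he.neg.congr_fun fun k => ?_
      rw [pow_succ, pow_mul]; simp [neg_div]
    · refine hm.congr_fun fun k => ?_
      rw [pow_succ, pow_succ, pow_mul]; simp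
  have h3 : -(Real.pi ^ 2 / 24) + m = Real.pi ^ 2 / 12 := by linarith
  rw [h3] at h2
  have h4 := Complex.hasSum_ofReal.mpr h2
  rw [← h4.tsum_eq, PhiS]
  congr 1; ext n
  simp [phiT]

lemma one_le_norm {z : ℂ} (hz : |z.im| ≤ Real.pi / 2) :
    1 ≤ (1 + Complex.exp (-z)).re := by
  have : 0 ≤ Real.cos z.im := Real.cos_nonneg_of_mem_Icc ⟨by linarith [(abs_le.mp hz).1], (abs_le.mp hz).2⟩
  simp [Complex.exp_re]
  positivity

noncomputable def fS1 (z : ℂ) : ℂ := - Complex.exp (-z) / (1 + Complex.exp (-z))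
noncomputable def fS2 (z : ℂ) : ℂ := Complex.exp (-z) / (1 + Complex.exp (-z)) ^ 2

lemma exp_deriv (z : ℂ) : HasDerivAt (fun z : ℂ => Complex.exp (-z)) (-Complex.exp (-z)) z := by
  simpa using (hasDerivAt_id z).neg.cexp

lemma fS_deriv {z : ℂ} (hz : |z.im| ≤ Real.pi / 2) : HasDerivAt fS (fS1 z) z := by
  exact ((exp_deriv z).const_add 1).clog (Or.inl (by linarith [one_le_norm hz]))

lemma ne_zero_of {z : ℂ} (hz : |z.im| ≤ Real.pi / 2) : 1 + Complex.exp (-z) ≠ 0 := by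
  intro h; have := one_le_norm hz; rw [h] at this; simp at this; linarith

lemma fS1_deriv {z : ℂ} (hz : |z.im| ≤ Real.pi / 2) : HasDerivAt fS1 (fS2 z) z := by
  have hne := ne_zero_of hz
  refine ((exp_deriv z).neg.div ((exp_deriv z).const_add 1) hne).congr_deriv ?_
  rw [fS2]
  congr 1
  simp only [Pi.neg_apply]
  ring

lemma fS2_le {z : ℂ} (hz : |z.im| ≤ Real.pi / 2) : ‖fS2 z‖ ≤ Real.exp (-z.re) := by
  have h1 : 1 ≤ ‖1 + Complex.exp (-z)‖ := (one_le_norm hz).trans (Complex.re_le_norm _)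
  rw [fS2, norm_div, norm_pow, Complex.norm_exp]
  exact div_le_self (Real.exp_pos _).le (one_le_pow₀ h1)

lemma trap {a : ℂ} (ha : 0 < a.re) (hz : |a.im| ≤ Real.pi / 2) {l : ℝ} (hl : 0 ≤ l) :
    ‖PhiS a - PhiS (a + l) - l * (fS a + fS (a + l)) / 2‖ ≤ Real.exp (-a.re) * l ^ 3 / 12 := by
  have im (t : ℝ) : |(a + t).im| ≤ Real.pi / 2 := by simpa using hz
  have re {t : ℝ} (ht : 0 ≤ t) : 0 < (a + t).re := by simp; linarith
  have d0 {t : ℝ} (ht : 0 ≤ t) : HasDerivAt (fun t : ℝ => PhiS (a + t)) (-fS (a + t)) t :=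
    ((PhiS_deriv (re ht)).comp_const_add a _).comp_ofReal
  have d1 (t : ℝ) : HasDerivAt (fun t : ℝ => fS (a + t)) (fS1 (a + t)) t :=
    ((fS_deriv (im t)).comp_const_add a _).comp_ofReal
  have d2 (t : ℝ) : HasDerivAt (fun t : ℝ => fS1 (a + t)) (fS2 (a + t)) t :=
    ((fS1_deriv (im t)).comp_const_add a _).comp_ofReal
  have di (t : ℝ) : HasDerivAt (fun t : ℝ => (t : ℂ)) 1 t := Complex.ofRealCLM.hasDerivAt
  have dH (t : ℝ) : HasDerivAt (fun t : ℝ => (fS (a + t) - fS a - t * fS1 (a + t)) / 2)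
      (-(t * fS2 (a + t)) / 2) t := by
    refine ((((d1 t).sub_const (fS a)).sub ((di t).mul (d2 t))).div_const 2).congr_deriv ?_
    ring
  have dE {t : ℝ} (ht : 0 ≤ t) :
      HasDerivAt (fun t : ℝ => PhiS a - PhiS (a + t) - t * (fS a + fS (a + t)) / 2)
      ((fS (a + t) - fS a - t * fS1 (a + t)) / 2) t := by
    refine (((d0 ht).const_sub (PhiS a)).sub (((di t).mul ((d1 t).const_add (fS a))).div_const 2)).congr_deriv ?_
    ring
  have b2 {t : ℝ} (ht : 0 ≤ t) : ‖fS2 (a + t)‖ ≤ Real.exp (-a.re) := by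
    refine (fS2_le (im t)).trans (Real.exp_le_exp.mpr ?_)
    simp; linarith
  have bH : ∀ t ∈ Set.Icc 0 l, ‖(fS (a + t) - fS a - t * fS1 (a + t)) / 2‖ ≤
      Real.exp (-a.re) * t ^ 2 / 4 := by
    refine image_norm_le_of_norm_deriv_right_le_deriv_boundary
      (B := fun t => Real.exp (-a.re) * t ^ 2 / 4) (B' := fun t => Real.exp (-a.re) * t / 2)
      (fun t _ => (dH t).continuousAt.continuousWithinAt) (fun t _ => (dH t).hasDerivWithinAt)
      (by simp) ?_ ?_
    · intro t
      refine (((hasDerivAt_pow 2 t).const_mul (Real.exp (-a.re))).div_const 4).congr_deriv ?_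
      simp; ring
    · intro t ht
      have := b2 ht.1
      rw [norm_div, norm_neg, norm_mul, Complex.norm_real, Real.norm_of_nonneg ht.1]
      simp only [Complex.norm_ofNat]
      have := mul_le_mul_of_nonneg_left this ht.1
      linarith
  refine image_norm_le_of_norm_deriv_right_le_deriv_boundary
      (f := fun t : ℝ => PhiS a - PhiS (a + t) - t * (fS a + fS (a + t)) / 2)
      (B := fun t => Real.exp (-a.re) * t ^ 3 / 12) (B' := fun t => Real.exp (-a.re) * t ^ 2 / 4)
      (fun t ht => (dE ht.1).continuousAt.continuousWithinAt) (fun t ht => (dE ht.1).hasDerivWithinAt)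
      (by simp) ?_ (fun t ht => bH t ⟨ht.1, ht.2.le⟩) (Set.right_mem_Icc.mpr hl)
  intro t
  refine (((hasDerivAt_pow 3 t).const_mul (Real.exp (-a.re))).div_const 12).congr_deriv ?_
  simp; ring

lemma summable_exp (s : ℂ) {l : ℝ} (hl : 0 < l) :
    Summable (fun k : ℕ => Complex.exp (-((s + k) * l))) := by
  have h : Summable (fun k : ℕ => Complex.exp (-(s * l)) * Complex.exp (-l) ^ k) :=
    (summable_geometric_of_norm_lt_one (norm_exp_neg_lt (by simpa using hl))).mul_left _
  refine h.congr fun k => ?_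
  rw [← Complex.exp_nat_mul, ← Complex.exp_add]; congr 1; ring

lemma summable_fS (s : ℂ) {l : ℝ} (hl : 0 < l) :
    Summable (fun k : ℕ => fS ((s + k) * l)) :=
  Complex.summable_log_one_add_of_summable (summable_exp s hl)

lemma main_bound {s : ℂ} (hs : 1 < s.re) {l : ℝ} (hl : 0 < l) (hi : |s.im * l| ≤ Real.pi / 2) :
    ‖PhiS (s * l) + l / 2 * fS (s * l) - l * ∑' k : ℕ, fS ((s + k) * l)‖ ≤ l ^ 2 * (1 + l) := by
  have hf := summable_fS s hl
  have hre (k : ℕ) : ((s + k) * l).re = (s.re + k) * l := by simp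
  have him (k : ℕ) : |((s + k) * l).im| ≤ Real.pi / 2 := by simpa using hi
  have hpos (k : ℕ) : 0 < ((s + k) * l).re := by rw [hre]; positivity
  set P : ℕ → ℂ := fun k => PhiS ((s + k) * l) + l / 2 * fS ((s + k) * l) with hP
  have step (k : ℕ) : ‖(P k - P (k + 1)) - l * fS ((s + k) * l)‖ ≤ l ^ 3 * Real.exp (-l) ^ k := by
    have h := trap (hpos k) (him k) hl.le
    have e : (s + k) * l + l = (s + (k + 1 : ℕ)) * (l : ℂ) := by push_cast; ring
    rw [e] at h
    have e2 : (P k - P (k + 1)) - l * fS ((s + k) * l) =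
        PhiS ((s + k) * l) - PhiS ((s + (k + 1 : ℕ)) * l)
          - l * (fS ((s + k) * l) + fS ((s + (k + 1 : ℕ)) * l)) / 2 := by
      simp only [hP]; ring
    rw [e2]
    refine h.trans ?_
    rw [hre, ← Real.exp_nat_mul]
    have : Real.exp (-((s.re + k) * l)) ≤ Real.exp (k * -l) := by
      apply Real.exp_le_exp.mpr; nlinarith
    have h3 : 0 ≤ l ^ 3 := by positivity
    have := mul_le_mul_of_nonneg_left this h3
    have : 0 ≤ l ^ 3 * Real.exp (-((s.re + k) * l)) := by positivity
    linarith
  have hr0 : 0 ≤ Real.exp (-l) := (Real.exp_pos _).le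
  have hr1 : Real.exp (-l) < 1 := by simpa using hl
  have hgeo : l ^ 3 * (1 - Real.exp (-l))⁻¹ ≤ l ^ 2 * (1 + l) := by
    have h1 : l ≤ (1 + l) * (1 - Real.exp (-l)) := by
      have := Real.add_one_le_exp l
      have h2 : Real.exp l * Real.exp (-l) = 1 := by rw [← Real.exp_add]; simp
      nlinarith
    rw [← div_eq_mul_inv, div_le_iff₀ (by linarith)]
    have := mul_le_mul_of_nonneg_left h1 (sq_nonneg l)
    linarith
  have fin (N : ℕ) : ‖(P 0 - P N) - l * ∑ k ∈ Finset.range N, fS ((s + k) * l)‖ ≤ l ^ 2 * (1 + l) := by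
    rw [← Finset.sum_range_sub', Finset.mul_sum, ← Finset.sum_sub_distrib]
    refine (norm_sum_le_of_le _ (fun k _ => step k)).trans (le_trans ?_ hgeo)
    rw [← Finset.mul_sum]
    gcongr
    rw [← tsum_geometric_of_lt_one hr0 hr1]
    exact (summable_geometric_of_lt_one hr0 hr1).sum_le_tsum _ (fun k _ => by positivity)
  have hPlim : Tendsto P atTop (nhds 0) := by
    have h1 : Tendsto (fun k : ℕ => PhiS ((s + k) * l)) atTop (nhds 0) := by
      refine squeeze_zero_norm (fun k => PhiS_le (hpos k).le) ?_
      simpa using (summable_exp s hl).tendsto_atTop_zero.norm.mul_const (Real.pi ^ 2 / 6)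
    simpa using h1.add (hf.tendsto_atTop_zero.const_mul ((l : ℂ) / 2))
  have hlim := (((tendsto_const_nhds (x := P 0)).sub hPlim).sub
    (hf.hasSum.tendsto_sum_nat.const_mul (l : ℂ))).norm
  have := le_of_tendsto' hlim fin
  simpa [hP] using this

lemma fS_tendsto (s : ℂ) : Tendsto (fun l : ℝ => fS (s * l)) (nhdsWithin 0 (Set.Ioi 0))
    (nhds (Real.log 2 : ℂ)) := by
  have h0 : fS 0 = (Real.log 2 : ℂ) := by
    rw [fS, Complex.ofReal_log (by norm_num)]; norm_num
  have hc : ContinuousAt (fun l : ℝ => fS (s * l)) 0 := by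
    have h := (fS_deriv (z := 0) (by simp; positivity)).continuousAt
    refine ContinuousAt.comp (g := fS) (f := fun l : ℝ => s * l) (by simpa using h) ?_
    fun_prop
  have := hc.tendsto
  simp only [Complex.ofReal_zero, mul_zero, h0] at this
  exact this.mono_left nhdsWithin_le_nhds

lemma Phi_slope {s : ℂ} (hs : 1 < s.re) :
    Tendsto (fun l : ℝ => (PhiS (s * l) - PhiS 0) / l) (nhdsWithin 0 (Set.Ioi 0))
      (nhds (-(s * (Real.log 2 : ℂ)))) := by
  have hd {t : ℝ} (ht : 0 < t) : HasDerivAt (fun l : ℝ => PhiS (s * l)) (-(s * fS (s * t))) t := by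
    have hre : 0 < (s * (t : ℂ)).re := by simp; positivity
    have h1 : HasDerivAt (fun w : ℂ => s * w) s (t : ℂ) := by
      simpa using (hasDerivAt_id (t : ℂ)).const_mul s
    have h2 := ((PhiS_deriv hre).comp (t : ℂ) h1).comp_ofReal
    exact h2.congr_deriv (by ring)
  have hc : ContinuousWithinAt (fun l : ℝ => PhiS (s * l)) (Set.Ioi 0) 0 := by
    have h := PhiS_cont (s * (0 : ℝ)) (by simp)
    refine ContinuousWithinAt.comp (f := fun l : ℝ => s * l) h (by fun_prop) ?_
    intro t ht
    have : 0 < t := ht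
    simp; positivity
  have := hasDerivWithinAt_Ici_of_tendsto_deriv (s := Set.Ioi 0) (e := -(s * (Real.log 2 : ℂ)))
    (fun t ht => (hd ht).differentiableAt.differentiableWithinAt) hc self_mem_nhdsWithin
    (by
      refine ((fS_tendsto s).const_mul s).neg.congr' ?_
      filter_upwards [self_mem_nhdsWithin] with t ht using (hd ht).deriv.symm)
  have h2 := (hasDerivWithinAt_iff_tendsto_slope' (by simp)).mp this.Ioi_of_Ici
  refine h2.congr fun t => ?_
  simp [slope, div_eq_inv_mul]

lemma fS_sum_tendsto {s : ℂ} (hs : 1 < s.re) :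
    Tendsto (fun l : ℝ => -((Real.pi ^ 2 / (6 * l) : ℝ) : ℂ) + 2 * ∑' k : ℕ, fS ((s + k) * l))
      (nhdsWithin 0 (Set.Ioi 0)) (nhds ((1 - 2 * s) * (Real.log 2 : ℂ))) := by
  set D : ℝ → ℂ := fun l =>
    PhiS (s * l) + l / 2 * fS (s * l) - l * ∑' k : ℕ, fS ((s + k) * l) with hD
  have hDlim : Tendsto (fun l : ℝ => D l / l) (nhdsWithin 0 (Set.Ioi 0)) (nhds 0) := by
    refine squeeze_zero_norm' (a := fun l : ℝ => l * (1 + l)) ?_ ?_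
    · have hi : ∀ᶠ l : ℝ in nhdsWithin 0 (Set.Ioi 0), |s.im * l| < Real.pi / 2 := by
        have : ContinuousAt (fun l : ℝ => |s.im * l|) 0 := by fun_prop
        refine nhdsWithin_le_nhds (this.eventually_lt continuousAt_const ?_)
        simp; positivity
      filter_upwards [hi, self_mem_nhdsWithin] with l hi hl
      have hl : 0 < l := hl
      rw [norm_div, Complex.norm_real, Real.norm_of_nonneg hl.le, div_le_iff₀ hl]
      refine (main_bound hs hl hi.le).trans (le_of_eq ?_)
      ring
    · have : ContinuousAt (fun l : ℝ => l * (1 + l)) 0 := by fun_prop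
      have := this.tendsto
      simp only [zero_mul] at this
      exact this.mono_left nhdsWithin_le_nhds
  have h := (((Phi_slope hs).const_mul 2).add (fS_tendsto s)).sub (hDlim.const_mul 2)
  have e : 2 * -(s * (Real.log 2 : ℂ)) + (Real.log 2 : ℂ) - 2 * 0 = (1 - 2 * s) * (Real.log 2 : ℂ) := by
    ring
  rw [e] at h
  refine h.congr' ?_
  filter_upwards [self_mem_nhdsWithin] with l hl
  have hl : (l : ℂ) ≠ 0 := by
    have : (0:ℝ) < l := hl
    exact_mod_cast this.ne'
  simp only [hD, PhiS_zero]
  push_cast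
  field_simp
  ring


/-- Lemma `ZetaExponentialGrowth`: for `Re s > 1`, the product
`Z_η(s,ℓ) = ∏_{k≥0} (1 + e^{−(s+k)ℓ})²` converges for every `ℓ > 0` and
`e^{−π²/(6ℓ)}·Z_η(s,ℓ) → 2^{1−2s}` as `ℓ → 0⁺`. -/
theorem stmt_15 (s : ℂ) (hs : 1 < s.re) :
    (∀ ℓ : ℝ, 0 < ℓ →
      Multipliable (fun k : ℕ => (1 + Complex.exp (-(s + k) * ℓ)) ^ 2)) ∧
    Tendsto (fun ℓ : ℝ => (Real.exp (-(Real.pi ^ 2 / (6 * ℓ))) : ℂ) *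
        ∏' k : ℕ, (1 + Complex.exp (-(s + k) * ℓ)) ^ 2)
      (nhdsWithin 0 (Set.Ioi 0))
      (nhds (Complex.exp ((1 - 2 * s) * (Real.log 2 : ℂ)))) := by
  have key : ∀ l : ℝ, 0 < l →
      HasProd (fun k : ℕ => (1 + Complex.exp (-(s + k) * l)) ^ 2)
        (Complex.exp (2 * ∑' k : ℕ, fS ((s + k) * l))) := by
    intro l hl
    have h := ((summable_fS s hl).hasSum.mul_left 2).cexp
    refine h.congr_fun ?_
    intro k
    have hne : 1 + Complex.exp (-((s + k) * l)) ≠ 0 := by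
      intro h0
      have h1 : ‖Complex.exp (-((s + k) * l))‖ < 1 := norm_exp_neg_lt (by
        simp; positivity)
      rw [eq_neg_of_add_eq_zero_right h0] at h1
      simp at h1
    simp only [Function.comp, fS]
    rw [two_mul, Complex.exp_add, Complex.exp_log hne, neg_mul, sq]
  refine ⟨fun l hl => (key l hl).multipliable, ?_⟩
  refine ((Complex.continuous_exp.tendsto _).comp (fS_sum_tendsto hs)).congr' ?_
  filter_upwards [self_mem_nhdsWithin] with l hl
  rw [(key l hl).tprod_eq, Function.comp, Complex.exp_add]
  push_cast
  rfl
end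

section
/- For every s ∈ ℂ with Re(s) > 0, lim_{ℓ→0⁺} ( −(2/ℓ)·Σ_{n=1}^∞ (−e^{−sℓ})^n/n² − π²/(6ℓ) ) = −2s·log 2. -/
open Filter

theorem aux_value : ∑' n : ℕ, (-1 : ℂ) ^ (n + 1) / (((n : ℂ) + 1) ^ 2)
    = -((Real.pi : ℂ) ^ 2 / 12) := by
  have h := hasSum_one_div_nat_pow_mul_cos (k := 1) one_ne_zero (x := 1 / 2)
    ⟨by norm_num, by norm_num⟩
  have h1 : HasSum (fun n : ℕ => (-1 : ℝ) ^ n / (n : ℝ) ^ 2) (-(Real.pi ^ 2 / 12)) := by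
    convert h using 1
    · ext n
      have : 2 * Real.pi * n * (1 / 2) = n * Real.pi := by ring
      rw [this, Real.cos_nat_mul_pi]
      ring
    · simp [Polynomial.bernoulli_def, Finset.sum_range_succ, Nat.factorial]
      ring
  rw [← hasSum_nat_add_iff' 1] at h1
  have h2 := Complex.hasSum_ofReal.mpr h1
  simp only [Finset.range_one, Finset.sum_singleton] at h2
  have h3 := h2.tsum_eq
  push_cast at h3
  simpa using h3

theorem aux_deriv {z : ℂ} (hz : ‖z‖ < 1) :
    HasDerivAt (fun z : ℂ => ∑' n : ℕ, z ^ (n + 1) / (((n : ℂ) + 1) ^ 2))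
      (∑' n : ℕ, z ^ n / ((n : ℂ) + 1)) z := by
  obtain ⟨r, hr, hr1⟩ := exists_between hz
  have hr0 : 0 < r := (norm_nonneg z).trans_lt hr
  refine hasDerivAt_tsum_of_isPreconnected (u := fun n : ℕ => r ^ n)
    (g := fun (n : ℕ) (z : ℂ) => z ^ (n + 1) / (((n : ℂ) + 1) ^ 2)) (g' := fun (n : ℕ) (z : ℂ) => z ^ n / ((n : ℂ) + 1))
    (t := Metric.ball 0 r) (y₀ := 0)
    (summable_geometric_of_lt_one hr0.le hr1) Metric.isOpen_ball
    (convex_ball (0 : ℂ) r).isPreconnected ?_ ?_ (by simpa using hr0) (by simp [summable_zero])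
    (by simpa using hr)
  · intro n y _
    have hn : (n : ℂ) + 1 ≠ 0 := Nat.cast_add_one_ne_zero n
    refine ((hasDerivAt_pow (n + 1) y).div_const (((n : ℂ) + 1) ^ 2)).congr_deriv ?_
    simp only [Nat.cast_add, Nat.cast_one, Nat.add_sub_cancel]
    field_simp
  · intro n y hy
    have hy' : ‖y‖ < r := by simpa using hy
    have hn : ‖(n : ℂ) + 1‖ = n + 1 := by
      exact_mod_cast Complex.norm_natCast (n + 1)
    rw [norm_div, norm_pow, hn]
    calc ‖y‖ ^ n / (n + 1) ≤ ‖y‖ ^ n := div_le_self (by positivity) (by linarith [n.cast_nonneg (α := ℝ)])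
      _ ≤ r ^ n := by gcongr

theorem aux_log {z : ℂ} (hz : ‖z‖ < 1) :
    z * ∑' n : ℕ, z ^ n / ((n : ℂ) + 1) = -Complex.log (1 - z) := by
  rw [← (Complex.hasSum_taylorSeries_neg_log' hz).tsum_eq, ← tsum_mul_left]
  congr 1; ext n; ring

theorem aux_norm (s : ℂ) (x : ℝ) : ‖-(Complex.exp (-s * x))‖ = Real.exp (-(s.re * x)) := by
  rw [norm_neg, Complex.norm_exp]; simp

theorem aux_F (s : ℂ) (hs : 0 < s.re) {x : ℝ} (hx : 0 < x) :
    HasDerivAt (fun ℓ : ℝ => ∑' n : ℕ,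
            (-(Complex.exp (-s * ℓ))) ^ (n + 1) / (((n : ℂ) + 1) ^ 2))
      (s * Complex.log (1 + Complex.exp (-s * x))) x := by
  have hw : ‖-(Complex.exp (-s * x))‖ < 1 := by
    rw [aux_norm, Real.exp_lt_one_iff]
    have := mul_pos hs hx
    linarith
  have h1 : HasDerivAt (fun ℓ : ℝ => -(Complex.exp (-s * ℓ)))
      (-(Complex.exp (-s * x) * (-s * 1))) x :=
    (((Complex.ofRealCLM.hasDerivAt (x := x)).const_mul (-s)).cexp).neg
  have h2 := HasDerivAt.comp x (aux_deriv hw) h1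
  refine h2.congr_deriv ?_
  have := aux_log hw
  rw [sub_neg_eq_add] at this
  rw [← neg_eq_iff_eq_neg] at this
  rw [← this]; ring


/-- The dilogarithm term in the pinching asymptotics: for `Re s > 0`,
`lim_{ℓ→0⁺} ( −(2/ℓ)·Σ_{n≥1} (−e^{−sℓ})ⁿ/n² − π²/(6ℓ) ) = −2s·log 2`. -/
theorem stmt_16 (s : ℂ) (hs : 0 < s.re) :
    Tendsto (fun ℓ : ℝ =>
        -(2 / (ℓ : ℂ)) * ∑' n : ℕ,
            (-(Complex.exp (-s * ℓ))) ^ (n + 1) / (((n : ℂ) + 1) ^ 2) -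
          ((Real.pi ^ 2 / (6 * ℓ) : ℝ) : ℂ))
      (nhdsWithin 0 (Set.Ioi 0))
      (nhds (-2 * s * (Real.log 2 : ℂ))) := by
  set F : ℝ → ℂ := fun ℓ : ℝ => ∑' n : ℕ,
            (-(Complex.exp (-s * ℓ))) ^ (n + 1) / (((n : ℂ) + 1) ^ 2) with hF
  have hF0 : F 0 = -((Real.pi : ℂ) ^ 2 / 12) := by
    rw [← aux_value]; simp [hF]
  have hcont : ContinuousOn F (Set.Ici 0) := by
    have hu : Summable (fun n : ℕ => 1 / ((n : ℝ) + 1) ^ 2) := by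
      have := (summable_nat_add_iff 1).mpr hasSum_zeta_two.summable
      simpa using this
    refine continuousOn_tsum (fun i => Continuous.continuousOn (by fun_prop)) hu ?_
    intro n x hx
    have hn : ‖(n : ℂ) + 1‖ = n + 1 := by
      exact_mod_cast Complex.norm_natCast (n + 1)
    rw [norm_div, norm_pow, norm_pow, hn, aux_norm]
    gcongr
    apply pow_le_one₀ (Real.exp_pos _).le
    rw [Real.exp_le_one_iff]
    have := mul_nonneg hs.le (Set.mem_Ici.mp hx)
    linarith
  have hD : HasDerivWithinAt F (s * (Real.log 2 : ℂ)) (Set.Ici 0) 0 := by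
    refine hasDerivWithinAt_Ici_of_tendsto_deriv (s := Set.Ioi 0)
      (fun x hx => (aux_F s hs hx).differentiableAt.differentiableWithinAt)
      ((hcont 0 Set.self_mem_Ici).mono Set.Ioi_subset_Ici_self) self_mem_nhdsWithin ?_
    have hc : Tendsto (fun x : ℝ => s * Complex.log (1 + Complex.exp (-s * x)))
        (nhdsWithin 0 (Set.Ioi 0)) (nhds (s * (Real.log 2 : ℂ))) := by
      have hca : ContinuousAt (fun x : ℝ => s * Complex.log (1 + Complex.exp (-s * x))) 0 := by
        refine continuousAt_const.mul (ContinuousAt.clog (by fun_prop) ?_)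
        left
        simp
      have h := hca.tendsto
      have e : s * Complex.log (1 + Complex.exp (-s * (0 : ℝ))) = s * (Real.log 2 : ℂ) := by
        rw [Complex.ofReal_log (by norm_num)]
        norm_num
      rw [e] at h
      exact h.mono_left nhdsWithin_le_nhds
    refine hc.congr' ?_
    filter_upwards [self_mem_nhdsWithin] with x hx
    exact (aux_F s hs hx).deriv.symm
  have hS := hasDerivWithinAt_iff_tendsto_slope.mp hD
  rw [Set.Ici_sdiff_left] at hS
  have h2 := hS.const_mul (-2 : ℂ)
  rw [← mul_assoc] at h2
  refine h2.congr' ?_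
  filter_upwards [self_mem_nhdsWithin] with x hx
  have hx0 : (x : ℂ) ≠ 0 := by exact_mod_cast (Set.mem_Ioi.mp hx).ne'
  change _ = -(2 / (x : ℂ)) * F x - _
  rw [slope_def_module, hF0]
  simp only [sub_zero, Complex.real_smul]
  push_cast
  field_simp
  ring
end

section
/- Let g(x) := 1/(eˣ − 1) − 1/x + 1/2 for x > 0. Then for every s ∈ ℂ with Re(s) > 0, the integral ∫₀^∞ (e^{−sx}/x)·g(x) dx converges absolutely and lim_{ℓ→0⁺} Σ_{k=1}^∞ 2ℓ · ( e^{−s(2k−1)ℓ} / ((2k−1)ℓ) ) · g((2k−1)ℓ) = ∫₀^∞ (e^{−sx}/x)·g(x) dx. -/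
open Filter MeasureTheory

lemma aux_bound_s17 (x : ℝ) (hx : 0 < x) :
    |1 / (Real.exp x - 1) - 1 / x + 1 / 2| ≤ x / 2 := by
  have hE : 0 < Real.exp x - 1 := by linarith [Real.add_one_lt_exp hx.ne']
  have hq : x + x ^ 2 / 2 ≤ Real.exp x - 1 := by
    linarith [Real.quadratic_le_exp_of_nonneg hx.le]
  have h2 : x < 1 → Real.exp x - 1 ≤ x + x ^ 2 / 2 + 2 * x ^ 3 / 9 := by
    intro h1
    have := Real.exp_bound' hx.le h1.le (n := 3) (by norm_num)
    norm_num [Finset.sum_range_succ, Nat.factorial] at this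
    linarith
  set E := Real.exp x - 1 with hEd
  have e : 1 / E - 1 / x + 1 / 2 = (2 * x - 2 * E + x * E) / (2 * x * E) := by
    field_simp
  rw [e, abs_le]
  constructor
  · rw [le_div_iff₀ (by positivity)]
    rcases lt_or_ge x 1 with h1 | h1
    · have h3 := h2 h1
      have h4 : 0 < 2 - x - x ^ 2 := by nlinarith
      have h5 := mul_le_mul_of_nonneg_right h3 h4.le
      have : (x + x ^ 2 / 2 + 2 * x ^ 3 / 9) * (2 - x - x ^ 2) ≤ 2 * x := by
        have : 0 < x ^ 3 := by positivity
        have : 0 < x ^ 4 := by positivity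
        have : 0 < x ^ 5 := by positivity
        nlinarith
      nlinarith
    · nlinarith [mul_nonneg (sub_nonneg.2 h1) hE.le, mul_nonneg hx.le (mul_nonneg (sub_nonneg.2 h1) hE.le)]
  · rw [div_le_iff₀ (by positivity)]
    have h4 : 0 < 2 - x + x ^ 2 := by nlinarith [sq_nonneg (x - 1)]
    have h5 := mul_le_mul_of_nonneg_right hq h4.le
    have : 0 < x ^ 3 := by positivity
    have : 0 < x ^ 4 := by positivity
    nlinarith

/-- Riemann sums with midpoint tags converge, for dominated continuous functions. -/
lemma aux_riemann (F : ℝ → ℂ) (σ : ℝ) (hσ : 0 < σ)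
    (hc : ContinuousOn F (Set.Ioi 0))
    (hb : ∀ x, 0 < x → ‖F x‖ ≤ Real.exp (-σ * x)) :
    Tendsto (fun ℓ : ℝ => ∑' k : ℕ, 2 * (ℓ : ℂ) * F ((2 * (k : ℝ) + 1) * ℓ))
      (nhdsWithin 0 (Set.Ioi 0)) (nhds (∫ x in Set.Ioi (0 : ℝ), F x)) := by
  let p : ℝ → ℝ → ℝ := fun ℓ x => (2 * ((⌊x / (2 * ℓ)⌋₊ : ℕ) : ℝ) + 1) * ℓ
  have hpd : ∀ ℓ x, 0 < ℓ → 0 < x → 0 < p ℓ x ∧ |p ℓ x - x| ≤ ℓ := by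
    intro ℓ x hl hx
    refine ⟨by positivity, ?_⟩
    have a := Nat.floor_le (a := x / (2 * ℓ)) (by positivity)
    have b := Nat.lt_floor_add_one (x / (2 * ℓ))
    rw [le_div_iff₀ (by positivity)] at a
    rw [div_lt_iff₀ (by positivity)] at b
    simp only [p]
    rw [abs_le]
    constructor <;> nlinarith
  have hmeas : ∀ ℓ, Measurable (fun x => F (p ℓ x)) := by
    intro ℓ
    have : Measurable (fun n : ℕ => F ((2 * (n : ℝ) + 1) * ℓ)) := measurable_from_top
    exact this.comp (Nat.measurable_floor.comp (measurable_id.div_const _))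
  have hdom : ∀ ℓ, 0 < ℓ → ℓ < 1 → ∀ x, 0 < x →
      ‖F (p ℓ x)‖ ≤ Real.exp σ * Real.exp (-σ * x) := by
    intro ℓ hl hl1 x hx
    obtain ⟨h1, h2⟩ := hpd ℓ x hl hx
    refine (hb _ h1).trans ?_
    rw [← Real.exp_add]
    apply Real.exp_le_exp.2
    have := (abs_le.1 h2).1
    nlinarith
  have hint : IntegrableOn (fun x => Real.exp σ * Real.exp (-σ * x)) (Set.Ioi 0) :=
    (integrableOn_exp_mul_Ioi (by linarith) 0).const_mul _
  have hev : ∀ᶠ ℓ : ℝ in nhdsWithin 0 (Set.Ioi 0), 0 < ℓ ∧ ℓ < 1 :=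
    Ioo_mem_nhdsGT one_pos
  have key : Tendsto (fun ℓ : ℝ => ∫ x in Set.Ioi (0 : ℝ), F (p ℓ x))
      (nhdsWithin 0 (Set.Ioi 0)) (nhds (∫ x in Set.Ioi (0 : ℝ), F x)) := by
    refine tendsto_integral_filter_of_dominated_convergence
      (fun x => Real.exp σ * Real.exp (-σ * x)) ?_ ?_ hint ?_
    · exact Eventually.of_forall fun ℓ => (hmeas ℓ).aestronglyMeasurable
    · filter_upwards [hev] with ℓ hl
      exact (ae_restrict_mem measurableSet_Ioi).mono fun x hx => hdom ℓ hl.1 hl.2 x hx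
    · refine (ae_restrict_mem measurableSet_Ioi).mono fun x hx => ?_
      have hx' : (0 : ℝ) < x := hx
      have hcx : ContinuousAt F x := hc.continuousAt (Ioi_mem_nhds hx')
      refine hcx.tendsto.comp ?_
      rw [tendsto_iff_dist_tendsto_zero]
      refine squeeze_zero' (g := fun ℓ => ℓ) (Eventually.of_forall fun _ => dist_nonneg) ?_
        (tendsto_nhdsWithin_of_tendsto_nhds tendsto_id)
      filter_upwards [hev] with ℓ hl
      rw [Real.dist_eq]
      exact (hpd ℓ x hl.1 hx').2
  refine key.congr' ?_
  filter_upwards [hev] with ℓ hl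
  have hl0 := hl.1
  let S : ℕ → Set ℝ := fun k => Set.Ico (2 * ℓ * k) (2 * ℓ * (k + 1))
  have hS : ∀ k x, x ∈ S k ↔ 0 ≤ x ∧ ⌊x / (2 * ℓ)⌋₊ = k := by
    intro k x
    constructor
    · rintro ⟨h1, h2⟩
      have h0 : 0 ≤ x := le_trans (by positivity) h1
      refine ⟨h0, (Nat.floor_eq_iff (by positivity)).2 ⟨?_, ?_⟩⟩
      · rw [le_div_iff₀ (by positivity)]; linarith
      · rw [div_lt_iff₀ (by positivity)]; linarith
    · rintro ⟨h0, h⟩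
      rw [Nat.floor_eq_iff (by positivity), le_div_iff₀ (by positivity),
        div_lt_iff₀ (by positivity)] at h
      exact ⟨by linarith [h.1], by linarith [h.2]⟩
  have hU : (⋃ k, S k) = Set.Ici 0 := by
    ext x
    simp only [Set.mem_iUnion, hS, Set.mem_Ici]
    constructor
    · rintro ⟨k, h, _⟩; exact h
    · intro h; exact ⟨_, h, rfl⟩
  have hi : IntegrableOn (fun x => F (p ℓ x)) (⋃ k, S k) := by
    rw [hU, integrableOn_Ici_iff_integrableOn_Ioi]
    refine Integrable.mono' hint (hmeas ℓ).aestronglyMeasurable ?_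
    exact (ae_restrict_mem measurableSet_Ioi).mono fun x hx => hdom ℓ hl.1 hl.2 x hx
  have hd : Pairwise (Function.onFun Disjoint S) := by
    intro i j hij
    refine Set.disjoint_left.2 fun x hx hy => hij ?_
    rw [← ((hS i x).1 hx).2, ← ((hS j x).1 hy).2]
  have hsum := hasSum_integral_iUnion (fun k => (measurableSet_Ico : MeasurableSet (S k))) hd hi
  rw [hU, integral_Ici_eq_integral_Ioi] at hsum
  rw [← hsum.tsum_eq]
  refine tsum_congr fun k => ?_
  have : ∫ x in S k, F (p ℓ x) = ∫ x in S k, F ((2 * (k : ℝ) + 1) * ℓ) := by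
    refine setIntegral_congr_fun measurableSet_Ico fun x hx => ?_
    simp only [p, ((hS k x).1 hx).2]
  rw [this, setIntegral_const]
  simp only [S, Real.volume_real_Ico]
  rw [max_eq_left (by nlinarith)]
  rw [Complex.real_smul]
  push_cast
  ring

/-- The Riemann-sum term in the pinching asymptotics: for
`g(x) = 1/(eˣ−1) − 1/x + 1/2` and `Re s > 0`, the integral
`∫₀^∞ (e^{−sx}/x)·g(x) dx` converges absolutely and
`Σ_{k≥1} 2ℓ·(e^{−s(2k−1)ℓ}/((2k−1)ℓ))·g((2k−1)ℓ) → ∫₀^∞ (e^{−sx}/x)·g(x) dx`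
as `ℓ → 0⁺`. -/
theorem stmt_17 (g : ℝ → ℝ)
    (hg : ∀ x : ℝ, g x = 1 / (Real.exp x - 1) - 1 / x + 1 / 2)
    (s : ℂ) (hs : 0 < s.re) :
    IntegrableOn (fun x : ℝ => Complex.exp (-s * x) / (x : ℂ) * (g x : ℂ))
      (Set.Ioi 0) ∧
    Tendsto (fun ℓ : ℝ => ∑' k : ℕ,
        2 * (ℓ : ℂ) *
          (Complex.exp (-s * ((2 * (k : ℝ) + 1) * ℓ)) / (((2 * (k : ℝ) + 1) * ℓ : ℝ) : ℂ)) *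
          (g ((2 * (k : ℝ) + 1) * ℓ) : ℂ))
      (nhdsWithin 0 (Set.Ioi 0))
      (nhds (∫ x in Set.Ioi (0 : ℝ), Complex.exp (-s * x) / (x : ℂ) * (g x : ℂ))) := by
  have hgx : g = fun x => 1 / (Real.exp x - 1) - 1 / x + 1 / 2 := funext hg
  have hc : ContinuousOn (fun x : ℝ => Complex.exp (-s * x) / (x : ℂ) * (g x : ℂ))
      (Set.Ioi 0) := by
    have hgc : ContinuousOn g (Set.Ioi 0) := by
      rw [hgx]
      refine ((continuousOn_const.div (by fun_prop) ?_).sub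
        (continuousOn_const.div continuousOn_id ?_)).add continuousOn_const
      · intro x hx
        have hx' : (0 : ℝ) < x := hx
        linarith [Real.add_one_lt_exp hx'.ne']
      · intro x hx
        exact (ne_of_gt hx : x ≠ 0)
    refine ContinuousOn.mul (ContinuousOn.div (by fun_prop) (by fun_prop) ?_)
      (Complex.continuous_ofReal.comp_continuousOn hgc)
    intro x hx
    exact Complex.ofReal_ne_zero.2 (ne_of_gt hx)
  have hb : ∀ x : ℝ, 0 < x →
      ‖Complex.exp (-s * x) / (x : ℂ) * (g x : ℂ)‖ ≤ Real.exp (-s.re * x) := by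
    intro x hx
    have h := aux_bound_s17 x hx
    rw [← hg] at h
    rw [norm_mul, norm_div, Complex.norm_exp, Complex.norm_real, Complex.norm_real,
      Real.norm_eq_abs, Real.norm_eq_abs, abs_of_pos hx]
    have : (-s * (x : ℂ)).re = -s.re * x := by simp
    rw [this, div_mul_eq_mul_div, div_le_iff₀ hx]
    exact mul_le_mul_of_nonneg_left (by linarith) (Real.exp_pos _).le
  refine ⟨?_, ?_⟩
  · refine Integrable.mono' (integrableOn_exp_mul_Ioi (a := -s.re) (by linarith) 0)
      (hc.aestronglyMeasurable measurableSet_Ioi) ?_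
    exact (ae_restrict_mem measurableSet_Ioi).mono fun x hx => hb x hx
  · refine (aux_riemann _ s.re hs hc hb).congr fun ℓ => tsum_congr fun k => ?_
    push_cast
    ring
end

section
/- For every λ ∈ ℂ, the set of functions h : [0,1) → ℂ that are smooth on [0,1) and satisfy, for all r ∈ (0,1), −((2 − r²)/4)·h(r) − ((1 − r²)²/(4r))·h′(r) − ((1 − r²)²/4)·h″(r) = λ·h(r), is a complex vector space of dimension 1. -/
open Set Filter Topology

def RSum (c : ℕ → ℂ) : Prop := ∀ ρ : ℝ, 0 ≤ ρ → ρ < 1 → Summable fun n => ‖c n‖ * ρ ^ n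

noncomputable def PS (c : ℕ → ℂ) (z : ℂ) : ℂ := ∑' n, c n * z ^ n

def dc (c : ℕ → ℂ) (n : ℕ) : ℂ := (n + 1) * c (n + 1)

lemma hsc {f g : ℕ → ℂ} {a : ℂ} (h : ∀ n, f n = g n) (hg : HasSum g a) : HasSum f a := by
  rw [funext h]; exact hg

lemma RSum.hasSum {c : ℕ → ℂ} (hc : RSum c) {z : ℂ} (hz : ‖z‖ < 1) :
    HasSum (fun n => c n * z ^ n) (PS c z) := by
  apply Summable.hasSum
  apply Summable.of_norm
  simpa using hc ‖z‖ (norm_nonneg _) hz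

lemma RSum.aux {c : ℕ → ℂ} (hc : RSum c) {z : ℂ} (hz : ‖z‖ < 1) :
    DifferentiableAt ℂ (PS c) z ∧ HasSum (fun n => dc c n * z ^ n) (deriv (PS c) z) := by
  obtain ⟨σ, h1, h2⟩ := exists_between hz
  have hσ : 0 ≤ σ := (norm_nonneg z).trans h1.le
  have hu := hc σ hσ h2
  have hU : IsOpen (Metric.ball (0 : ℂ) σ) := Metric.isOpen_ball
  have hzU : z ∈ Metric.ball (0 : ℂ) σ := by simpa using h1
  have hd : ∀ i : ℕ, DifferentiableOn ℂ (fun w => c i * w ^ i) (Metric.ball (0 : ℂ) σ) := by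
    intro i; fun_prop
  have hb : ∀ (i : ℕ) (w : ℂ), w ∈ Metric.ball (0 : ℂ) σ → ‖c i * w ^ i‖ ≤ ‖c i‖ * σ ^ i := by
    intro i w hw
    have : ‖w‖ < σ := by simpa using hw
    rw [norm_mul, norm_pow]
    gcongr
  have A := Complex.differentiableOn_tsum_of_summable_norm hu hd hU hb
  have B := Complex.hasSum_deriv_of_summable_norm hu hd hU hb hzU
  refine ⟨A.differentiableAt (hU.mem_nhds hzU), ?_⟩
  have C := (hasSum_nat_add_iff' 1).2 B
  simp only [Finset.range_one, Finset.sum_singleton, pow_zero, mul_one, deriv_const, sub_zero] at C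
  refine hsc (fun n => ?_) C
  simp [_root_.dc]
  ring

lemma RSum.dc {c : ℕ → ℂ} (hc : RSum c) : RSum (dc c) := by
  intro ρ h0 h1
  have hz : ‖(ρ : ℂ)‖ < 1 := by simpa [abs_of_nonneg h0] using h1
  have := (hc.aux hz).2.summable.norm
  simpa [abs_of_nonneg h0] using this

lemma RSum.hasDerivAt {c : ℕ → ℂ} (hc : RSum c) {z : ℂ} (hz : ‖z‖ < 1) :
    HasDerivAt (PS c) (PS (_root_.dc c) z) z := by
  have h := hc.aux hz
  rw [(hc.dc.hasSum hz).unique h.2]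
  exact h.1.hasDerivAt

lemma shift_sum {c : ℕ → ℂ} {z D : ℂ} (h : HasSum (fun n => dc c n * z ^ n) D) :
    HasSum (fun n => (n * c n) * z ^ n) (z * D) := by
  rw [← hasSum_nat_add_iff' 1]
  simp only [Finset.range_one, Finset.sum_singleton, Nat.cast_zero, zero_mul, sub_zero]
  refine hsc (fun n => ?_) (h.mul_left z)
  simp only [dc]
  push_cast
  ring

noncomputable def cf (β : ℂ) : ℕ → ℂ
  | 0 => 1
  | n + 1 => (n + β + 1) * (n + β) / (n + 1) ^ 2 * cf β n

lemma cf_succ (β : ℂ) (n : ℕ) :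
    ((n : ℂ) + 1) ^ 2 * cf β (n + 1) = (n + β + 1) * (n + β) * cf β n := by
  have : (n : ℂ) + 1 ≠ 0 := Nat.cast_add_one_ne_zero n
  rw [cf]
  field_simp

lemma cf_rsum (β : ℂ) : RSum (cf β) := by
  intro ρ h0 h1
  obtain ⟨σ, hs1, hs2⟩ := exists_between h1
  have hlim : Tendsto (fun n : ℕ => (1 + ‖β‖ / ((n : ℝ) + 1)) ^ 2 * ρ) atTop (𝓝 ((1 + 0) ^ 2 * ρ)) := by
    refine ((tendsto_const_nhds.add ?_).pow 2).mul_const ρ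
    exact tendsto_const_nhds.div_atTop
      (tendsto_atTop_add_const_right _ _ tendsto_natCast_atTop_atTop)
  have hev : ∀ᶠ n : ℕ in atTop, (1 + ‖β‖ / ((n : ℝ) + 1)) ^ 2 * ρ < σ := by
    apply hlim.eventually_lt_const
    simpa using hs1
  refine summable_of_ratio_norm_eventually_le (r := σ) hs2 ?_
  filter_upwards [hev] with n hn
  have hp : (0 : ℝ) < n + 1 := by positivity
  have e1 : ‖(n : ℂ) + 1‖ = n + 1 := by
    have : ((n : ℂ) + 1) = ((n + 1 : ℕ) : ℂ) := by push_cast; rfl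
    rw [this, Complex.norm_natCast]; push_cast; rfl
  have e2 : ‖(n : ℂ) + β + 1‖ ≤ n + 1 + ‖β‖ := by
    calc _ = ‖((n : ℂ) + 1) + β‖ := by ring_nf
      _ ≤ _ := by rw [← e1]; exact norm_add_le _ _
  have e3 : ‖(n : ℂ) + β‖ ≤ n + 1 + ‖β‖ := by
    calc _ ≤ ‖(n : ℂ)‖ + ‖β‖ := norm_add_le _ _
      _ ≤ _ := by rw [Complex.norm_natCast]; linarith
  have e4 : ‖cf β (n + 1)‖ ≤ (1 + ‖β‖ / ((n : ℝ) + 1)) ^ 2 * ‖cf β n‖ := by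
    rw [cf, norm_mul, norm_div, norm_mul, norm_pow, e1]
    gcongr
    rw [div_le_iff₀ (by positivity)]
    calc _ ≤ ((n : ℝ) + 1 + ‖β‖) * (n + 1 + ‖β‖) := by gcongr
      _ = _ := by field_simp
  rw [Real.norm_of_nonneg (by positivity), Real.norm_of_nonneg (by positivity)]
  calc ‖cf β (n + 1)‖ * ρ ^ (n + 1)
      ≤ ((1 + ‖β‖ / ((n : ℝ) + 1)) ^ 2 * ‖cf β n‖) * ρ ^ (n + 1) := by gcongr
    _ = ((1 + ‖β‖ / ((n : ℝ) + 1)) ^ 2 * ρ) * (‖cf β n‖ * ρ ^ n) := by ring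
    _ ≤ _ := by gcongr

lemma F_ode (β : ℂ) {z : ℂ} (hz : ‖z‖ < 1) :
    z * (1 - z) * PS (dc (dc (cf β))) z + (1 - (2 * β + 2) * z) * PS (dc (cf β)) z
      - (β + 1) * β * PS (cf β) z = 0 := by
  have h0 := (cf_rsum β).hasSum hz
  have h1 := (cf_rsum β).dc.hasSum hz
  have h2 := (cf_rsum β).dc.dc.hasSum hz
  have s1 := shift_sum h1
  have s2 := shift_sum h2
  have s3 : HasSum (fun n : ℕ => (n * ((n - 1 : ℂ) * cf β n)) * z ^ n)
      (z * (z * PS (dc (dc (cf β))) z)) := by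
    apply shift_sum (c := fun n : ℕ => (n - 1 : ℂ) * cf β n)
    refine hsc (fun n => ?_) s2
    simp only [dc]
    push_cast
    ring
  have T := ((s2.sub s3).add (h1.sub (s1.mul_left (2 * β + 2)))).sub (h0.mul_left ((β + 1) * β))
  have Z : HasSum (fun _ : ℕ => (0 : ℂ)) 0 := hasSum_zero
  have := T.unique (by
    refine hsc (fun n => ?_) Z
    have := cf_succ β n
    simp only [dc]
    linear_combination z ^ n * this)
  linear_combination this

noncomputable def H (β z : ℂ) : ℂ := (1 - z ^ 2) ^ (β + 1 / 2) * PS (cf β) (z ^ 2)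

noncomputable def H1 (β z : ℂ) : ℂ := 2 * z * (1 - z ^ 2) ^ (β + 1 / 2) *
  (PS (dc (cf β)) (z ^ 2) - (β + 1 / 2) * PS (cf β) (z ^ 2) / (1 - z ^ 2))

noncomputable def H2 (β z : ℂ) : ℂ := (1 - z ^ 2) ^ (β + 1 / 2) * (
  2 * (PS (dc (cf β)) (z ^ 2) - (β + 1 / 2) * PS (cf β) (z ^ 2) / (1 - z ^ 2))
  - 4 * z ^ 2 * (β + 1 / 2) / (1 - z ^ 2) *
    (PS (dc (cf β)) (z ^ 2) - (β + 1 / 2) * PS (cf β) (z ^ 2) / (1 - z ^ 2))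
  + 4 * z ^ 2 * (PS (dc (dc (cf β))) (z ^ 2) - (β + 1 / 2) * PS (dc (cf β)) (z ^ 2) / (1 - z ^ 2)
      - (β + 1 / 2) * PS (cf β) (z ^ 2) / (1 - z ^ 2) ^ 2))

lemma sq_lt {z : ℂ} (hz : ‖z‖ < 1) : ‖z ^ 2‖ < 1 := by
  rw [norm_pow]; exact pow_lt_one₀ (norm_nonneg _) hz (by norm_num)

lemma slit {z : ℂ} (hz : ‖z‖ < 1) : 1 - z ^ 2 ∈ Complex.slitPlane := by
  left
  have := Complex.re_le_norm (z ^ 2)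
  have := sq_lt hz
  simp only [Complex.sub_re, Complex.one_re]
  linarith

lemma G_deriv (α : ℂ) {z : ℂ} (hz : ‖z‖ < 1) :
    HasDerivAt (fun z : ℂ => (1 - z ^ 2) ^ α) (-2 * z * α * (1 - z ^ 2) ^ α / (1 - z ^ 2)) z := by
  have hs := slit hz
  have hne := Complex.slitPlane_ne_zero hs
  have h : HasDerivAt (fun z : ℂ => 1 - z ^ 2) (-(2 * z)) z := by
    simpa using (hasDerivAt_pow 2 z).const_sub 1
  convert h.cpow_const (c := α) hs using 1
  rw [Complex.cpow_sub _ _ hne, Complex.cpow_one]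
  ring

lemma PS_sq {c : ℕ → ℂ} (hc : RSum c) {z : ℂ} (hz : ‖z‖ < 1) :
    HasDerivAt (fun z => PS c (z ^ 2)) (PS (dc c) (z ^ 2) * (2 * z)) z := by
  have h : HasDerivAt (fun z : ℂ => z ^ 2) (2 * z) z := by simpa using hasDerivAt_pow 2 z
  exact (hc.hasDerivAt (sq_lt hz)).comp z h

lemma H_deriv (β : ℂ) {z : ℂ} (hz : ‖z‖ < 1) : HasDerivAt (H β) (H1 β z) z := by
  have hne := Complex.slitPlane_ne_zero (slit hz)
  refine HasDerivAt.congr_deriv ((G_deriv (β + 1 / 2) hz).mul (PS_sq (cf_rsum β) hz)) ?_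
  unfold H1
  field_simp
  ring

lemma H1_deriv (β : ℂ) {z : ℂ} (hz : ‖z‖ < 1) : HasDerivAt (H1 β) (H2 β z) z := by
  have hne := Complex.slitPlane_ne_zero (slit hz)
  have h : HasDerivAt (fun z : ℂ => 1 - z ^ 2) (-(2 * z)) z := by
    simpa using (hasDerivAt_pow 2 z).const_sub 1
  have h2 : HasDerivAt (fun z : ℂ => 2 * z) 2 z := by
    simpa using (hasDerivAt_id z).const_mul 2
  have := (h2.mul (G_deriv (β + 1 / 2) hz)).mul
    ((PS_sq (cf_rsum β).dc hz).sub (((PS_sq (cf_rsum β) hz).const_mul (β + 1 / 2)).div h hne))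
  refine HasDerivAt.congr_deriv this ?_
  unfold H2
  simp only [Pi.mul_apply, Pi.sub_apply, Pi.div_apply]
  generalize (1 - z ^ 2) ^ (β + 1 / 2) = G
  generalize PS (cf β) (z ^ 2) = F
  generalize PS (dc (cf β)) (z ^ 2) = F1
  generalize PS (dc (dc (cf β))) (z ^ 2) = F2
  field_simp
  ring

lemma H_ode (β lam : ℂ) (hβ : β ^ 2 = -lam) {z : ℂ} (hz : ‖z‖ < 1) (hz0 : z ≠ 0) :
    -((2 - z ^ 2) / 4) * H β z - (1 - z ^ 2) ^ 2 / (4 * z) * H1 β z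
      - (1 - z ^ 2) ^ 2 / 4 * H2 β z = lam * H β z := by
  have hne := Complex.slitPlane_ne_zero (slit hz)
  have ho := F_ode β (sq_lt hz)
  obtain rfl : lam = -β ^ 2 := by rw [hβ]; ring
  unfold H H1 H2
  generalize (1 - z ^ 2) ^ (β + 1 / 2) = G at *
  generalize PS (cf β) (z ^ 2) = F at *
  generalize PS (dc (cf β)) (z ^ 2) = F1 at *
  generalize PS (dc (dc (cf β))) (z ^ 2) = F2 at *
  have key : -((2 - z ^ 2) / 4) * (G * F) - (1 - z ^ 2) ^ 2 / (4 * z) * (2 * z * G *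
  (F1 - (β + 1 / 2) * F / (1 - z ^ 2)))
      - (1 - z ^ 2) ^ 2 / 4 * (G * (
  2 * (F1 - (β + 1 / 2) * F / (1 - z ^ 2))
  - 4 * z ^ 2 * (β + 1 / 2) / (1 - z ^ 2) *
    (F1 - (β + 1 / 2) * F / (1 - z ^ 2))
  + 4 * z ^ 2 * (F2 - (β + 1 / 2) * F1 / (1 - z ^ 2)
      - (β + 1 / 2) * F / (1 - z ^ 2) ^ 2))) - (-β ^ 2) * (G * F) =
      -(1 - z ^ 2) * G * (z ^ 2 * (1 - z ^ 2) * F2 + (1 - (2 * β + 2) * z ^ 2) * F1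
        - (β + 1) * β * F) := by
    field_simp
    ring
  rw [ho, mul_zero] at key
  exact sub_eq_zero.1 key

lemma uniq (lam : ℂ) (u : ℝ → ℂ) (hu : ContDiffOn ℝ (⊤ : ℕ∞) u (Ico 0 1))
    (hode : ∀ r ∈ Ioo (0 : ℝ) 1,
          -(((2 - r ^ 2) / 4 : ℝ) : ℂ) * u r -
              (((1 - r ^ 2) ^ 2 / (4 * r) : ℝ) : ℂ) * deriv u r -
              (((1 - r ^ 2) ^ 2 / 4 : ℝ) : ℂ) * deriv (deriv u) r = lam * u r)
    (h0 : u 0 = 0) : ∀ r ∈ Ico (0 : ℝ) 1, u r = 0 := by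
  have hUD : UniqueDiffOn ℝ (Ico (0 : ℝ) 1) := uniqueDiffOn_Ico 0 1
  set v := derivWithin u (Ico 0 1) with hv
  have hvC : ContDiffOn ℝ (⊤ : ℕ∞) v (Ico 0 1) := hu.derivWithin hUD (by simp)
  set w := derivWithin v (Ico 0 1) with hw
  have hwC : ContDiffOn ℝ (⊤ : ℕ∞) w (Ico 0 1) := hvC.derivWithin hUD (by simp)
  have nh : ∀ r ∈ Ioo (0 : ℝ) 1, Ico (0 : ℝ) 1 ∈ 𝓝 r := fun r hr => Ico_mem_nhds hr.1 hr.2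
  have hdu : ∀ r ∈ Ioo (0 : ℝ) 1, HasDerivAt u (v r) r := by
    intro r hr
    exact ((hu.differentiableOn (by simp)) r (Ioo_subset_Ico_self hr)).hasDerivWithinAt.hasDerivAt
      (nh r hr)
  have hdv : ∀ r ∈ Ioo (0 : ℝ) 1, HasDerivAt v (w r) r := by
    intro r hr
    exact ((hvC.differentiableOn (by simp)) r (Ioo_subset_Ico_self hr)).hasDerivWithinAt.hasDerivAt
      (nh r hr)
  have hddu : ∀ r ∈ Ioo (0 : ℝ) 1, deriv (deriv u) r = w r := by
    intro r hr
    rw [← (hdv r hr).deriv]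
    apply Filter.EventuallyEq.deriv_eq
    filter_upwards [Ioo_mem_nhds hr.1 hr.2] with x hx
    exact (hdu x hx).deriv
  have hq : ∀ r ∈ Ioo (0 : ℝ) 1, ((1 - r ^ 2 : ℝ) : ℂ) ^ 2 * (v r + r * w r) =
      - (r * (((2 - r ^ 2 : ℝ) : ℂ) + 4 * lam) * u r) := by
    intro r hr
    have := hode r hr
    rw [hddu r hr, (hdu r hr).deriv] at this
    have hr0 : (r : ℂ) ≠ 0 := by exact_mod_cast hr.1.ne'
    push_cast at this ⊢
    field_simp at this
    linear_combination (-1 : ℂ) * this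
  have hv0 : v 0 = 0 := by
    have m0 : (0 : ℝ) ∈ Ico (0 : ℝ) 1 := by simp
    have hsub : Ioo (0 : ℝ) 1 ⊆ Ico 0 1 := Ioo_subset_Ico_self
    have tu := (hu.continuousOn 0 m0).mono hsub
    have tv := (hvC.continuousOn 0 m0).mono hsub
    have tw := (hwC.continuousOn 0 m0).mono hsub
    have tr : ContinuousWithinAt (fun r : ℝ => (r : ℂ)) (Ioo 0 1) 0 :=
      Complex.continuous_ofReal.continuousWithinAt
    have tp : ContinuousWithinAt (fun r : ℝ => ((1 - r ^ 2 : ℝ) : ℂ) ^ 2) (Ioo 0 1) 0 := by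
      apply Continuous.continuousWithinAt; fun_prop
    have tq : ContinuousWithinAt (fun r : ℝ => (((2 - r ^ 2 : ℝ) : ℂ) + 4 * lam)) (Ioo 0 1) 0 := by
      apply Continuous.continuousWithinAt; fun_prop
    have A := tp.mul (tv.add (tr.mul tw))
    have B := ((tr.mul tq).mul tu).neg
    have hne : (𝓝[Ioo (0 : ℝ) 1] 0).NeBot := by
      rw [nhdsWithin_Ioo_eq_nhdsGT one_pos]; infer_instance
    have := tendsto_nhds_unique_of_eventuallyEq A B
      (by filter_upwards [self_mem_nhdsWithin] with r hr using hq r hr)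
    simpa using this
  intro R hR
  rcases hR.1.eq_or_lt with h | hRpos
  · rw [← h, h0]
  have hRR : 0 < 1 - R ^ 2 := by nlinarith [hR.2]
  set Q : ℝ := (2 + 4 * ‖lam‖) / (1 - R ^ 2) ^ 2 with hQ
  have hQ0 : 0 ≤ Q := by positivity
  set E : ℝ → ℝ := fun r => (‖u r‖ ^ 2 + ‖v r‖ ^ 2) * Real.exp (-(1 + Q) * r) with hE
  have hsub : Icc (0 : ℝ) R ⊆ Ico 0 1 := fun x hx => ⟨hx.1, hx.2.trans_lt hR.2⟩
  have hcont : ContinuousOn E (Icc 0 R) := by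
    have a := hu.continuousOn.mono hsub
    have b := hvC.continuousOn.mono hsub
    have c : ContinuousOn (fun r => Real.exp (-(1 + Q) * r)) (Icc 0 R) := by fun_prop
    exact ((a.norm.pow 2).add (b.norm.pow 2)).mul c
  have hder : ∀ r ∈ Ioo (0 : ℝ) R, HasDerivAt E
      ((2 * inner ℝ (u r) (v r) + 2 * inner ℝ (v r) (w r)) * Real.exp (-(1 + Q) * r)
        + (‖u r‖ ^ 2 + ‖v r‖ ^ 2) * (Real.exp (-(1 + Q) * r) * (-(1 + Q)))) r := by
    intro r hr
    have hr1 : r ∈ Ioo (0 : ℝ) 1 := ⟨hr.1, hr.2.trans hR.2⟩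
    have e : HasDerivAt (fun r => Real.exp (-(1 + Q) * r))
        (Real.exp (-(1 + Q) * r) * (-(1 + Q))) r := by
      apply HasDerivAt.exp
      simpa using (hasDerivAt_id r).const_mul (-(1 + Q))
    exact ((hdu r hr1).norm_sq.add (hdv r hr1).norm_sq).mul e
  have hanti : AntitoneOn E (Icc 0 R) := by
    apply antitoneOn_of_deriv_nonpos (convex_Icc 0 R) hcont
    · rw [interior_Icc]
      exact fun r hr => (hder r hr).differentiableAt.differentiableWithinAt
    · rw [interior_Icc]
      intro r hr
      rw [(hder r hr).deriv]
      have hr1 : r ∈ Ioo (0 : ℝ) 1 := ⟨hr.1, hr.2.trans hR.2⟩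
      have hp : 0 < 1 - r ^ 2 := by nlinarith [hr1.1, hr1.2]
      set q : ℂ := (((2 - r ^ 2 : ℝ) : ℂ) + 4 * lam) / ((1 - r ^ 2 : ℝ) : ℂ) ^ 2 with hqd
      have hqn : ‖q‖ ≤ Q := by
        rw [hqd, norm_div, norm_pow, Complex.norm_real, Real.norm_of_nonneg hp.le, hQ]
        gcongr
        · refine (norm_add_le _ _).trans ?_
          rw [Complex.norm_real, Real.norm_of_nonneg (by linarith), norm_mul]
          have : ‖(4 : ℂ)‖ = 4 := by norm_num
          rw [this]
          nlinarith [sq_nonneg r]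
        · exact hr.1.le
        · exact hr.2.le
      have hwr : w r = -((1 / r : ℝ) • v r) - q * u r := by
        have := hq r hr1
        have hr0 : (r : ℂ) ≠ 0 := by exact_mod_cast hr.1.ne'
        have hp0 : ((1 - r ^ 2 : ℝ) : ℂ) ≠ 0 := by exact_mod_cast hp.ne'
        rw [hqd, Complex.real_smul]
        generalize ((1 - r ^ 2 : ℝ) : ℂ) = p at *
        push_cast at this ⊢
        field_simp
        linear_combination this
      have i1 : inner ℝ (u r) (v r) ≤ ‖u r‖ * ‖v r‖ := real_inner_le_norm _ _
      have i2 : inner ℝ (v r) (w r) ≤ Q * (‖u r‖ * ‖v r‖) := by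
        rw [hwr, inner_sub_right, inner_neg_right, inner_smul_right, real_inner_self_eq_norm_sq]
        have a1 : 0 ≤ 1 / r * ‖v r‖ ^ 2 := by have := hr.1; positivity
        have a2 := neg_le_of_abs_le (abs_real_inner_le_norm (v r) (q * u r))
        rw [norm_mul] at a2
        have a3 : ‖v r‖ * (‖q‖ * ‖u r‖) ≤ ‖v r‖ * (Q * ‖u r‖) := by gcongr
        linarith
      have i3 : 2 * (‖u r‖ * ‖v r‖) ≤ ‖u r‖ ^ 2 + ‖v r‖ ^ 2 := by
        nlinarith [sq_nonneg (‖u r‖ - ‖v r‖)]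
      have i4 : (1 + Q) * (2 * (‖u r‖ * ‖v r‖)) ≤ (1 + Q) * (‖u r‖ ^ 2 + ‖v r‖ ^ 2) := by gcongr
      have i5 : 2 * inner ℝ (u r) (v r) + 2 * inner ℝ (v r) (w r)
          - (1 + Q) * (‖u r‖ ^ 2 + ‖v r‖ ^ 2) ≤ 0 := by linarith
      have := mul_nonpos_of_nonpos_of_nonneg i5 (Real.exp_pos (-(1 + Q) * r)).le
      linarith
  have hfin := hanti (left_mem_Icc.2 hR.1) (right_mem_Icc.2 hR.1) hR.1
  simp only [hE, h0, hv0, norm_zero] at hfin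
  have hx := Real.exp_pos (-(1 + Q) * R)
  have : ‖u R‖ ^ 2 + ‖v R‖ ^ 2 ≤ 0 := by
    by_contra hcon
    push Not at hcon
    have := mul_pos hcon hx
    norm_num at hfin
    norm_num at this
    linarith
  have : ‖u R‖ ^ 2 = 0 := le_antisymm (by linarith [sq_nonneg ‖v R‖]) (sq_nonneg _)
  simpa using this

/-- Lemma `spaceDimension`: for every `λ ∈ ℂ`, the space of functions `h` smooth on
`[0,1)` satisfying the radial ODE
`−((2−r²)/4)h − ((1−r²)²/(4r))h′ − ((1−r²)²/4)h″ = λh` on `(0,1)`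
is one-dimensional: there is a solution not identically zero on `[0,1)`, and every
solution is a scalar multiple of it on `[0,1)`. -/
theorem stmt_18 (lam : ℂ) :
    ∃ h₀ : ℝ → ℂ,
      (ContDiffOn ℝ (⊤ : ℕ∞) h₀ (Set.Ico 0 1) ∧
        ∀ r ∈ Set.Ioo (0 : ℝ) 1,
          -(((2 - r ^ 2) / 4 : ℝ) : ℂ) * h₀ r -
              (((1 - r ^ 2) ^ 2 / (4 * r) : ℝ) : ℂ) * deriv h₀ r -
              (((1 - r ^ 2) ^ 2 / 4 : ℝ) : ℂ) * deriv (deriv h₀) r = lam * h₀ r) ∧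
      (∃ r ∈ Set.Ico (0 : ℝ) 1, h₀ r ≠ 0) ∧
      ∀ h : ℝ → ℂ,
        (ContDiffOn ℝ (⊤ : ℕ∞) h (Set.Ico 0 1) ∧
          ∀ r ∈ Set.Ioo (0 : ℝ) 1,
            -(((2 - r ^ 2) / 4 : ℝ) : ℂ) * h r -
                (((1 - r ^ 2) ^ 2 / (4 * r) : ℝ) : ℂ) * deriv h r -
                (((1 - r ^ 2) ^ 2 / 4 : ℝ) : ℂ) * deriv (deriv h) r = lam * h r) →
        ∃ c : ℂ, ∀ r ∈ Set.Ico (0 : ℝ) 1, h r = c * h₀ r := by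
  obtain ⟨β, hβ⟩ := IsAlgClosed.exists_pow_nat_eq (-lam) (n := 2) (by norm_num)
  have nrm : ∀ r ∈ Set.Ico (0 : ℝ) 1, ‖(r : ℂ)‖ < 1 := by
    intro r hr
    rw [Complex.norm_real, Real.norm_of_nonneg hr.1]; exact hr.2
  have d1 : ∀ r ∈ Set.Ioo (0 : ℝ) 1, HasDerivAt (fun r : ℝ => H β r) (H1 β r) r := fun r hr =>
    (H_deriv β (nrm r (Set.Ioo_subset_Ico_self hr))).comp_ofReal
  have d2 : ∀ r ∈ Set.Ioo (0 : ℝ) 1, HasDerivAt (deriv fun r : ℝ => H β r) (H2 β r) r := by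
    intro r hr
    have := (H1_deriv β (nrm r (Set.Ioo_subset_Ico_self hr))).comp_ofReal
    refine this.congr_of_eventuallyEq ?_
    filter_upwards [Ioo_mem_nhds hr.1 hr.2] with x hx
    exact (d1 x hx).deriv
  have hsm : ContDiffOn ℝ (⊤ : ℕ∞) (fun r : ℝ => H β r) (Set.Ico 0 1) := by
    have a : DifferentiableOn ℂ (H β) (Metric.ball 0 1) := fun z hz =>
      (H_deriv β (by simpa using hz)).differentiableAt.differentiableWithinAt
    have b : ContDiffOn ℂ (⊤ : ℕ∞) (H β) (Metric.ball 0 1) := a.contDiffOn Metric.isOpen_ball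
    have c := b.restrict_scalars ℝ
    exact c.comp Complex.ofRealCLM.contDiff.contDiffOn
      (fun r hr => by simpa using nrm r hr)
  have H0 : H β 0 = 1 := by
    have : PS (cf β) 0 = 1 := by
      unfold PS
      rw [tsum_eq_single 0]
      · simp [cf]
      · intro n hn; simp [hn]
    simp [H, this]
  have hode : ∀ r ∈ Set.Ioo (0 : ℝ) 1,
          -(((2 - r ^ 2) / 4 : ℝ) : ℂ) * H β r -
              (((1 - r ^ 2) ^ 2 / (4 * r) : ℝ) : ℂ) * deriv (fun r : ℝ => H β r) r -
              (((1 - r ^ 2) ^ 2 / 4 : ℝ) : ℂ) * deriv (deriv (fun r : ℝ => H β r)) r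
                = lam * H β r := by
    intro r hr
    rw [(d1 r hr).deriv, (d2 r hr).deriv]
    have := H_ode β lam hβ (nrm r (Set.Ioo_subset_Ico_self hr)) (by exact_mod_cast hr.1.ne')
    push_cast
    exact this
  refine ⟨fun r : ℝ => H β r, ⟨hsm, hode⟩, ⟨0, by simp, by simp [H0]⟩, ?_⟩
  rintro h ⟨hh, ho⟩
  refine ⟨h 0, ?_⟩
  have nh : ∀ r ∈ Set.Ioo (0 : ℝ) 1, Set.Ico (0 : ℝ) 1 ∈ nhds r :=
    fun r hr => Ico_mem_nhds hr.1 hr.2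
  have e1 : ∀ r ∈ Set.Ioo (0 : ℝ) 1, HasDerivAt h (deriv h r) r := fun r hr =>
    (((hh.contDiffAt (nh r hr)).differentiableAt (by simp))).hasDerivAt
  have e2 : ∀ r ∈ Set.Ioo (0 : ℝ) 1, HasDerivAt (deriv h) (deriv (deriv h) r) r := by
    intro r hr
    have A : ContDiffOn ℝ 1 (deriv h) (Set.Ioo 0 1) :=
      (hh.mono Set.Ioo_subset_Ico_self).deriv_of_isOpen isOpen_Ioo (by norm_cast)
    exact ((A.contDiffAt (Ioo_mem_nhds hr.1 hr.2)).differentiableAt (by simp)).hasDerivAt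
  have f1 : ∀ r ∈ Set.Ioo (0 : ℝ) 1, HasDerivAt (fun r : ℝ => h r - h 0 * H β r)
      (deriv h r - h 0 * deriv (fun r : ℝ => H β r) r) r := fun r hr =>
    (e1 r hr).sub ((d1 r hr).differentiableAt.hasDerivAt.const_mul (h 0))
  have f2 : ∀ r ∈ Set.Ioo (0 : ℝ) 1, HasDerivAt (deriv fun r : ℝ => h r - h 0 * H β r)
      (deriv (deriv h) r - h 0 * deriv (deriv (fun r : ℝ => H β r)) r) r := by
    intro r hr
    refine ((e2 r hr).sub
      ((d2 r hr).differentiableAt.hasDerivAt.const_mul (h 0))).congr_of_eventuallyEq ?_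
    filter_upwards [Ioo_mem_nhds hr.1 hr.2] with x hx
    exact (f1 x hx).deriv
  have U := uniq lam (fun r : ℝ => h r - h 0 * H β r) (hh.sub (contDiffOn_const.mul hsm))
    (by
      intro r hr
      rw [(f1 r hr).deriv, (f2 r hr).deriv]
      linear_combination ho r hr - h 0 * hode r hr)
    (by simp [H0])
  intro r hr
  exact sub_eq_zero.1 (U r hr)
end

section
/- Let l > 0 and consider the points of the hyperbolic upper half-plane R := 2e^{l/2}/(e^l + 1) + i·(e^l − 1)/(e^l + 1) and S := 2e^l/(e^l + 1) + i·e^{l/2}·(e^l − 1)/(e^l + 1). Then cosh(d(R,S)) = ( 2·cosh²(l/4) + cosh²(l/2) ) / ( 2·cosh²(l/4) ), where d is the hyperbolic distance on the upper half-plane. In particular cosh(d(R,S)) ≥ 3/2, so d(R,S) ≥ arccosh(3/2) for every l > 0. -/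
open UpperHalfPlane

/-- The distance estimate in Proposition `marginireGeodeziceParametru`: for the points
`R = 2e^{l/2}/(e^l+1) + i(e^l−1)/(e^l+1)` and `S = 2e^l/(e^l+1) + i·e^{l/2}(e^l−1)/(e^l+1)`
of the hyperbolic upper half-plane,
`cosh d(R,S) = (2cosh²(l/4) + cosh²(l/2))/(2cosh²(l/4)) ≥ 3/2`,
so `d(R,S) ≥ arccosh(3/2)` for every `l > 0`. -/
theorem stmt_19 (l : ℝ) (hl : 0 < l) (R S : UpperHalfPlane)
    (hR : (R : ℂ) = (2 * Real.exp (l / 2) / (Real.exp l + 1) : ℝ) +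
      Complex.I * ((Real.exp l - 1) / (Real.exp l + 1) : ℝ))
    (hS : (S : ℂ) = (2 * Real.exp l / (Real.exp l + 1) : ℝ) +
      Complex.I * (Real.exp (l / 2) * (Real.exp l - 1) / (Real.exp l + 1) : ℝ)) :
    Real.cosh (dist R S) =
      (2 * Real.cosh (l / 4) ^ 2 + Real.cosh (l / 2) ^ 2) / (2 * Real.cosh (l / 4) ^ 2) ∧
    (3 / 2 : ℝ) ≤ Real.cosh (dist R S) ∧
    ∀ d : ℝ, 0 ≤ d → Real.cosh d = 3 / 2 → d ≤ dist R S := by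
  have hx1 : 1 < Real.exp (l / 2) := Real.one_lt_exp_iff.mpr (by linarith)
  have hxl : Real.exp l = Real.exp (l / 2) ^ 2 := by
    rw [← Real.exp_nat_mul]; congr 1; push_cast; ring
  have hc2 : 2 * Real.cosh (l / 4) ^ 2 = 1 + Real.cosh (l / 2) := by
    have h := Real.cosh_two_mul (l / 4)
    have h2 := Real.cosh_sq (l / 4)
    rw [show 2 * (l / 4) = l / 2 by ring] at h
    linarith
  have hc : Real.cosh (l / 2) = (Real.exp (l / 2) ^ 2 + 1) / (2 * Real.exp (l / 2)) := by
    rw [Real.cosh_eq, Real.exp_neg]; field_simp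
  have hRr := congrArg Complex.re hR
  have hRi := congrArg Complex.im hR
  have hSr := congrArg Complex.re hS
  have hSi := congrArg Complex.im hS
  simp only [Complex.add_re, Complex.add_im, Complex.mul_re, Complex.mul_im, Complex.I_re,
    Complex.I_im, Complex.ofReal_re, Complex.ofReal_im, UpperHalfPlane.coe_re,
    UpperHalfPlane.coe_im, zero_mul, one_mul, mul_zero, sub_zero, zero_add, add_zero]
    at hRr hRi hSr hSi
  have key : Real.cosh (dist R S) =
      (2 * Real.cosh (l / 4) ^ 2 + Real.cosh (l / 2) ^ 2) / (2 * Real.cosh (l / 4) ^ 2) := by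
    rw [hc2, hc, UpperHalfPlane.cosh_dist', hRr, hRi, hSr, hSi, hxl]
    generalize Real.exp (l / 2) = x at hx1
    have h0 : x ≠ 0 := by positivity
    have h1 : x - 1 ≠ 0 := by linarith
    have h2 : x + 1 ≠ 0 := by positivity
    have h3 : x ^ 2 + 1 ≠ 0 := by positivity
    have h4 : 1 + (x ^ 2 + 1) / (2 * x) ≠ 0 := by positivity
    have h6 : 1 + (x ^ 2 + 1) / (2 * x) = (x + 1) ^ 2 / (2 * x) := by field_simp; ring
    rw [h6, show x ^ 2 - 1 = (x - 1) * (x + 1) by ring]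
    field_simp
    ring
  have h32 : (3 / 2 : ℝ) ≤ Real.cosh (dist R S) := by
    have h1 := Real.one_le_cosh (l / 2)
    rw [key, hc2, div_le_div_iff₀ (by norm_num) (by linarith)]
    nlinarith
  refine ⟨key, h32, fun d hd h => ?_⟩
  rw [← h, Real.cosh_le_cosh, abs_of_nonneg hd, abs_of_nonneg dist_nonneg] at h32
  exact h32
end
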